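/- arXiv:1512.02903 — 2 statements merged into one kernel-verified Lean document; each statement's English description precedes it below -/
import Mathlib

section
/- For every positive integer p there exists a constant A_p > 0, depending only on p, such that: if f(z) = ∑_{k=0}^∞ a_k z^k is analytic and p-valent in the open unit disk D₁ ⊆ ℂ, then for every integer k ≥ p + 1, |a_k| ≤ A_p · (max_{0 ≤ i ≤ p} |a_i|) · k^{2p−1}. -/
open Metric Set

noncomputable section

/-- `f` is `p`-valent in `W`: for every `c ∈ ℂ` the equation `f z = c` has at most `p`
solutions in `W`. -/
def PValentOn (f : ℂ → ℂ) (W : Set ℂ) (p : ℕ) : Prop :=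
  ∀ c : ℂ, ∀ s : Finset ℂ, (∀ t ∈ s, t ∈ W ∧ f t = c) → s.card ≤ p

section BiernackiAux
open MeasureTheory Filter Topology
open scoped ENNReal


lemma bk_det (c : ℂ) :
    |((ContinuousLinearMap.toSpanSingleton ℂ c).restrictScalars ℝ : ℂ →L[ℝ] ℂ).det| = ‖c‖ ^ 2 := by
  have : ((ContinuousLinearMap.toSpanSingleton ℂ c).restrictScalars ℝ : ℂ →L[ℝ] ℂ).det
      = Complex.normSq c := by
    rw [ContinuousLinearMap.det]
    have := LinearMap.det_restrictScalars (R := ℝ) (S := ℂ) (A := ℂ)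
      (f := (ContinuousLinearMap.toSpanSingleton ℂ c : ℂ →ₗ[ℂ] ℂ))
    have h2 : LinearMap.det (ContinuousLinearMap.toSpanSingleton ℂ c : ℂ →ₗ[ℂ] ℂ) = c := by
      simp [LinearMap.det_ring]
    rw [h2] at this
    rw [← Algebra.norm_complex_apply, ← this]
    rfl
  rw [this, abs_of_nonneg (Complex.normSq_nonneg c), Complex.normSq_eq_norm_sq]

lemma bk_locinj {F : ℂ → ℂ} {U : Set ℂ} (hU : IsOpen U) (hF : DifferentiableOn ℂ F U) {z : ℂ}
    (hz : z ∈ U) (hd : deriv F z ≠ 0) : ∃ V : Set ℂ, IsOpen V ∧ z ∈ V ∧ V ⊆ U ∧ InjOn F V := by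
  have ha : AnalyticAt ℂ F z := hF.analyticAt (hU.mem_nhds hz)
  have hs : HasStrictDerivAt F (deriv F z) z := ha.hasStrictDerivAt
  have hs' := hs.hasStrictFDerivAt_equiv hd
  refine ⟨(hs'.toOpenPartialHomeomorph F).source ∩ U, ?_, ?_, inter_subset_right, ?_⟩
  · exact (hs'.toOpenPartialHomeomorph F).open_source.inter hU
  · exact ⟨hs'.mem_toOpenPartialHomeomorph_source, hz⟩
  · intro a ha b hb hab
    exact (hs'.toOpenPartialHomeomorph F).injOn ha.1 hb.1 (by simpa using hab)

lemma bk_area {F : ℂ → ℂ} {U : Set ℂ} {p : ℕ} (hU : IsOpen U) (hF : DifferentiableOn ℂ F U)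
    (hp : PValentOn F U p) (κ : ℂ → ℝ≥0∞) (hκ : Measurable κ) :
    ∫⁻ z in U, ENNReal.ofReal (‖deriv F z‖ ^ 2) * κ (F z) ≤ p * ∫⁻ w, κ w := by
  classical
  set U' : Set ℂ := U ∩ {z | deriv F z ≠ 0} with hU'
  have hU'o : IsOpen U' := by
    have hc : ContinuousOn (deriv F) U := (hF.deriv hU).continuousOn
    exact hc.isOpen_inter_preimage hU isOpen_ne
  have hV : ∀ z : ℂ, ∃ V : Set ℂ, IsOpen V ∧ (z ∈ U' → z ∈ V) ∧ V ⊆ U ∧ InjOn F V := by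
    intro z
    by_cases hz : z ∈ U'
    · obtain ⟨V, h1, h2, h3, h4⟩ := bk_locinj hU hF hz.1 hz.2
      exact ⟨V, h1, fun _ => h2, h3, h4⟩
    · exact ⟨∅, isOpen_empty, fun h => (hz h).elim, empty_subset _, by simp⟩
  choose V hVo hVm hVU hVi using hV
  obtain ⟨t, htU, htc, hcov⟩ := TopologicalSpace.countable_cover_nhdsWithin (f := V) (s := U')
    (fun x hx => mem_nhdsWithin_of_mem_nhds ((hVo x).mem_nhds (hVm x hx)))
  have hstep : ∫⁻ z in U, ENNReal.ofReal (‖deriv F z‖ ^ 2) * κ (F z)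
      ≤ ∫⁻ z in U', ENNReal.ofReal (‖deriv F z‖ ^ 2) * κ (F z) := by
    rw [← lintegral_indicator hU.measurableSet, ← lintegral_indicator hU'o.measurableSet]
    apply lintegral_mono
    intro z
    by_cases hz : z ∈ U'
    · simp [indicator, hz, hz.1]
    · by_cases hzU : z ∈ U
      · have : deriv F z = 0 := by
          by_contra h; exact hz ⟨hzU, h⟩
        simp [indicator, this]
      · simp [indicator, hzU]
  refine hstep.trans ?_
  rcases t.eq_empty_or_nonempty with rfl | htn
  · have : U' = ∅ := by
      apply subset_empty_iff.1; simpa using hcov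
    simp [this]
  obtain ⟨e, he⟩ := htc.exists_eq_range htn
  set W : ℕ → Set ℂ := fun n => V (e n)
  set A : ℕ → Set ℂ := disjointed W with hA
  have hWm : ∀ n, MeasurableSet (W n) := fun n => (hVo _).measurableSet
  have hAm : ∀ n, MeasurableSet (A n) := fun n => MeasurableSet.disjointed hWm n
  have hAW : ∀ n, A n ⊆ W n := fun n => disjointed_subset W n
  have hAinj : ∀ n, InjOn F (A n) := fun n => (hVi _).mono (hAW n)
  have hAU : ∀ n, A n ⊆ U := fun n => (hAW n).trans (hVU _)
  have hAd : Pairwise (Function.onFun Disjoint A) := disjoint_disjointed W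
  have hcov' : U' ⊆ ⋃ n, A n := by
    rw [hA, iUnion_disjointed]
    refine hcov.trans ?_
    rw [he, biUnion_range]
  have hder : ∀ n, ∀ x ∈ A n, HasFDerivWithinAt F
      ((ContinuousLinearMap.toSpanSingleton ℂ (deriv F x)).restrictScalars ℝ : ℂ →L[ℝ] ℂ) (A n) x := by
    intro n x hx
    have h1 : HasDerivAt F (deriv F x) x :=
      (hF.differentiableAt (hU.mem_nhds (hAU n hx))).hasDerivAt
    exact (h1.hasFDerivAt.restrictScalars ℝ).hasFDerivWithinAt
  have himm : ∀ n, MeasurableSet (F '' A n) := fun n =>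
    measurable_image_of_fderivWithin (hAm n) (hder n) (hAinj n)
  have hcount : ∀ w, ∑' n, (F '' A n).indicator (fun _ => (1 : ℝ≥0∞)) w ≤ p := by
    intro w
    rw [ENNReal.tsum_eq_iSup_sum]
    refine iSup_le fun s => ?_
    set s' := s.filter (fun n => w ∈ F '' A n)
    have h1 : ∑ n ∈ s, (F '' A n).indicator (fun _ => (1 : ℝ≥0∞)) w = s'.card := by
      simp only [indicator]
      rw [← Finset.sum_filter]
      simp [s']
    rw [h1]
    have hch : ∀ n : ℕ, ∃ z, w ∈ F '' A n → z ∈ A n ∧ F z = w := by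
      intro n
      by_cases h : w ∈ F '' A n
      · obtain ⟨z, hz, hz'⟩ := h
        exact ⟨z, fun _ => ⟨hz, hz'⟩⟩
      · exact ⟨0, fun h' => (h h').elim⟩
    choose g hg using hch
    have hinj : InjOn g (s' : Set ℕ) := by
      intro a ha b hb hab
      by_contra hne
      have ha' := hg a (by simpa [s'] using (Finset.mem_filter.1 ha).2)
      have hb' := hg b (by simpa [s'] using (Finset.mem_filter.1 hb).2)
      exact (disjoint_left.1 (hAd hne)) ha'.1 (hab ▸ hb'.1)
    have := hp w (s'.image g) (by
      intro t ht
      obtain ⟨n, hn, rfl⟩ := Finset.mem_image.1 ht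
      have := hg n (Finset.mem_filter.1 hn).2
      exact ⟨hAU n this.1, this.2⟩)
    rw [Finset.card_image_of_injOn hinj] at this
    exact_mod_cast this
  calc ∫⁻ z in U', ENNReal.ofReal (‖deriv F z‖ ^ 2) * κ (F z)
      ≤ ∫⁻ z in ⋃ n, A n, ENNReal.ofReal (‖deriv F z‖ ^ 2) * κ (F z) := lintegral_mono_set hcov'
    _ = ∑' n, ∫⁻ z in A n, ENNReal.ofReal (‖deriv F z‖ ^ 2) * κ (F z) :=
        lintegral_iUnion hAm hAd _
    _ = ∑' n, ∫⁻ w in F '' A n, κ w := by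
        congr 1; ext n
        rw [lintegral_image_eq_lintegral_abs_det_fderiv_mul volume (hAm n) (hder n) (hAinj n)]
        simp only [bk_det]
    _ = ∑' n, ∫⁻ w, (F '' A n).indicator (fun _ => (1 : ℝ≥0∞)) w * κ w := by
        congr 1; ext n
        rw [← lintegral_indicator (himm n)]
        congr 1; ext w
        by_cases h : w ∈ F '' A n <;> simp [indicator, h]
    _ = ∫⁻ w, ∑' n, (F '' A n).indicator (fun _ => (1 : ℝ≥0∞)) w * κ w := by
        rw [lintegral_tsum]
        intro n
        exact ((measurable_const.indicator (himm n)).mul hκ).aemeasurable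
    _ ≤ ∫⁻ w, p * κ w := by
        apply lintegral_mono
        intro w
        simp only [ENNReal.tsum_mul_right]
        gcongr
        exact hcount w
    _ = p * ∫⁻ w, κ w := lintegral_const_mul _ hκ


/-- The point `x + i y`. -/
def bkpt (x y : ℝ) : ℂ := (x : ℂ) + (y : ℂ) * Complex.I

lemma bkpt_re (x y : ℝ) : (bkpt x y).re = x := by simp [bkpt]
lemma bkpt_im (x y : ℝ) : (bkpt x y).im = y := by simp [bkpt]

lemma bkpt_cont : Continuous (fun q : ℝ × ℝ => bkpt q.1 q.2) := by
  unfold bkpt; fun_prop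

lemma bk_set_eq {H : ℝ × ℝ → ℝ} {x0 x1 y0 y1 : ℝ} (hx : x0 ≤ x1) (hy : y0 ≤ y1)
    (hH : ContinuousOn H (Icc x0 x1 ×ˢ Icc y0 y1)) :
    (∫ x in x0..x1, ∫ y in y0..y1, H (x, y)) = ∫ q in Icc x0 x1 ×ˢ Icc y0 y1, H q := by
  have hi : IntegrableOn H (Icc x0 x1 ×ˢ Icc y0 y1) :=
    hH.integrableOn_compact (isCompact_Icc.prod isCompact_Icc)
  rw [Measure.volume_eq_prod, setIntegral_prod _ hi, intervalIntegral.integral_of_le hx,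
    integral_Icc_eq_integral_Ioc]
  congr 1; ext x
  rw [intervalIntegral.integral_of_le hy, integral_Icc_eq_integral_Ioc]

lemma bk_swap {H : ℝ × ℝ → ℝ} {x0 x1 y0 y1 : ℝ} (hx : x0 ≤ x1) (hy : y0 ≤ y1)
    (hH : ContinuousOn H (Icc x0 x1 ×ˢ Icc y0 y1)) :
    (∫ y in y0..y1, ∫ x in x0..x1, H (x, y)) = ∫ x in x0..x1, ∫ y in y0..y1, H (x, y) := by
  have hH' : ContinuousOn (fun q : ℝ × ℝ => H q.swap) (Icc y0 y1 ×ˢ Icc x0 x1) := by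
    apply hH.comp continuous_swap.continuousOn
    intro q hq; exact ⟨hq.2, hq.1⟩
  have := bk_set_eq hy hx hH'
  simp only [Prod.swap_prod_mk] at this
  rw [this, bk_set_eq hx hy hH, Measure.volume_eq_prod, setIntegral_prod_swap]

lemma bk_box {F : ℂ → ℂ} {U : Set ℂ} {p : ℕ} (hU : IsOpen U) (hF : DifferentiableOn ℂ F U)
    {x0 x1 y0 y1 : ℝ} (hx : x0 ≤ x1) (hy : y0 ≤ y1)
    (hsub : ∀ x ∈ Icc x0 x1, ∀ y ∈ Icc y0 y1, bkpt x y ∈ U)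
    (hp : PValentOn F (Ioo x0 x1 ×ℂ Ioo y0 y1) p)
    {k : ℂ → ℝ} (hk : Continuous k) (hk0 : ∀ w, 0 ≤ k w) {V : ℝ} (hV0 : 0 ≤ V) {T : Set ℂ}
    (hT : MeasurableSet T)
    (hFT : ∀ x ∈ Icc x0 x1, ∀ y ∈ Icc y0 y1, F (bkpt x y) ∈ T)
    (hV : ∫⁻ w in T, ENNReal.ofReal (k w) ≤ ENNReal.ofReal V) :
    (∫ x in x0..x1, ∫ y in y0..y1, k (F (bkpt x y)) * ‖deriv F (bkpt x y)‖ ^ 2) ≤ p * V := by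
  set H : ℝ × ℝ → ℝ := fun q => k (F (bkpt q.1 q.2)) * ‖deriv F (bkpt q.1 q.2)‖ ^ 2 with hHdef
  have hmaps : MapsTo (fun q : ℝ × ℝ => bkpt q.1 q.2) (Icc x0 x1 ×ˢ Icc y0 y1) U :=
    fun q hq => hsub _ hq.1 _ hq.2
  have hH : ContinuousOn H (Icc x0 x1 ×ˢ Icc y0 y1) := by
    apply ContinuousOn.mul
    · exact hk.comp_continuousOn (hF.continuousOn.comp bkpt_cont.continuousOn hmaps)
    · exact (((hF.deriv hU).continuousOn.comp bkpt_cont.continuousOn hmaps).norm).pow 2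
  have hi : IntegrableOn H (Icc x0 x1 ×ˢ Icc y0 y1) :=
    hH.integrableOn_compact (isCompact_Icc.prod isCompact_Icc)
  have e1 := bk_set_eq hx hy hH
  simp only [hHdef] at e1
  rw [e1]
  have hae : (Ioo x0 x1 ×ˢ Ioo y0 y1 : Set (ℝ × ℝ)) =ᵐ[volume] Icc x0 x1 ×ˢ Icc y0 y1 := by
    rw [Measure.volume_eq_prod]
    exact Measure.set_prod_ae_eq Ioo_ae_eq_Icc Ioo_ae_eq_Icc
  rw [← setIntegral_congr_set hae]
  rw [integral_eq_lintegral_of_nonneg_ae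
    (Eventually.of_forall fun q => mul_nonneg (hk0 _) (by positivity))
    ((hi.mono_set (prod_mono Ioo_subset_Icc_self Ioo_subset_Icc_self)).aestronglyMeasurable)]
  apply ENNReal.toReal_le_of_le_ofReal (by positivity)
  set B : Set ℂ := Ioo x0 x1 ×ℂ Ioo y0 y1 with hB
  have hBo : IsOpen B := isOpen_Ioo.reProdIm isOpen_Ioo
  have hBU : B ⊆ U := by
    intro z hz
    have := hsub z.re (Ioo_subset_Icc_self hz.1) z.im (Ioo_subset_Icc_self hz.2)
    simpa [bkpt, Complex.re_add_im] using this
  have key := bk_area hBo (hF.mono hBU) hp (T.indicator fun w => ENNReal.ofReal (k w))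
    ((hk.measurable.ennreal_ofReal).indicator hT)
  rw [lintegral_indicator hT] at key
  have e2 : ∫⁻ q in (Ioo x0 x1 ×ˢ Ioo y0 y1 : Set (ℝ × ℝ)), ENNReal.ofReal (H q)
      = ∫⁻ z in B, ENNReal.ofReal (‖deriv F z‖ ^ 2) * T.indicator (fun w => ENNReal.ofReal (k w)) (F z) := by
    have hmp := Complex.volume_preserving_equiv_real_prod
    rw [← hmp.setLIntegral_comp_preimage_emb Complex.measurableEquivRealProd.measurableEmbedding]
    have hpre : Complex.measurableEquivRealProd ⁻¹' (Ioo x0 x1 ×ˢ Ioo y0 y1) = B := by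
      ext z; simp [hB, Complex.mem_reProdIm]
    rw [hpre]
    apply setLIntegral_congr_fun hBo.measurableSet
    intro z hz
    have hz' : bkpt z.re z.im = z := by simp [bkpt, Complex.re_add_im]
    have hzT : F z ∈ T := by
      have := hFT z.re (Ioo_subset_Icc_self hz.1) z.im (Ioo_subset_Icc_self hz.2)
      rwa [hz'] at this
    simp only [hHdef, Complex.measurableEquivRealProd_apply, hz', indicator_of_mem hzT]
    rw [mul_comm, ENNReal.ofReal_mul (by positivity)]
  rw [e2]
  refine key.trans ?_
  rw [ENNReal.ofReal_mul (by positivity), ENNReal.ofReal_natCast]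
  gcongr


lemma bk_radial {g : ℝ → ℝ≥0∞} (hg : Measurable g) :
    ∫⁻ w : ℂ, g ‖w‖ = ENNReal.ofReal (2 * Real.pi) * ∫⁻ s in Ioi (0 : ℝ), ENNReal.ofReal s * g s := by
  rw [← Complex.lintegral_comp_polarCoord_symm]
  have : ∀ q ∈ polarCoord.target, ENNReal.ofReal q.1 • g ‖Complex.polarCoord.symm q‖
      = ENNReal.ofReal q.1 * g q.1 := by
    intro q hq
    have h0 : 0 < q.1 := by
      have := hq; simp only [polarCoord_target, mem_prod, mem_Ioi] at this; exact this.1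
    rw [Complex.norm_polarCoord_symm, abs_of_pos h0]; rfl
  rw [setLIntegral_congr_fun polarCoord.open_target.measurableSet this, polarCoord_target,
    Measure.volume_eq_prod, ← Measure.prod_restrict]
  have h2 := lintegral_prod_mul (μ := (volume.restrict (Ioi (0 : ℝ))))
    (ν := (volume.restrict (Ioo (-Real.pi) Real.pi)))
    (f := fun s => ENNReal.ofReal s * g s) (g := fun _ => 1)
    ((ENNReal.measurable_ofReal.mul hg).aemeasurable) aemeasurable_const
  simp only [mul_one] at h2
  rw [h2, mul_comm]
  congr 1
  rw [setLIntegral_one, Real.volume_Ioo]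
  congr 1; ring

/-- gradient size of `½ log ((|w|²+a²)/(|w|²+b²))`. -/
def bkκ (a b s : ℝ) : ℝ := s / (s ^ 2 + a ^ 2) - s / (s ^ 2 + b ^ 2)

def bkΦ (a b s : ℝ) : ℝ := (Real.log (s ^ 2 + a ^ 2) - Real.log (s ^ 2 + b ^ 2)) / 2

lemma bkκ_nonneg {a b s : ℝ} (ha : 0 < a) (hab : a ≤ b) (hs : 0 ≤ s) : 0 ≤ bkκ a b s := by
  unfold bkκ
  rw [sub_nonneg]
  gcongr

lemma bkκ_cont {a b : ℝ} (ha : 0 < a) (hab : a ≤ b) : Continuous (bkκ a b) := by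
  have hb : 0 < b := ha.trans_le hab
  unfold bkκ
  refine (continuous_id.div (by fun_prop) fun s => ?_).sub (continuous_id.div (by fun_prop) fun s => ?_)
  all_goals positivity

lemma bkκ_mul_le {a b s : ℝ} (ha : 0 < a) (hab : a ≤ b) (hs : 0 ≤ s) : s * bkκ a b s ≤ 1 := by
  have hb : 0 < b := ha.trans_le hab
  unfold bkκ
  have h1 : s * (s / (s ^ 2 + a ^ 2)) ≤ 1 := by
    rw [← mul_div_assoc, div_le_one (by positivity)]; nlinarith [sq_nonneg a]
  have h2 : 0 ≤ s * (s / (s ^ 2 + b ^ 2)) := by positivity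
  linarith [mul_sub s (s / (s ^ 2 + a ^ 2)) (s / (s ^ 2 + b ^ 2))]

lemma bkΦ_deriv {a b : ℝ} (ha : 0 < a) (hb : 0 < b) (s : ℝ) :
    HasDerivAt (bkΦ a b) (bkκ a b s) s := by
  have h : ∀ c : ℝ, 0 < c → HasDerivAt (fun s : ℝ => Real.log (s ^ 2 + c ^ 2)) (2 * s / (s ^ 2 + c ^ 2)) s := by
    intro c hc
    have h1 : HasDerivAt (fun s : ℝ => s ^ 2 + c ^ 2) (2 * s) s := by
      simpa using (hasDerivAt_pow 2 s).add_const (c ^ 2)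
    exact h1.log (by positivity)
  have := ((h a ha).sub (h b hb)).div_const 2
  have e : bkκ a b s = (2 * s / (s ^ 2 + a ^ 2) - 2 * s / (s ^ 2 + b ^ 2)) / 2 := by
    unfold bkκ; ring
  rw [e]; exact this

lemma bkΦ_tendsto {a b : ℝ} (ha : 0 < a) (hb : 0 < b) : Tendsto (bkΦ a b) atTop (𝓝 0) := by
  have h1 : ∀ s, bkΦ a b s = Real.log (1 + (a ^ 2 - b ^ 2) / (s ^ 2 + b ^ 2)) / 2 := by
    intro s
    unfold bkΦ
    rw [← Real.log_div (by positivity) (by positivity)]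
    congr 2; field_simp; ring
  have h2 : Tendsto (fun s : ℝ => 1 + (a ^ 2 - b ^ 2) / (s ^ 2 + b ^ 2)) atTop (𝓝 (1 + 0)) := by
    refine tendsto_const_nhds.add (Tendsto.div_atTop tendsto_const_nhds ?_)
    exact tendsto_atTop_add_const_right _ _ (tendsto_pow_atTop two_ne_zero)
  have h3 := ((Real.continuousAt_log (by norm_num : (1 + 0 : ℝ) ≠ 0)).tendsto.comp h2).div_const 2
  simp only [add_zero, Real.log_one, zero_div] at h3
  refine h3.congr fun s => ?_
  rw [h1]; rfl

lemma bk_K1 {a b : ℝ} (ha : 0 < a) (hab : a ≤ b) :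
    ∫⁻ w : ℂ in univ, ENNReal.ofReal (bkκ a b ‖w‖ ^ 2) ≤ ENNReal.ofReal (2 * Real.pi * Real.log (b / a)) := by
  have hb : 0 < b := ha.trans_le hab
  rw [Measure.restrict_univ, bk_radial (g := fun s => ENNReal.ofReal (bkκ a b s ^ 2))
    (((bkκ_cont ha hab).pow 2).measurable.ennreal_ofReal), ENNReal.ofReal_mul (p := 2 * Real.pi) (by positivity)]
  refine mul_le_mul' le_rfl ?_
  have hcw : ContinuousWithinAt (bkΦ a b) (Ici 0) 0 :=
    (bkΦ_deriv ha hb 0).continuousAt.continuousWithinAt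
  have hd : ∀ x ∈ Ioi (0 : ℝ), HasDerivAt (bkΦ a b) (bkκ a b x) x := fun x _ => bkΦ_deriv ha hb x
  have hn : ∀ x ∈ Ioi (0 : ℝ), 0 ≤ bkκ a b x := fun x hx => bkκ_nonneg ha hab (le_of_lt hx)
  have hintg := integrableOn_Ioi_deriv_of_nonneg hcw hd hn (bkΦ_tendsto ha hb)
  have heq := integral_Ioi_of_hasDerivAt_of_nonneg hcw hd hn (bkΦ_tendsto ha hb)
  have hval : 0 - bkΦ a b 0 = Real.log (b / a) := by
    unfold bkΦ
    rw [Real.log_div hb.ne' ha.ne']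
    simp
    ring
  rw [hval] at heq
  rw [← heq, ofReal_integral_eq_lintegral_ofReal hintg
    ((ae_restrict_iff' measurableSet_Ioi).2 (Eventually.of_forall hn))]
  apply setLIntegral_mono' measurableSet_Ioi
  intro s hs
  have hs : (0 : ℝ) < s := hs
  rw [← ENNReal.ofReal_mul hs.le]
  apply ENNReal.ofReal_le_ofReal
  have := bkκ_mul_le ha hab hs.le
  have h0 := bkκ_nonneg ha hab hs.le
  nlinarith

lemma bk_K2 {M : ℝ} :
    ∫⁻ w : ℂ in closedBall 0 M, ENNReal.ofReal (1 / (‖w‖ + 1)) ≤ ENNReal.ofReal (2 * Real.pi * M) := by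
  rw [← lintegral_indicator measurableSet_closedBall]
  set g : ℝ → ℝ≥0∞ := (Iic M).indicator fun s => ENNReal.ofReal (1 / (s + 1)) with hg
  have hgm : Measurable g := by
    apply Measurable.indicator _ measurableSet_Iic
    fun_prop
  have : ∀ w : ℂ, (closedBall (0 : ℂ) M).indicator (fun w => ENNReal.ofReal (1 / (‖w‖ + 1))) w = g ‖w‖ := by
    intro w
    by_cases h : ‖w‖ ≤ M <;> simp [hg, indicator, h]
  simp only [this]
  rw [bk_radial hgm, ENNReal.ofReal_mul (p := 2 * Real.pi) (by positivity)]
  refine mul_le_mul' le_rfl ?_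
  calc ∫⁻ s in Ioi (0 : ℝ), ENNReal.ofReal s * g s
      ≤ ∫⁻ s in Ioi (0 : ℝ), (Iic M).indicator (fun _ => 1) s := by
        apply setLIntegral_mono' measurableSet_Ioi
        intro s hs
        have hs : (0 : ℝ) < s := hs
        by_cases h : s ≤ M
        · simp only [hg, indicator, mem_Iic, h, if_true]
          rw [← ENNReal.ofReal_mul hs.le, ENNReal.ofReal_le_one]
          rw [mul_one_div, div_le_one (by positivity)]; linarith
        · simp [hg, indicator, h]
    _ = ENNReal.ofReal M := by
        rw [lintegral_indicator measurableSet_Iic, setLIntegral_one,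
          Measure.restrict_apply measurableSet_Iic, inter_comm, Ioi_inter_Iic, Real.volume_Ioc]
        simp


lemma bk_path {c c' : ℝ → ℂ} {t0 t1 : ℝ} (ht : t0 ≤ t1)
    (hc : ∀ t ∈ Icc t0 t1, HasDerivAt c (c' t) t) (hc' : ContinuousOn c' (Icc t0 t1))
    {a b : ℝ} (ha : 0 < a) (hab : a ≤ b) {l : ℝ} (hl : 0 < l) :
    |bkΦ a b ‖c t1‖ - bkΦ a b ‖c t0‖| ≤
      ∫ t in t0..t1, (l + bkκ a b ‖c t‖ ^ 2 * ‖c' t‖ ^ 2 / (4 * l)) := by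
  have hb : 0 < b := ha.trans_le hab
  have hcc : ContinuousOn c (Icc t0 t1) := fun t h => (hc t h).continuousAt.continuousWithinAt
  set g' : ℝ → ℝ := fun t => (2 * inner ℝ (c t) (c' t) / (‖c t‖ ^ 2 + a ^ 2)
    - 2 * inner ℝ (c t) (c' t) / (‖c t‖ ^ 2 + b ^ 2)) / 2 with hg'
  have hder : ∀ t ∈ Icc t0 t1, HasDerivAt (fun t => bkΦ a b ‖c t‖) (g' t) t := by
    intro t h
    have h1 := (hc t h).norm_sq
    have h2 := (h1.add_const (a ^ 2)).log (by positivity)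
    have h3 := (h1.add_const (b ^ 2)).log (by positivity)
    exact (h2.sub h3).div_const 2
  have hin : ContinuousOn (fun t => (2 * inner ℝ (c t) (c' t) : ℝ)) (Icc t0 t1) :=
    continuousOn_const.mul (ContinuousOn.inner (𝕜 := ℝ) hcc hc')
  have hg'c : ContinuousOn g' (Icc t0 t1) := by
    refine ((hin.div ((hcc.norm.pow 2).add continuousOn_const) ?_).sub
      (hin.div ((hcc.norm.pow 2).add continuousOn_const) ?_)).div_const 2
    · intro t _
      have : 0 < ‖c t‖ ^ 2 + a ^ 2 := by positivity
      exact this.ne'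
    · intro t _
      have : 0 < ‖c t‖ ^ 2 + b ^ 2 := by positivity
      exact this.ne'
  have hbc : ContinuousOn (fun t => l + bkκ a b ‖c t‖ ^ 2 * ‖c' t‖ ^ 2 / (4 * l)) (Icc t0 t1) :=
    continuousOn_const.add
      (((((bkκ_cont ha hab).comp_continuousOn hcc.norm).pow 2).mul (hc'.norm.pow 2)).div_const _)
  have hu : uIcc t0 t1 = Icc t0 t1 := uIcc_of_le ht
  have hgi : IntervalIntegrable g' volume t0 t1 := by
    apply ContinuousOn.intervalIntegrable; rwa [hu]
  have hbi : IntervalIntegrable (fun t => l + bkκ a b ‖c t‖ ^ 2 * ‖c' t‖ ^ 2 / (4 * l)) volume t0 t1 := by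
    apply ContinuousOn.intervalIntegrable; rwa [hu]
  rw [← intervalIntegral.integral_eq_sub_of_hasDerivAt (f := fun t => bkΦ a b ‖c t‖)
    (by rw [hu]; exact hder) hgi]
  refine (intervalIntegral.abs_integral_le_integral_abs ht).trans ?_
  apply intervalIntegral.integral_mono_on ht hgi.abs hbi
  intro t _
  have hκ : 0 ≤ bkκ a b ‖c t‖ := bkκ_nonneg ha hab (norm_nonneg _)
  have h1 : |g' t| ≤ bkκ a b ‖c t‖ * ‖c' t‖ := by
    have e : g' t = inner ℝ (c t) (c' t) * (1 / (‖c t‖ ^ 2 + a ^ 2) - 1 / (‖c t‖ ^ 2 + b ^ 2)) := by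
      simp only [hg']; ring
    have h0 : 0 ≤ 1 / (‖c t‖ ^ 2 + a ^ 2) - 1 / (‖c t‖ ^ 2 + b ^ 2) := by
      rw [sub_nonneg]; gcongr
    rw [e, abs_mul, abs_of_nonneg h0]
    calc _ ≤ (‖c t‖ * ‖c' t‖) * (1 / (‖c t‖ ^ 2 + a ^ 2) - 1 / (‖c t‖ ^ 2 + b ^ 2)) := by
          gcongr; exact abs_real_inner_le_norm _ _
      _ = _ := by unfold bkκ; ring
  refine h1.trans ?_
  have h2 : bkκ a b ‖c t‖ ^ 2 * ‖c' t‖ ^ 2 / (4 * l) = (bkκ a b ‖c t‖ * ‖c' t‖) ^ 2 / (4 * l) := by ring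
  rw [h2]
  set q := bkκ a b ‖c t‖ * ‖c' t‖
  rw [← sub_nonneg]
  have : l + q ^ 2 / (4 * l) - q = (2 * l - q) ^ 2 / (4 * l) := by field_simp; ring
  rw [this]; positivity

lemma bk_path2 {c c' : ℝ → ℂ} {t0 t1 : ℝ} (ht : t0 ≤ t1)
    (hc : ∀ t ∈ Icc t0 t1, HasDerivAt c (c' t) t) (hc' : ContinuousOn c' (Icc t0 t1))
    {l : ℝ} (hl : 0 < l) :
    ‖c t1‖ - ‖c t0‖ ≤
      ∫ t in t0..t1, (l * (1 / (‖c t‖ + 1) * ‖c' t‖ ^ 2) + (‖c t‖ + 1) / (4 * l)) := by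
  have hcc : ContinuousOn c (Icc t0 t1) := fun t h => (hc t h).continuousAt.continuousWithinAt
  have hu : uIcc t0 t1 = Icc t0 t1 := uIcc_of_le ht
  have hgi : IntervalIntegrable c' volume t0 t1 := by
    apply ContinuousOn.intervalIntegrable; rwa [hu]
  have hbi : IntervalIntegrable (fun t => l * (1 / (‖c t‖ + 1) * ‖c' t‖ ^ 2) + (‖c t‖ + 1) / (4 * l))
      volume t0 t1 := by
    apply ContinuousOn.intervalIntegrable; rw [hu]
    refine (continuousOn_const.mul ((continuousOn_const.div (hcc.norm.add continuousOn_const)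
      ?_).mul (hc'.norm.pow 2))).add ((hcc.norm.add continuousOn_const).div_const _)
    intro t _
    have : 0 < ‖c t‖ + 1 := by positivity
    exact this.ne'
  refine (norm_sub_norm_le _ _).trans ?_
  rw [← intervalIntegral.integral_eq_sub_of_hasDerivAt (f := c)
    (by rw [hu]; exact hc) hgi]
  refine (intervalIntegral.norm_integral_le_integral_norm ht).trans ?_
  apply intervalIntegral.integral_mono_on ht hgi.norm hbi
  intro t _
  set q := ‖c' t‖
  have hs : 0 < ‖c t‖ + 1 := by positivity
  set s := ‖c t‖ + 1
  rw [← sub_nonneg]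
  have : l * (1 / s * q ^ 2) + s / (4 * l) - q = (2 * l * q - s) ^ 2 / (4 * l * s) := by
    field_simp; ring
  rw [this]; positivity

open scoped Nat


lemma bk_regval {f : ℂ → ℂ} (hf : DifferentiableOn ℂ f (ball 0 1)) :
    ∃ c : ℂ, ‖c‖ ≤ 1 ∧ ∀ z ∈ ball (0 : ℂ) 1, f z = c → deriv f z ≠ 0 := by
  set Z : Set ℂ := ball 0 1 ∩ {z | deriv f z = 0}
  have hnull : volume (f '' Z) = 0 := by
    apply addHaar_image_eq_zero_of_det_fderivWithin_eq_zero volume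
      (f' := fun z => ((ContinuousLinearMap.toSpanSingleton ℂ (deriv f z)).restrictScalars ℝ : ℂ →L[ℝ] ℂ))
    · intro x hx
      have h1 : HasDerivAt f (deriv f x) x :=
        (hf.differentiableAt (isOpen_ball.mem_nhds hx.1)).hasDerivAt
      exact (h1.hasFDerivAt.restrictScalars ℝ).hasFDerivWithinAt
    · intro x hx
      have := bk_det (deriv f x)
      have h0 : deriv f x = 0 := hx.2
      rw [h0] at this ⊢
      simpa using this
  have hpos : 0 < volume (ball (0 : ℂ) 1) := measure_ball_pos _ _ one_pos
  have : ¬ (ball (0 : ℂ) 1 ⊆ f '' Z) := by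
    intro h
    have := measure_mono (μ := volume) h
    rw [hnull] at this
    exact absurd hpos (not_lt.2 this)
  obtain ⟨c, hc, hcZ⟩ := not_subset.1 this
  refine ⟨c, by simpa using (mem_ball_zero_iff.1 hc).le, ?_⟩
  intro z hz hfz hd
  exact hcZ ⟨z, ⟨hz, hd⟩, hfz⟩

lemma bk_factor {U : Set ℂ} (hU : IsOpen U) {F : ℂ → ℂ} (hF : DifferentiableOn ℂ F U)
    (S : Finset ℂ) (hS : ∀ α ∈ S, α ∈ U ∧ F α = 0) :
    ∃ g : ℂ → ℂ, DifferentiableOn ℂ g U ∧ ∀ z ∈ U, F z = (∏ α ∈ S, (z - α)) * g z := by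
  classical
  induction S using Finset.induction_on with
  | empty => exact ⟨F, hF, by simp⟩
  | insert α S hα ih =>
    obtain ⟨g, hg, hFg⟩ := ih (fun β hβ => hS β (Finset.mem_insert_of_mem hβ))
    have hαU := hS α (Finset.mem_insert_self _ _)
    have hgα : g α = 0 := by
      have h1 := hFg α hαU.1
      rw [hαU.2] at h1
      rcases mul_eq_zero.1 h1.symm with h | h
      · rw [Finset.prod_eq_zero_iff] at h
        obtain ⟨β, hβ, hh⟩ := h
        rw [sub_eq_zero] at hh
        exact (hα (hh ▸ hβ)).elim
      · exact h
    refine ⟨dslope g α, (Complex.differentiableOn_dslope (hU.mem_nhds hαU.1)).2 hg, ?_⟩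
    intro z hz
    rw [hFg z hz, Finset.prod_insert hα]
    have := sub_smul_dslope g α z
    rw [hgα, sub_zero, smul_eq_mul] at this
    rw [← this]; ring

lemma bk_poly_deriv (S : Finset ℂ) :
    iteratedDeriv S.card (fun z : ℂ => ∏ α ∈ S, (z - α)) 0 = (S.card ! : ℂ) := by
  set P : Polynomial ℂ := ∏ α ∈ S, (Polynomial.X - Polynomial.C α) with hP
  have h1 : (fun z : ℂ => ∏ α ∈ S, (z - α)) = fun z => P.eval z := by
    ext z; simp [hP, Polynomial.eval_prod]
  have h2 : ∀ n : ℕ, ∀ Q : Polynomial ℂ, deriv^[n] (fun z => Q.eval z) =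
      fun z => (Polynomial.derivative^[n] Q).eval z := by
    intro n
    induction n with
    | zero => intro Q; rfl
    | succ n ih =>
      intro Q
      rw [Function.iterate_succ_apply, Function.iterate_succ_apply, ← ih]
      congr 1; ext z; simp
  have hmon : P.Monic := Polynomial.monic_prod_of_monic _ _ fun α _ => Polynomial.monic_X_sub_C α
  have hdeg : P.natDegree = S.card := by
    rw [hP, Polynomial.natDegree_prod_of_monic _ _ fun α _ => Polynomial.monic_X_sub_C α]
    simp
  rw [h1, iteratedDeriv_eq_iterate, h2]
  simp only
  rw [← Polynomial.coeff_zero_eq_eval_zero, Polynomial.coeff_iterate_derivative]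
  have : P.coeff S.card = 1 := by rw [← hdeg]; exact hmon
  simp [this, Nat.descFactorial_self]

lemma bk_min {f : ℂ → ℂ} {p : ℕ} (hf : DifferentiableOn ℂ f (ball 0 1))
    (hp : PValentOn f (ball 0 1) p) (hm : ∀ i ≤ p, ‖iteratedDeriv i f 0‖ ≤ i !)
    {s : ℝ} (hs : 1 / 4 ≤ s) (hs1 : s < 1) :
    ∃ z : ℂ, ‖z‖ = s ∧ ‖f z‖ ≤ 4 * (p + 1) * 8 ^ p + 1 := by
  classical
  obtain ⟨c, hc1, hc⟩ := bk_regval hf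
  by_contra hcon
  push Not at hcon
  set F : ℂ → ℂ := fun z => f z - c with hFdef
  have hF : DifferentiableOn ℂ F (ball 0 1) := hf.sub_const c
  set m0 : ℝ := 4 * (p + 1) * 8 ^ p with hm0
  have hm0p : 0 < m0 := by positivity
  have hFs : ∀ z : ℂ, ‖z‖ = s → m0 ≤ ‖F z‖ := by
    intro z hz
    have h1 := hcon z hz
    have h2 := norm_sub_norm_le (f z) c
    simp only [hFdef]; linarith
  set Z : Set ℂ := {z | z ∈ ball (0 : ℂ) 1 ∧ f z = c} with hZ
  have hZf : Z.Finite := by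
    by_contra hinf
    obtain ⟨t, ht, htc⟩ := Set.Infinite.exists_subset_card_eq hinf (p + 1)
    have := hp c t (fun z hz => ht hz)
    omega
  set S : Finset ℂ := hZf.toFinset with hS
  have hSmem : ∀ z, z ∈ S ↔ z ∈ ball (0 : ℂ) 1 ∧ f z = c := by
    intro z; rw [hS, Set.Finite.mem_toFinset]; rfl
  have hq : S.card ≤ p := hp c S (fun z hz => (hSmem z).1 hz)
  set q := S.card with hqdef
  obtain ⟨g, hg, hFg⟩ := bk_factor isOpen_ball hF S (fun α hα => by
    have := (hSmem α).1 hα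
    exact ⟨this.1, by simp [hFdef, this.2]⟩)
  have hNd : Differentiable ℂ (fun z : ℂ => ∏ α ∈ S, (z - α)) := by fun_prop
  have hg0 : ∀ z ∈ ball (0 : ℂ) 1, g z ≠ 0 := by
    intro z hz hgz
    have hFz : f z = c := by
      have := hFg z hz
      rw [hgz, mul_zero] at this
      exact sub_eq_zero.1 this
    have hzS : z ∈ S := (hSmem z).2 ⟨hz, hFz⟩
    apply hc z hz hFz
    have hN0 : (∏ α ∈ S, (z - α)) = 0 := Finset.prod_eq_zero hzS (sub_self z)
    have hgd : HasDerivAt g (deriv g z) z :=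
      (hg.differentiableAt (isOpen_ball.mem_nhds hz)).hasDerivAt
    have h1 := ((hNd z).hasDerivAt.mul hgd)
    have h2 : F =ᶠ[𝓝 z] (fun z : ℂ => ∏ α ∈ S, (z - α)) * g := by
      filter_upwards [isOpen_ball.mem_nhds hz] with w hw using hFg w hw
    have h3 := (h1.congr_of_eventuallyEq h2).deriv
    rw [hgz, hN0] at h3
    have h4 : deriv F z = deriv f z := by simp [hFdef]
    rw [← h4, h3]; simp
  set G : ℂ → ℂ := fun z => (g z)⁻¹ with hG
  have hGd : DifferentiableOn ℂ G (ball 0 1) := hg.inv hg0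
  have hs0 : 0 < s := by linarith
  have hsub : closedBall (0 : ℂ) s ⊆ ball 0 1 := closedBall_subset_ball hs1
  have hGb : ∀ j : ℕ, ‖iteratedDeriv j G 0‖ ≤ j ! * (2 ^ q / m0) / s ^ j := by
    intro j
    apply Complex.norm_iteratedDeriv_le_of_forall_mem_sphere_norm_le j hs0
    · apply DifferentiableOn.diffContOnCl
      rw [closure_ball _ hs0.ne']
      exact hGd.mono hsub
    · intro z hz
      have hzs : ‖z‖ = s := by simpa using hz
      have hzb : z ∈ ball (0 : ℂ) 1 := by simpa [hzs] using hs1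
      have h1 := hFg z hzb
      have h2 := hFs z hzs
      have h3 : ‖∏ α ∈ S, (z - α)‖ ≤ 2 ^ q := by
        rw [norm_prod, hqdef, ← Finset.prod_const]
        apply Finset.prod_le_prod
        · intro i _; positivity
        · intro α hα
          have := mem_ball_zero_iff.1 ((hSmem α).1 hα).1
          have := norm_sub_le z α
          linarith
      rw [h1, norm_mul] at h2
      have hgp : 0 < ‖g z‖ := norm_pos_iff.2 (hg0 z hzb)
      simp only [hG, norm_inv]
      rw [inv_le_iff_one_le_mul₀ hgp, div_mul_eq_mul_div, le_div_iff₀ hm0p, one_mul]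
      exact h2.trans (by gcongr)
  have h0b : (0 : ℂ) ∈ ball (0 : ℂ) 1 := by simp
  have hFG : (fun z : ℂ => ∏ α ∈ S, (z - α)) =ᶠ[𝓝 0] F * G := by
    filter_upwards [isOpen_ball.mem_nhds h0b] with w hw
    simp only [Pi.mul_apply, hG]
    rw [hFg w hw, mul_assoc, mul_inv_cancel₀ (hg0 w hw), mul_one]
  have hFa : AnalyticAt ℂ F 0 := hF.analyticAt (isOpen_ball.mem_nhds h0b)
  have hGa : AnalyticAt ℂ G 0 := hGd.analyticAt (isOpen_ball.mem_nhds h0b)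
  have hfa : AnalyticAt ℂ f 0 := hf.analyticAt (isOpen_ball.mem_nhds h0b)
  have hFb : ∀ i ≤ p, ‖iteratedDeriv i F 0‖ ≤ i ! * 2 := by
    intro i hi
    have h1 : iteratedDeriv i F 0 = iteratedDeriv i f 0 - iteratedDeriv i (fun _ : ℂ => c) 0 := by
      exact iteratedDeriv_fun_sub hfa.contDiffAt contDiffAt_const
    rw [h1]
    have h2 := hm i hi
    have h3 : ‖iteratedDeriv i (fun _ : ℂ => c) 0‖ ≤ i ! := by
      rw [iteratedDeriv_const]
      have : (1 : ℝ) ≤ i ! := by exact_mod_cast Nat.one_le_iff_ne_zero.2 (Nat.factorial_ne_zero i)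
      split_ifs
      · linarith
      · simp
    refine (norm_sub_le _ _).trans (by linarith)
  have hN := bk_poly_deriv S
  rw [hFG.iteratedDeriv_eq, iteratedDeriv_mul hFa.contDiffAt hGa.contDiffAt] at hN
  have hbound : (q ! : ℝ) ≤ q ! * ((q + 1) * (2 * (2 ^ q / m0) * 4 ^ q)) := by
    calc (q ! : ℝ) = ‖(q ! : ℂ)‖ := by simp
      _ = ‖∑ i ∈ Finset.range (q + 1), (q.choose i : ℂ) * iteratedDeriv i F 0 * iteratedDeriv (q - i) G 0‖ := by
          rw [hN]
      _ ≤ ∑ i ∈ Finset.range (q + 1), ‖(q.choose i : ℂ) * iteratedDeriv i F 0 * iteratedDeriv (q - i) G 0‖ :=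
          norm_sum_le _ _
      _ ≤ ∑ i ∈ Finset.range (q + 1), (q ! : ℝ) * (2 * (2 ^ q / m0) * 4 ^ q) := by
          apply Finset.sum_le_sum
          intro i hi
          have hiq : i ≤ q := by simpa [Nat.lt_succ_iff] using hi
          rw [norm_mul, norm_mul, Complex.norm_natCast]
          have hsj : 1 / s ^ (q - i) ≤ (4 : ℝ) ^ q := by
            rw [div_le_iff₀ (by positivity)]
            have h4 : 1 ≤ 4 * s := by linarith
            calc (1 : ℝ) ≤ (4 * s) ^ (q - i) := one_le_pow₀ h4
              _ = 4 ^ (q - i) * s ^ (q - i) := mul_pow _ _ _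
              _ ≤ 4 ^ q * s ^ (q - i) := by
                gcongr
                · norm_num
                · omega
          calc (q.choose i : ℝ) * ‖iteratedDeriv i F 0‖ * ‖iteratedDeriv (q - i) G 0‖
              ≤ (q.choose i : ℝ) * (i ! * 2) * ((q - i)! * (2 ^ q / m0) / s ^ (q - i)) := by
                gcongr
                · exact hFb i (hiq.trans hq)
                · exact hGb _
            _ = ((q.choose i * i ! * (q - i)! : ℕ) : ℝ) * (2 * (2 ^ q / m0) * (1 / s ^ (q - i))) := by
                push_cast; ring
            _ ≤ (q ! : ℝ) * (2 * (2 ^ q / m0) * 4 ^ q) := by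
                rw [Nat.choose_mul_factorial_mul_factorial hiq]
                gcongr
      _ = _ := by simp; ring
  have hqf : (0 : ℝ) < q ! := by exact_mod_cast Nat.factorial_pos q
  have h1 : 1 ≤ ((q : ℝ) + 1) * (2 * (2 ^ q / m0) * 4 ^ q) := by
    by_contra h
    push Not at h
    nlinarith
  have h2 : ((q : ℝ) + 1) * (2 * (2 ^ q / m0) * 4 ^ q) = 2 * (q + 1) * 8 ^ q / m0 := by
    have : (8 : ℝ) ^ q = 2 ^ q * 4 ^ q := by rw [← mul_pow]; norm_num
    rw [this]; ring
  rw [h2, le_div_iff₀ hm0p] at h1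
  have h3 : 2 * ((q : ℝ) + 1) * 8 ^ q ≤ 2 * (p + 1) * 8 ^ p := by
    gcongr
    norm_num
  have h4 : (0 : ℝ) < (p + 1) * 8 ^ p := by positivity
  nlinarith


lemma bk_comp {f ph : ℂ → ℂ} {V W : Set ℂ} {p : ℕ} (hp : PValentOn f W p) (hph : MapsTo ph V W)
    (hi : InjOn ph V) : PValentOn (fun z => f (ph z)) V p := by
  classical
  intro c s hs
  have h1 := hp c (s.image ph) (by
    intro t ht
    obtain ⟨u, hu, rfl⟩ := Finset.mem_image.1 ht
    exact ⟨hph (hs u hu).1, (hs u hu).2⟩)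
  rwa [Finset.card_image_of_injOn] at h1
  intro u hu v hv huv
  exact hi (hs u hu).1 (hs v hv).1 huv

lemma bk_dy {F : ℂ → ℂ} {U : Set ℂ} (hU : IsOpen U) (hF : DifferentiableOn ℂ F U) {x y : ℝ}
    (h : bkpt x y ∈ U) :
    HasDerivAt (fun t : ℝ => F (bkpt x t)) (deriv F (bkpt x y) * Complex.I) y := by
  have h1 : HasDerivAt F (deriv F (bkpt x y)) (bkpt x y) :=
    (hF.differentiableAt (hU.mem_nhds h)).hasDerivAt
  have h2 : HasDerivAt (fun t : ℝ => bkpt x t) (1 * Complex.I) y := by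
    unfold bkpt
    exact ((Complex.ofRealCLM.hasDerivAt (x := y)).mul_const Complex.I).const_add _
  rw [one_mul] at h2
  exact HasDerivAt.comp (𝕜' := ℂ) y h1 h2

lemma bk_dx {F : ℂ → ℂ} {U : Set ℂ} (hU : IsOpen U) (hF : DifferentiableOn ℂ F U) {x y : ℝ}
    (h : bkpt x y ∈ U) :
    HasDerivAt (fun t : ℝ => F (bkpt t y)) (deriv F (bkpt x y)) x := by
  have h1 : HasDerivAt F (deriv F (bkpt x y)) (bkpt x y) :=
    (hF.differentiableAt (hU.mem_nhds h)).hasDerivAt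
  have h2 : HasDerivAt (fun t : ℝ => bkpt t y) 1 x := by
    unfold bkpt
    exact (Complex.ofRealCLM.hasDerivAt (x := x)).add_const _
  have h3 := HasDerivAt.comp (𝕜' := ℂ) x h1 h2
  rw [mul_one] at h3
  exact h3

lemma bk_int {H : ℝ × ℝ → ℝ} {x0 x1 y0 y1 : ℝ} (hx : x0 ≤ x1) (hy : y0 ≤ y1)
    (hH : ContinuousOn H (Icc x0 x1 ×ˢ Icc y0 y1)) :
    IntervalIntegrable (fun x => ∫ y in y0..y1, H (x, y)) volume x0 x1 := by
  have hi : IntegrableOn H (Icc x0 x1 ×ˢ Icc y0 y1) :=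
    hH.integrableOn_compact (isCompact_Icc.prod isCompact_Icc)
  rw [IntegrableOn, Measure.volume_eq_prod, ← Measure.prod_restrict] at hi
  rw [intervalIntegrable_iff_integrableOn_Icc_of_le hx]
  have := hi.integral_prod_left
  refine Integrable.congr this (Eventually.of_forall fun x => ?_)
  simp only
  rw [intervalIntegral.integral_of_le hy, integral_Icc_eq_integral_Ioc]

lemma bk_avg {Q : ℝ × ℝ → ℝ} {x0 x1 y0 y1 : ℝ} (hx : x0 ≤ x1) (hy : y0 ≤ y1)
    (hQ : ContinuousOn Q (Icc x0 x1 ×ˢ Icc y0 y1)) {D : ℝ → ℝ} (hD : ContinuousOn D (Icc x0 x1))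
    {l V : ℝ} (hl : 0 < l)
    (hV : (∫ x in x0..x1, ∫ y in y0..y1, Q (x, y)) ≤ V)
    (h : ∀ x ∈ Icc x0 x1, D x ≤ ∫ y in y0..y1, (l + Q (x, y) / (4 * l))) :
    ∫ x in x0..x1, D x ≤ (x1 - x0) * (y1 - y0) * l + V / (4 * l) := by
  have hQi := bk_int hx hy hQ
  have hsec : ∀ x ∈ Icc x0 x1, IntervalIntegrable (fun y => Q (x, y)) volume y0 y1 := by
    intro x hxx
    apply ContinuousOn.intervalIntegrable
    rw [uIcc_of_le hy]
    exact hQ.comp (by fun_prop) fun y hyy => ⟨hxx, hyy⟩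
  have e1 : ∀ x ∈ Icc x0 x1, D x ≤ (y1 - y0) * l + (∫ y in y0..y1, Q (x, y)) / (4 * l) := by
    intro x hxx
    refine (h x hxx).trans (le_of_eq ?_)
    rw [intervalIntegral.integral_add (by simp) ((hsec x hxx).div_const _),
      intervalIntegral.integral_div]
    simp
  calc ∫ x in x0..x1, D x
      ≤ ∫ x in x0..x1, ((y1 - y0) * l + (∫ y in y0..y1, Q (x, y)) / (4 * l)) := by
        apply intervalIntegral.integral_mono_on hx _ _ e1
        · apply ContinuousOn.intervalIntegrable; rwa [uIcc_of_le hx]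
        · exact (by simp : IntervalIntegrable (fun _ : ℝ => (y1 - y0) * l) volume x0 x1).add
            (hQi.div_const _)
    _ = (x1 - x0) * (y1 - y0) * l + (∫ x in x0..x1, ∫ y in y0..y1, Q (x, y)) / (4 * l) := by
        rw [intervalIntegral.integral_add (by simp) (hQi.div_const _),
          intervalIntegral.integral_div]
        simp; ring
    _ ≤ _ := by gcongr

lemma bkΦ_mono {a b : ℝ} (ha : 0 < a) (hab : a ≤ b) {s t : ℝ} (hs : 0 ≤ s) (hst : s ≤ t) :
    bkΦ a b s ≤ bkΦ a b t := by
  have hb : 0 < b := ha.trans_le hab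
  have : MonotoneOn (bkΦ a b) (Ici 0) := by
    apply monotoneOn_of_deriv_nonneg (convex_Ici 0)
    · exact fun x _ => (bkΦ_deriv ha hb x).continuousAt.continuousWithinAt
    · exact fun x _ => (bkΦ_deriv ha hb x).differentiableAt.differentiableWithinAt
    · intro x hx
      rw [(bkΦ_deriv ha hb x).deriv]
      apply bkκ_nonneg ha hab
      rw [interior_Ici] at hx
      exact le_of_lt hx
  exact this hs (hs.trans hst) hst

lemma bkΦ_gap {a b : ℝ} (ha : 0 < a) (hab : a ≤ b) :
    Real.log (b / a) - Real.log 2 ≤ bkΦ a b b - bkΦ a b a := by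
  have hb : 0 < b := ha.trans_le hab
  unfold bkΦ
  have h1 : Real.log (b ^ 2 + b ^ 2) = Real.log 2 + 2 * Real.log b := by
    rw [← two_mul, Real.log_mul (by norm_num) (by positivity), Real.log_pow]; norm_num
  have h2 : Real.log (a ^ 2 + a ^ 2) = Real.log 2 + 2 * Real.log a := by
    rw [← two_mul, Real.log_mul (by norm_num) (by positivity), Real.log_pow]; norm_num
  have h3 : 2 * Real.log b ≤ Real.log (b ^ 2 + a ^ 2) := by
    have : 2 * Real.log b = Real.log (b ^ 2) := by rw [Real.log_pow]; norm_num
    rw [this]; apply Real.log_le_log (by positivity); nlinarith [sq_nonneg a]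
  have h4 : Real.log (a ^ 2 + b ^ 2) = Real.log (b ^ 2 + a ^ 2) := by rw [add_comm]
  rw [Real.log_div hb.ne' ha.ne', h1, h2, h4]
  linarith

lemma bk_exp_diff {f : ℂ → ℂ} (hf : DifferentiableOn ℂ f (ball 0 1)) :
    DifferentiableOn ℂ (fun w => f (Complex.exp w)) {w : ℂ | w.re < 0} := by
  apply hf.comp Complex.differentiable_exp.differentiableOn
  intro w hw
  simpa [Complex.norm_exp] using hw

lemma bk_exp_open : IsOpen {w : ℂ | w.re < 0} := isOpen_lt Complex.continuous_re continuous_const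

lemma bk_exp_pval {f : ℂ → ℂ} {p : ℕ} (hp : PValentOn f (ball 0 1) p) {x0 x1 : ℝ} (hx : x1 ≤ 0) :
    PValentOn (fun w => f (Complex.exp w)) (Ioo x0 x1 ×ℂ Ioo (-Real.pi) Real.pi) p := by
  apply bk_comp hp
  · intro w hw
    have : w.re < 0 := hw.1.2.trans_le hx
    simpa [Complex.norm_exp] using this
  · intro u hu v hv huv
    exact Complex.exp_inj_of_neg_pi_lt_of_le_pi hu.2.1 hu.2.2.le hv.2.1 hv.2.2.le huv

lemma bk_exp_arg {z : ℂ} {x : ℝ} (h : ‖z‖ = Real.exp x) : Complex.exp (bkpt x z.arg) = z := by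
  unfold bkpt
  rw [Complex.exp_add, ← Complex.ofReal_exp, ← h]
  exact Complex.norm_mul_exp_arg_mul_I z

lemma bk_crude (p : ℕ) (hp1 : 1 ≤ p) : ∃ C : ℝ, 1 ≤ C ∧ ∀ f : ℂ → ℂ, DifferentiableOn ℂ f (ball 0 1) →
    PValentOn f (ball 0 1) p → (∀ i ≤ p, ‖iteratedDeriv i f 0‖ ≤ i !) →
    ∀ z : ℂ, ‖z‖ ≤ 1 / 4 → ‖f z‖ ≤ C := by
  set a : ℝ := 4 * (p + 1) * 8 ^ p + 1 with ha
  have ha1 : 1 ≤ a := by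
    have : (0 : ℝ) ≤ 4 * (p + 1) * 8 ^ p := by positivity
    linarith
  have ha0 : 0 < a := by linarith
  set E : ℝ := 4 * (4 * Real.pi ^ 2 * p + 1) with hE
  have hpi := Real.pi_pos
  have hpR : (1 : ℝ) ≤ p := by exact_mod_cast hp1
  refine ⟨a * Real.exp E, ?_, ?_⟩
  · have : 1 ≤ Real.exp E := Real.one_le_exp (by positivity)
    nlinarith
  intro f hf hp hm z0 hz0
  set b : ℝ := ‖f z0‖ with hb
  by_cases hab : b ≤ a
  · have : 1 ≤ Real.exp E := Real.one_le_exp (by positivity)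
    nlinarith
  push Not at hab
  have hb0 : 0 < b := ha0.trans hab
  set L := Real.log (b / a) with hL
  set F : ℂ → ℂ := fun w => f (Complex.exp w) with hF
  have hFd : DifferentiableOn ℂ F {w : ℂ | w.re < 0} := bk_exp_diff hf
  have hlog2 := Real.log_two_gt_d9
  have hlog2' := Real.log_two_lt_d9
  set x0 : ℝ := -(2 * Real.log 2) with hx0
  set x1 : ℝ := -Real.log 2 with hx1
  have hx : x0 ≤ x1 := by rw [hx0, hx1]; linarith
  have hx1n : x1 < 0 := by rw [hx1]; linarith
  have hy : -Real.pi ≤ Real.pi := by linarith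
  have hmem : ∀ x ∈ Icc x0 x1, ∀ y ∈ Icc (-Real.pi) Real.pi, bkpt x y ∈ {w : ℂ | w.re < 0} := by
    intro x hxx y _
    simp only [mem_ofPred_eq, bkpt_re]
    exact hxx.2.trans_lt hx1n
  have hbox := bk_box bk_exp_open hFd hx hy hmem (bk_exp_pval hp hx1n.le)
    (k := fun w => bkκ a b ‖w‖ ^ 2) (((bkκ_cont ha0 hab.le).comp continuous_norm).pow 2)
    (fun w => sq_nonneg _) (V := 2 * Real.pi * L)
    (by have : 0 ≤ L := Real.log_nonneg (by rw [le_div_iff₀ ha0]; linarith)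
        positivity) MeasurableSet.univ (fun _ _ _ _ => mem_univ _) (bk_K1 ha0 hab.le)
  have hmaps : MapsTo (fun q : ℝ × ℝ => bkpt q.1 q.2) (Icc x0 x1 ×ˢ Icc (-Real.pi) Real.pi)
      {w : ℂ | w.re < 0} := fun q hq => hmem _ hq.1 _ hq.2
  have hQ : ContinuousOn (fun q : ℝ × ℝ => bkκ a b ‖F (bkpt q.1 q.2)‖ ^ 2 * ‖deriv F (bkpt q.1 q.2)‖ ^ 2)
      (Icc x0 x1 ×ˢ Icc (-Real.pi) Real.pi) := by
    apply ContinuousOn.mul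
    · exact ((bkκ_cont ha0 hab.le).comp_continuousOn
        (hFd.continuousOn.comp bkpt_cont.continuousOn hmaps).norm).pow 2
    · exact (((hFd.deriv bk_exp_open).continuousOn.comp bkpt_cont.continuousOn hmaps).norm).pow 2
  have hl : (0 : ℝ) < 2 * p * Real.pi := by positivity
  have hav := bk_avg hx hy hQ (D := fun _ => L - Real.log 2) continuousOn_const hl hbox (by
    intro x hxx
    set l : ℝ := 2 * p * Real.pi with hldef
    have hs1 : 1 / 4 ≤ Real.exp x := by
      have h1 : Real.exp x0 = 1 / 4 := by
        rw [hx0, Real.exp_neg, two_mul, Real.exp_add, Real.exp_log (by norm_num)]; norm_num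
      rw [← h1]; exact Real.exp_le_exp.2 hxx.1
    have hs2 : Real.exp x < 1 := by rw [← Real.exp_zero]; exact Real.exp_lt_exp.2 (hxx.2.trans_lt hx1n)
    obtain ⟨z1, hz1, hfz1⟩ := bk_min hf hp hm hs1 hs2
    have hsub : closedBall (0 : ℂ) (Real.exp x) ⊆ ball 0 1 := closedBall_subset_ball hs2
    have hcl : closure (ball (0 : ℂ) (Real.exp x)) = closedBall 0 (Real.exp x) :=
      closure_ball _ (Real.exp_pos x).ne'
    obtain ⟨z2, hz2, hmax⟩ := Complex.exists_mem_frontier_isMaxOn_norm (f := f)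
      (U := ball (0 : ℂ) (Real.exp x)) isBounded_ball (nonempty_ball.2 (Real.exp_pos x))
      (DifferentiableOn.diffContOnCl (by rw [hcl]; exact hf.mono hsub))
    rw [frontier_ball _ (Real.exp_pos x).ne'] at hz2
    have hz2n : ‖z2‖ = Real.exp x := by simpa using hz2
    have hfz2 : b ≤ ‖f z2‖ := by
      have := hmax (show z0 ∈ closure (ball (0 : ℂ) (Real.exp x)) by
        rw [hcl]; simpa using hz0.trans hs1)
      simpa using this
    have hF1 : F (bkpt x z1.arg) = f z1 := by simp only [hF]; rw [bk_exp_arg hz1]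
    have hF2 : F (bkpt x z2.arg) = f z2 := by simp only [hF]; rw [bk_exp_arg hz2n]
    have hgap := bkΦ_gap ha0 hab.le
    have hm1 := bkΦ_mono ha0 hab.le (norm_nonneg _) hfz1
    have hm2 := bkΦ_mono ha0 hab.le hb0.le hfz2
    have hge : L - Real.log 2 ≤ |bkΦ a b ‖f z2‖ - bkΦ a b ‖f z1‖| :=
      le_trans (by rw [hL]; linarith) (le_abs_self _)
    have hQsec : ContinuousOn (fun t => l + bkκ a b ‖F (bkpt x t)‖ ^ 2 * ‖deriv F (bkpt x t)‖ ^ 2 / (4 * l))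
        (Icc (-Real.pi) Real.pi) := by
      have := hQ.comp (f := fun t : ℝ => (x, t)) (s := Icc (-Real.pi) Real.pi) (by fun_prop)
        (fun t ht => ⟨hxx, ht⟩)
      exact continuousOn_const.add (this.div_const _)
    have hpath : ∀ t0 ∈ Icc (-Real.pi) Real.pi, ∀ t1 ∈ Icc (-Real.pi) Real.pi, t0 ≤ t1 →
        |bkΦ a b ‖F (bkpt x t1)‖ - bkΦ a b ‖F (bkpt x t0)‖| ≤
        ∫ t in (-Real.pi)..Real.pi, (l + bkκ a b ‖F (bkpt x t)‖ ^ 2 * ‖deriv F (bkpt x t)‖ ^ 2 / (4 * l)) := by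
      intro t0 ht0 t1 ht1 h01
      have hsb : Icc t0 t1 ⊆ Icc (-Real.pi) Real.pi := Icc_subset_Icc ht0.1 ht1.2
      have h1 := bk_path (c := fun t => F (bkpt x t)) (c' := fun t => deriv F (bkpt x t) * Complex.I)
        h01 (fun t ht => bk_dy bk_exp_open hFd (hmem x hxx t (hsb ht)))
        (((hFd.deriv bk_exp_open).continuousOn.comp (f := fun t : ℝ => bkpt x t)
          (by unfold bkpt; fun_prop) (fun t ht => hmem x hxx t (hsb ht))).mul continuousOn_const)
        ha0 hab.le hl
      simp only [norm_mul, Complex.norm_I, mul_one] at h1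
      refine h1.trans ?_
      apply intervalIntegral.integral_mono_interval ht0.1 h01 ht1.2
      · exact Eventually.of_forall fun t => by positivity
      · apply ContinuousOn.intervalIntegrable; rwa [uIcc_of_le hy]
    have ha1 : z1.arg ∈ Icc (-Real.pi) Real.pi := ⟨(Complex.neg_pi_lt_arg z1).le, Complex.arg_le_pi z1⟩
    have ha2 : z2.arg ∈ Icc (-Real.pi) Real.pi := ⟨(Complex.neg_pi_lt_arg z2).le, Complex.arg_le_pi z2⟩
    refine hge.trans ?_
    rw [← hF1, ← hF2]
    rcases le_total z1.arg z2.arg with h | h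
    · exact hpath _ ha1 _ ha2 h
    · rw [abs_sub_comm]; exact hpath _ ha2 _ ha1 h)
  rw [intervalIntegral.integral_const, smul_eq_mul] at hav
  have hxd : x1 - x0 = Real.log 2 := by rw [hx0, hx1]; ring
  rw [hxd] at hav
  have e1 : (p : ℝ) * (2 * Real.pi * L) / (4 * (2 * p * Real.pi)) = L / 4 := by
    field_simp
  rw [e1] at hav
  have hL0 : 0 ≤ L := Real.log_nonneg (by rw [le_div_iff₀ ha0]; linarith)
  have hLE : L ≤ E := by
    have h1 : Real.log 2 * (Real.pi - -Real.pi) * (2 * p * Real.pi) = Real.log 2 * (4 * Real.pi ^ 2 * p) := by ring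
    rw [h1] at hav
    have h2 : Real.log 2 * (4 * Real.pi ^ 2 * p) ≤ 1 * (4 * Real.pi ^ 2 * p) := by
      gcongr; linarith
    rw [hE]
    nlinarith
  have : b / a ≤ Real.exp E := by
    rw [← Real.log_le_iff_le_exp (by positivity)]; exact hLE
  rw [div_le_iff₀ ha0] at this
  linarith


lemma bk_dbl (p : ℕ) (hp1 : 1 ≤ p) : ∃ C : ℝ, 1 ≤ C ∧ ∀ f : ℂ → ℂ, DifferentiableOn ℂ f (ball 0 1) →
    PValentOn f (ball 0 1) p → ∀ r M : ℝ, 1 / 4 ≤ r → r < 1 → 0 < M →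
    (∀ z : ℂ, ‖z‖ ≤ r → ‖f z‖ ≤ M) → ∀ z1 : ℂ, ‖z1‖ = r →
    ∀ z : ℂ, ‖z - z1‖ ≤ (1 - r) / 7 → ‖f z‖ ≤ C * M := by
  obtain ⟨C, hC1, hC⟩ := bk_crude p hp1
  refine ⟨C * 8 ^ p, ?_, ?_⟩
  · have : (1 : ℝ) ≤ 8 ^ p := one_le_pow₀ (by norm_num)
    nlinarith
  intro f hf hp r M hr hr1 hM hfM z1 hz1 z hz
  have hr0 : 0 < r := by linarith
  set d : ℝ := 8 * (1 - r) / 7 with hd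
  have hd0 : 0 < d := by rw [hd]; linarith
  set c : ℂ := (((1 - (1 - r) / 7 / r : ℝ)) : ℂ) * z1 with hc
  have hnn : 0 ≤ 1 - (1 - r) / 7 / r := by
    rw [sub_nonneg, div_le_one hr0]; linarith
  have hcn : ‖c‖ = r - (1 - r) / 7 := by
    rw [hc, norm_mul, Complex.norm_real, Real.norm_of_nonneg hnn, hz1]
    field_simp
  have hcz : ‖z1 - c‖ = (1 - r) / 7 := by
    have : z1 - c = (((1 - r) / 7 / r : ℝ) : ℂ) * z1 := by rw [hc]; push_cast; ring
    rw [this, norm_mul, Complex.norm_real, Real.norm_of_nonneg (by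
      apply div_nonneg _ hr0.le; linarith), hz1]
    field_simp
  have hdC : (d : ℂ) ≠ 0 := by exact_mod_cast hd0.ne'
  have hmapn : ∀ u : ℂ, ‖c + d * u‖ ≤ r - (1 - r) / 7 + d * ‖u‖ := by
    intro u
    refine (norm_add_le _ _).trans ?_
    rw [hcn, norm_mul, Complex.norm_real, Real.norm_of_nonneg hd0.le]
  have hmaps : MapsTo (fun u : ℂ => c + d * u) (ball 0 1) (ball 0 1) := by
    intro u hu
    rw [mem_ball_zero_iff] at hu ⊢
    refine (hmapn u).trans_lt ?_
    have : d * ‖u‖ < d * 1 := by gcongr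
    rw [hd] at this ⊢
    linarith
  set K : ℝ := 8 ^ p * M with hK
  have hK0 : 0 < K := by positivity
  have hKC : (K : ℂ) ≠ 0 := by exact_mod_cast hK0.ne'
  set f1 : ℂ → ℂ := fun u => f (c + d * u) / K with hf1
  have hf1d : DifferentiableOn ℂ f1 (ball 0 1) := by
    apply DifferentiableOn.div_const
    exact hf.comp (by fun_prop) hmaps
  have hp' : PValentOn (fun u : ℂ => f (c + d * u)) (ball 0 1) p := by
    apply bk_comp hp hmaps
    intro u _ v _ huv
    simp only at huv
    have := add_left_cancel huv
    exact mul_left_cancel₀ hdC this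
  have hp1 : PValentOn f1 (ball 0 1) p := by
    intro y s hs
    apply hp' (y * K) s
    intro t ht
    refine ⟨(hs t ht).1, ?_⟩
    rw [← (hs t ht).2]
    simp only [hf1]
    field_simp
  have hder : ∀ i ≤ p, ‖iteratedDeriv i f1 0‖ ≤ i ! := by
    intro i hi
    have h1 := Complex.norm_iteratedDeriv_le_of_forall_mem_sphere_norm_le (c := (0:ℂ)) (R := 1 / 8)
      (C := M / K) (f := f1) i (by norm_num) (DifferentiableOn.diffContOnCl (by
        rw [closure_ball _ (by norm_num)]
        exact hf1d.mono (closedBall_subset_ball (by norm_num)))) (by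
        intro u hu
        have hu : ‖u‖ = 1 / 8 := by simpa using hu
        simp only [hf1, norm_div, Complex.norm_real, Real.norm_of_nonneg hK0.le]
        gcongr
        apply hfM
        refine (hmapn u).trans ?_
        rw [hu, hd]; linarith)
    refine h1.trans ?_
    have h2 : M / K = 1 / 8 ^ p := by rw [hK]; field_simp
    rw [h2]
    have h3 : (8 : ℝ) ^ i ≤ 8 ^ p := pow_le_pow_right₀ (by norm_num) hi
    rw [one_div_pow, div_div_eq_mul_div, div_one, mul_assoc]
    have : 1 / (8 : ℝ) ^ p * 8 ^ i ≤ 1 := by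
      rw [one_div_mul_eq_div, div_le_one (by positivity)]; exact h3
    have hpos : (0 : ℝ) ≤ i ! := by positivity
    nlinarith
  have hfin := hC f1 hf1d hp1 hder ((z - c) / d) (by
    rw [norm_div, Complex.norm_real, Real.norm_of_nonneg hd0.le, div_le_iff₀ hd0]
    have : z - c = (z - z1) + (z1 - c) := by ring
    rw [this]
    refine (norm_add_le _ _).trans ?_
    rw [hcz, hd]; linarith)
  simp only [hf1, norm_div, Complex.norm_real, Real.norm_of_nonneg hK0.le] at hfin
  rw [div_le_iff₀ hK0, mul_div_cancel₀ _ hdC, add_sub_cancel] at hfin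
  rw [hK] at hfin
  linarith


lemma bk_jensen {G : ℂ → ℂ} {ρ a B : ℝ} (hρ : 0 < ρ) (hG : AnalyticOnNhd ℂ G (closedBall 0 ρ))
    (ha : 1 ≤ a) (h0 : G 0 ≠ 0) (hB : ∀ ζ ∈ closedBall (0 : ℂ) ρ, ‖G ζ‖ ≤ B) (haB : a ≤ B) :
    2 * Real.pi * Real.log ‖G 0‖ - Real.pi * (Real.log B + Real.log 2 / 2) ≤
      ∫ y in (-(Real.pi / 2))..(Real.pi / 2),
        Real.log (‖G (Complex.exp (bkpt (Real.log ρ) y))‖ ^ 2 + a ^ 2) / 2 := by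
  have hpi := Real.pi_pos
  have ha0 : 0 < a := by linarith
  have hB0 : 0 < B := by linarith
  have hcm : ∀ y : ℝ, Complex.exp (bkpt (Real.log ρ) y) = circleMap 0 ρ y := by
    intro y
    unfold bkpt circleMap
    rw [Complex.exp_add, ← Complex.ofReal_exp, Real.exp_log hρ, zero_add]
  have hmem : ∀ y : ℝ, circleMap 0 ρ y ∈ closedBall (0 : ℂ) ρ := circleMap_mem_closedBall 0 hρ.le
  simp only [hcm]
  set U : ℝ → ℝ := fun y => Real.log (‖G (circleMap 0 ρ y)‖ ^ 2 + a ^ 2) / 2 with hU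
  have hUc : Continuous U := by
    have h1 : Continuous fun y => G (circleMap 0 ρ y) :=
      hG.continuousOn.comp_continuous (continuous_circleMap 0 ρ) hmem
    apply Continuous.div_const
    apply Continuous.log ((h1.norm.pow 2).add continuous_const)
    intro y
    show ‖G (circleMap 0 ρ y)‖ ^ 2 + a ^ 2 ≠ 0
    positivity
  have habs : |ρ| = ρ := abs_of_pos hρ
  have hj := AnalyticOnNhd.circleAverage_log_norm (c := 0) hρ.ne' (by rwa [habs]) h0
  have hge : Real.log ‖G 0‖ ≤ Real.circleAverage (fun z => Real.log ‖G z‖) 0 ρ := by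
    rw [hj]
    have : 0 ≤ ∑ᶠ u, (MeromorphicOn.divisor G (closedBall 0 |ρ|) u : ℝ) * Real.log (ρ * ‖0 - u‖⁻¹) := by
      apply finsum_nonneg
      intro u
      by_cases hu : u ∈ closedBall (0 : ℂ) |ρ|
      · apply mul_nonneg
        · have := MeromorphicOn.AnalyticOnNhd.divisor_nonneg (f := G) (U := closedBall 0 |ρ|) (by rwa [habs]) u
          exact_mod_cast this
        · by_cases hu0 : u = 0
          · simp [hu0]
          · apply Real.log_nonneg
            rw [habs, mem_closedBall_zero_iff] at hu
            have : 0 < ‖u‖ := norm_pos_iff.2 hu0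
            rw [zero_sub, norm_neg, ← div_eq_mul_inv, le_div_iff₀ this]
            linarith
      · simp [hu]
    linarith
  have hci : CircleIntegrable (fun z => Real.log ‖G z‖) 0 ρ := by
    apply MeromorphicOn.circleIntegrable_log_norm
    apply AnalyticOnNhd.meromorphicOn
    rw [habs]
    exact hG.mono sphere_subset_closedBall
  rw [Real.circleAverage_def, smul_eq_mul] at hge
  have h1 : ∫ y in 0..(2 * Real.pi), Real.log ‖G (circleMap 0 ρ y)‖ ≤ ∫ y in 0..(2 * Real.pi), U y := by
    apply intervalIntegral.integral_mono_on (by positivity) hci (hUc.intervalIntegrable _ _)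
    intro y _
    simp only [hU]
    rcases eq_or_ne (G (circleMap 0 ρ y)) 0 with h | h
    · rw [h, norm_zero, Real.log_zero]
      apply div_nonneg _ (by norm_num)
      apply Real.log_nonneg
      nlinarith
    · have h2 : 0 < ‖G (circleMap 0 ρ y)‖ := norm_pos_iff.2 h
      have h3 : 2 * Real.log ‖G (circleMap 0 ρ y)‖ = Real.log (‖G (circleMap 0 ρ y)‖ ^ 2) := by
        rw [Real.log_pow]; norm_num
      have h4 : Real.log (‖G (circleMap 0 ρ y)‖ ^ 2) ≤ Real.log (‖G (circleMap 0 ρ y)‖ ^ 2 + a ^ 2) :=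
        Real.log_le_log (by positivity) (by nlinarith)
      linarith
  have hper : Function.Periodic U (2 * Real.pi) := by
    intro y
    simp only [hU]
    rw [periodic_circleMap 0 ρ y]
  have h2 := hper.intervalIntegral_add_eq 0 (-(Real.pi / 2))
  rw [zero_add] at h2
  have h3 := intervalIntegral.integral_add_adjacent_intervals (f := U) (μ := volume)
    (hUc.intervalIntegrable (-(Real.pi / 2)) (Real.pi / 2))
    (hUc.intervalIntegrable (Real.pi / 2) (-(Real.pi / 2) + 2 * Real.pi))
  have h4 : ∫ y in (Real.pi / 2)..(-(Real.pi / 2) + 2 * Real.pi), U y ≤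
      ∫ y in (Real.pi / 2)..(-(Real.pi / 2) + 2 * Real.pi), (Real.log B + Real.log 2 / 2) := by
    apply intervalIntegral.integral_mono_on (by linarith) (hUc.intervalIntegrable _ _) (by simp)
    intro y _
    simp only [hU]
    have h5 := hB _ (hmem y)
    have h6 : Real.log (‖G (circleMap 0 ρ y)‖ ^ 2 + a ^ 2) ≤ Real.log (2 * B ^ 2) := by
      apply Real.log_le_log (by positivity)
      have := norm_nonneg (G (circleMap 0 ρ y))
      nlinarith
    rw [Real.log_mul (by norm_num) (by positivity), Real.log_pow] at h6
    push_cast at h6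
    linarith
  rw [intervalIntegral.integral_const, smul_eq_mul] at h4
  have h7 : Real.log ‖G 0‖ * (2 * Real.pi) ≤ ∫ y in 0..(2 * Real.pi), Real.log ‖G (circleMap 0 ρ y)‖ := by
    have := mul_le_mul_of_nonneg_right hge (by positivity : 0 ≤ 2 * Real.pi)
    refine this.trans (le_of_eq ?_)
    field_simp
  nlinarith


lemma bk_one_add {ζ : ℂ} (h : 0 ≤ ζ.re) : 1 ≤ ‖1 + ζ‖ ∧ ‖ζ‖ ≤ ‖1 + ζ‖ := by
  constructor
  · have := Complex.re_le_norm (1 + ζ)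
    simp at this
    linarith
  · apply le_of_sq_le_sq _ (norm_nonneg _)
    rw [← Complex.normSq_eq_norm_sq, ← Complex.normSq_eq_norm_sq, Complex.normSq_apply,
      Complex.normSq_apply]
    simp
    nlinarith

lemma bk_exp_re {x y : ℝ} (hy : y ∈ Icc (-(Real.pi / 2)) (Real.pi / 2)) :
    0 ≤ (Complex.exp (bkpt x y)).re := by
  rw [Complex.exp_re, bkpt_re, bkpt_im]
  exact mul_nonneg (Real.exp_pos x).le (Real.cos_nonneg_of_mem_Icc hy)

lemma bk_growth_aux {p : ℕ} (hp1 : 1 ≤ p) {f : ℂ → ℂ} (hf : DifferentiableOn ℂ f (ball 0 1))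
    (hp : PValentOn f (ball 0 1) p) {a C r : ℝ} (ha1 : 1 ≤ a) (hC1 : 1 ≤ C) (hr : 1 / 4 ≤ r)
    (hr1 : r < 1) (hfa : ∀ z : ℂ, ‖z‖ ≤ 1 / 4 → ‖f z‖ ≤ a) {z1 : ℂ} (hz1 : ‖z1‖ = r)
    (hmax : ∀ z : ℂ, ‖z‖ ≤ r → ‖f z‖ ≤ ‖f z1‖) (hab : a < ‖f z1‖)
    (hdbl : ∀ z : ℂ, ‖z - z1‖ ≤ (1 - r) / 7 → ‖f z‖ ≤ C * ‖f z1‖) :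
    Real.log (‖f z1‖ / a) ≤ 2 * p * Real.log (32 / (1 - r)) + 2 * Real.log C + 3 * Real.log 2 := by
  have hpi := Real.pi_pos
  have hpR : (1 : ℝ) ≤ p := by exact_mod_cast hp1
  have hr0 : 0 < r := by linarith
  set b : ℝ := ‖f z1‖ with hb
  have ha0 : 0 < a := by linarith
  have hb0 : 0 < b := ha0.trans hab
  set L := Real.log (b / a) with hL
  have hL0 : 0 ≤ L := Real.log_nonneg (by rw [le_div_iff₀ ha0]; linarith)
  set ρ : ℝ := (1 - r) / 8 with hρ
  have hρ0 : 0 < ρ := by rw [hρ]; linarith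
  have hρ1 : ρ < 1 / 8 := by rw [hρ]; linarith
  set x0 := Real.log ρ with hx0
  set x1 := Real.log 4 with hx1
  have hx : x0 ≤ x1 := Real.log_le_log hρ0 (by linarith)
  have hy : -(Real.pi / 2) ≤ Real.pi / 2 := by linarith
  set F : ℂ → ℂ := fun w => f (z1 / (1 + Complex.exp w)) with hF
  set W : Set ℂ := {w : ℂ | r < ‖1 + Complex.exp w‖} with hW
  have hWo : IsOpen W := isOpen_lt continuous_const
    (continuous_const.add Complex.continuous_exp).norm
  have hWne : ∀ w ∈ W, 1 + Complex.exp w ≠ 0 := by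
    intro w hw h
    have hw : r < ‖1 + Complex.exp w‖ := hw
    rw [h, norm_zero] at hw; linarith
  have hFd : DifferentiableOn ℂ F W := by
    apply hf.comp
    · apply DifferentiableOn.div (by fun_prop)
        (Complex.differentiable_exp.const_add _).differentiableOn hWne
    · intro w hw
      have hw : r < ‖1 + Complex.exp w‖ := hw
      rw [mem_ball_zero_iff, norm_div, hz1, div_lt_one (hr0.trans hw)]
      exact hw
  have hmem : ∀ x ∈ Icc x0 x1, ∀ y ∈ Icc (-(Real.pi / 2)) (Real.pi / 2), bkpt x y ∈ W := by
    intro x _ y hyy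
    exact hr1.trans_le (bk_one_add (bk_exp_re hyy)).1
  have hFb : ∀ x : ℝ, ∀ y ∈ Icc (-(Real.pi / 2)) (Real.pi / 2), ‖F (bkpt x y)‖ ≤ b := by
    intro x y hyy
    apply hmax
    rw [norm_div, hz1]
    exact div_le_self hr0.le (bk_one_add (bk_exp_re hyy)).1
  have hFa : ∀ y ∈ Icc (-(Real.pi / 2)) (Real.pi / 2), ‖F (bkpt x1 y)‖ ≤ a := by
    intro y hyy
    apply hfa
    have h1 := (bk_one_add (bk_exp_re (x := x1) hyy)).2
    rw [Complex.norm_exp, bkpt_re, hx1, Real.exp_log (by norm_num)] at h1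
    rw [norm_div, hz1, div_le_div_iff₀ (by linarith) (by norm_num)]
    linarith
  have hpv : PValentOn F (Ioo x0 x1 ×ℂ Ioo (-(Real.pi / 2)) (Real.pi / 2)) p := by
    have hin : ∀ w ∈ Ioo x0 x1 ×ℂ Ioo (-(Real.pi / 2)) (Real.pi / 2), w ∈ W := by
      intro w hw
      have h1 := hmem w.re (Ioo_subset_Icc_self hw.1) w.im (Ioo_subset_Icc_self hw.2)
      have : bkpt w.re w.im = w := by unfold bkpt; exact Complex.re_add_im w
      rwa [this] at h1
    apply bk_comp hp
    · intro w hw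
      have hw : r < ‖1 + Complex.exp w‖ := hin w hw
      rw [mem_ball_zero_iff, norm_div, hz1, div_lt_one (hr0.trans hw)]
      exact hw
    · intro u hu v hv huv
      simp only at huv
      have hz0 : z1 ≠ 0 := by rw [← norm_pos_iff, hz1]; exact hr0
      rw [div_eq_div_iff (hWne u (hin u hu)) (hWne v (hin v hv))] at huv
      have h2 := add_left_cancel (mul_left_cancel₀ hz0 huv)
      refine Complex.exp_inj_of_neg_pi_lt_of_le_pi ?_ ?_ ?_ ?_ h2.symm
      · linarith [hu.2.1]
      · linarith [hu.2.2]
      · linarith [hv.2.1]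
      · linarith [hv.2.2]
  have hbox := bk_box hWo hFd hx hy hmem hpv
    (k := fun w => bkκ a b ‖w‖ ^ 2) (((bkκ_cont ha0 hab.le).comp continuous_norm).pow 2)
    (fun w => sq_nonneg _) (V := 2 * Real.pi * L)
    (by positivity) MeasurableSet.univ (fun _ _ _ _ => mem_univ _) (bk_K1 ha0 hab.le)
  have hmaps : MapsTo (fun q : ℝ × ℝ => bkpt q.1 q.2)
      (Icc x0 x1 ×ˢ Icc (-(Real.pi / 2)) (Real.pi / 2)) W := fun q hq => hmem _ hq.1 _ hq.2
  have hQ : ContinuousOn (fun q : ℝ × ℝ => bkκ a b ‖F (bkpt q.1 q.2)‖ ^ 2 * ‖deriv F (bkpt q.1 q.2)‖ ^ 2)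
      (Icc x0 x1 ×ˢ Icc (-(Real.pi / 2)) (Real.pi / 2)) := by
    apply ContinuousOn.mul
    · exact ((bkκ_cont ha0 hab.le).comp_continuousOn
        (hFd.continuousOn.comp bkpt_cont.continuousOn hmaps).norm).pow 2
    · exact (((hFd.deriv hWo).continuousOn.comp bkpt_cont.continuousOn hmaps).norm).pow 2
  have hswap := bk_swap hx hy hQ
  rw [← hswap] at hbox
  have hQ' : ContinuousOn (fun q : ℝ × ℝ => bkκ a b ‖F (bkpt q.2 q.1)‖ ^ 2 * ‖deriv F (bkpt q.2 q.1)‖ ^ 2)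
      (Icc (-(Real.pi / 2)) (Real.pi / 2) ×ˢ Icc x0 x1) := by
    apply hQ.comp continuous_swap.continuousOn
    intro q hq; exact ⟨hq.2, hq.1⟩
  have hFc : ∀ x ∈ Icc x0 x1, ContinuousOn (fun y : ℝ => ‖F (bkpt x y)‖)
      (Icc (-(Real.pi / 2)) (Real.pi / 2)) := by
    intro x hxx
    apply ContinuousOn.norm
    exact hFd.continuousOn.comp (by unfold bkpt; fun_prop) fun y hyy => hmem x hxx y hyy
  have hΦc : Continuous (bkΦ a b) :=
    continuous_iff_continuousAt.2 fun x => (bkΦ_deriv ha0 hb0 x).continuousAt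
  have hDc : ContinuousOn (fun y : ℝ => bkΦ a b ‖F (bkpt x0 y)‖ - bkΦ a b ‖F (bkpt x1 y)‖)
      (Icc (-(Real.pi / 2)) (Real.pi / 2)) :=
    (hΦc.comp_continuousOn (hFc x0 (left_mem_Icc.2 hx))).sub
      (hΦc.comp_continuousOn (hFc x1 (right_mem_Icc.2 hx)))
  have hl : (0 : ℝ) < p := by linarith
  have hav := bk_avg hy hx hQ' hDc hl hbox (by
    intro y hyy
    have h1 := bk_path (c := fun t => F (bkpt t y)) (c' := fun t => deriv F (bkpt t y))
        hx (fun t ht => bk_dx hWo hFd (hmem t ht y hyy))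
        ((hFd.deriv hWo).continuousOn.comp (f := fun t : ℝ => bkpt t y)
          (by unfold bkpt; fun_prop) (fun t ht => hmem t ht y hyy))
        ha0 hab.le hl
    rw [abs_sub_comm] at h1
    exact (le_abs_self _).trans h1)
  set G : ℂ → ℂ := fun ζ => f (z1 / (1 + ζ)) with hG
  have hGz : ∀ ζ : ℂ, ‖ζ‖ ≤ ρ → 1 + ζ ≠ 0 ∧ ‖z1 / (1 + ζ) - z1‖ ≤ (1 - r) / 7 := by
    intro ζ hζ
    have h1 : 1 - ρ ≤ ‖1 + ζ‖ := by
      have := norm_sub_norm_le (1 : ℂ) (-ζ)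
      rw [norm_one, norm_neg, sub_neg_eq_add] at this
      linarith
    have h0 : 0 < ‖1 + ζ‖ := by linarith
    have hne : 1 + ζ ≠ 0 := norm_pos_iff.1 h0
    refine ⟨hne, ?_⟩
    have h2 : z1 / (1 + ζ) - z1 = -(z1 * ζ) / (1 + ζ) := by field_simp; ring
    rw [h2, norm_div, norm_neg, norm_mul, hz1, div_le_iff₀ h0]
    have h3 : r * ‖ζ‖ ≤ 1 * ρ := by gcongr
    have h4 : (1 - r) / 7 * (7 / 8) ≤ (1 - r) / 7 * ‖1 + ζ‖ := by
      apply mul_le_mul_of_nonneg_left <;> linarith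
    rw [hρ] at h3
    linarith
  have hGa : AnalyticOnNhd ℂ G (closedBall 0 ρ) := by
    intro ζ hζ
    rw [mem_closedBall_zero_iff] at hζ
    obtain ⟨h1, h2⟩ := hGz ζ hζ
    have h3 : z1 / (1 + ζ) ∈ ball (0 : ℂ) 1 := by
      rw [mem_ball_zero_iff]
      have : z1 / (1 + ζ) = (z1 / (1 + ζ) - z1) + z1 := by ring
      rw [this]
      refine (norm_add_le _ _).trans_lt ?_
      rw [hz1]; linarith
    have h4 : AnalyticAt ℂ f (z1 / (1 + ζ)) := hf.analyticAt (isOpen_ball.mem_nhds h3)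
    exact AnalyticAt.fun_comp (g := f) (f := fun ζ => z1 / (1 + ζ)) h4
      (analyticAt_const.div (analyticAt_const.add analyticAt_id) h1)
  have hG0 : G 0 = f z1 := by simp [hG]
  have hj := bk_jensen hρ0 hGa ha1 (by rw [hG0, ← norm_pos_iff]; exact hb0) (B := C * b)
    (fun ζ hζ => hdbl _ (hGz ζ (by simpa using hζ)).2) (by nlinarith)
  rw [hG0, ← hb, Real.log_mul (by linarith) hb0.ne'] at hj
  have hUi : ContinuousOn (fun y : ℝ => Real.log (‖F (bkpt x0 y)‖ ^ 2 + a ^ 2) / 2)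
      (Icc (-(Real.pi / 2)) (Real.pi / 2)) := by
    apply ContinuousOn.div_const
    apply ContinuousOn.log (((hFc x0 (left_mem_Icc.2 hx)).pow 2).add continuousOn_const)
    intro y _
    show ‖F (bkpt x0 y)‖ ^ 2 + a ^ 2 ≠ 0
    positivity
  have hlow : ∫ y in (-(Real.pi / 2))..(Real.pi / 2),
      (Real.log (‖F (bkpt x0 y)‖ ^ 2 + a ^ 2) / 2 - (Real.log 2 + Real.log a)) ≤
      ∫ y in (-(Real.pi / 2))..(Real.pi / 2),
        (bkΦ a b ‖F (bkpt x0 y)‖ - bkΦ a b ‖F (bkpt x1 y)‖) := by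
    apply intervalIntegral.integral_mono_on hy
    · apply ContinuousOn.intervalIntegrable; rw [uIcc_of_le hy]
      exact hUi.sub continuousOn_const
    · apply ContinuousOn.intervalIntegrable; rwa [uIcc_of_le hy]
    intro y hyy
    have h1 := bkΦ_mono ha0 hab.le (norm_nonneg _) (hFa y hyy)
    have h2 : Real.log (a ^ 2 + a ^ 2) = Real.log 2 + 2 * Real.log a := by
      rw [← two_mul, Real.log_mul (by norm_num) (by positivity), Real.log_pow]; norm_num
    have h3 : 2 * Real.log b ≤ Real.log (a ^ 2 + b ^ 2) := by
      have : 2 * Real.log b = Real.log (b ^ 2) := by rw [Real.log_pow]; norm_num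
      rw [this]; apply Real.log_le_log (by positivity); nlinarith [sq_nonneg a]
    have h4 : Real.log (‖F (bkpt x0 y)‖ ^ 2 + b ^ 2) ≤ Real.log 2 + 2 * Real.log b := by
      have : Real.log 2 + 2 * Real.log b = Real.log (2 * b ^ 2) := by
        rw [Real.log_mul (by norm_num) (by positivity), Real.log_pow]; norm_num
      rw [this]; apply Real.log_le_log (by positivity)
      have := hFb x0 y hyy
      nlinarith [norm_nonneg (F (bkpt x0 y))]
    unfold bkΦ at h1 ⊢
    rw [h2] at h1
    linarith
  rw [intervalIntegral.integral_sub (by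
      apply ContinuousOn.intervalIntegrable; rwa [uIcc_of_le hy]) (by simp),
    intervalIntegral.integral_const, smul_eq_mul] at hlow
  have e1 : (p : ℝ) * (2 * Real.pi * L) / (4 * p) = Real.pi * L / 2 := by
    field_simp; norm_num; ring
  rw [e1] at hav
  have hT : x1 - x0 = Real.log (32 / (1 - r)) := by
    rw [hx1, hx0, hρ, ← Real.log_div (by norm_num) (by linarith)]
    congr 1
    have : 1 - r ≠ 0 := by linarith
    field_simp; norm_num
  rw [hT] at hav
  have hLd : L = Real.log b - Real.log a := Real.log_div hb0.ne' ha0.ne'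
  change _ ≤ ∫ y in (-(Real.pi / 2))..(Real.pi / 2), Real.log (‖F (bkpt x0 y)‖ ^ 2 + a ^ 2) / 2 at hj
  have hall : Real.pi * (L / 2) ≤ Real.pi * (p * Real.log (32 / (1 - r)) + Real.log C + 3 / 2 * Real.log 2) := by
    nlinarith
  have := le_of_mul_le_mul_left hall hpi
  linarith

lemma bk_growth (p : ℕ) (hp1 : 1 ≤ p) : ∃ C : ℝ, 1 ≤ C ∧ ∀ f : ℂ → ℂ, DifferentiableOn ℂ f (ball 0 1) →
    PValentOn f (ball 0 1) p → (∀ i ≤ p, ‖iteratedDeriv i f 0‖ ≤ i !) →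
    ∀ r : ℝ, r < 1 → ∀ z : ℂ, ‖z‖ ≤ r → ‖f z‖ ≤ C * (1 / (1 - r)) ^ (2 * p) := by
  obtain ⟨a, ha1, ha⟩ := bk_crude p hp1
  obtain ⟨C, hC1, hC⟩ := bk_dbl p hp1
  have hA : 1 ≤ C ^ 2 * 8 * 32 ^ (2 * p) := by
    have h1 : 1 ≤ C ^ 2 := one_le_pow₀ hC1
    have h2 : (1 : ℝ) ≤ 32 ^ (2 * p) := one_le_pow₀ (by norm_num)
    nlinarith
  refine ⟨a * (C ^ 2 * 8 * 32 ^ (2 * p)), by nlinarith, ?_⟩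
  intro f hf hp hm r hr1 z hz
  have hr0 : 0 ≤ r := (norm_nonneg z).trans hz
  have hone : 1 ≤ (1 / (1 - r)) ^ (2 * p) := by
    apply one_le_pow₀
    rw [le_div_iff₀ (by linarith)]; linarith
  have htriv : a ≤ a * (C ^ 2 * 8 * 32 ^ (2 * p)) * (1 / (1 - r)) ^ (2 * p) := by
    have : 1 ≤ (C ^ 2 * 8 * 32 ^ (2 * p)) * (1 / (1 - r)) ^ (2 * p) := one_le_mul_of_one_le_of_one_le hA hone
    rw [mul_assoc]
    nlinarith
  rcases le_or_gt r (1 / 4) with hr | hr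
  · exact (ha f hf hp hm z (hz.trans hr)).trans htriv
  have hrp : 0 < r := by linarith
  have hcl : closure (ball (0 : ℂ) r) = closedBall 0 r := closure_ball _ hrp.ne'
  obtain ⟨z1, hz1, hmax⟩ := Complex.exists_mem_frontier_isMaxOn_norm (f := f)
    (U := ball (0 : ℂ) r) isBounded_ball (nonempty_ball.2 hrp)
    (DifferentiableOn.diffContOnCl (by rw [hcl]; exact hf.mono (closedBall_subset_ball hr1)))
  rw [frontier_ball _ hrp.ne'] at hz1
  have hz1n : ‖z1‖ = r := by simpa using hz1
  have hmax' : ∀ z : ℂ, ‖z‖ ≤ r → ‖f z‖ ≤ ‖f z1‖ := by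
    intro z hz
    have := hmax (show z ∈ closure (ball (0 : ℂ) r) by rw [hcl]; simpa using hz)
    simpa using this
  refine (hmax' z hz).trans ?_
  rcases le_or_gt ‖f z1‖ a with hab | hab
  · exact hab.trans htriv
  have hb0 : 0 < ‖f z1‖ := by linarith
  have h1 := bk_growth_aux hp1 hf hp ha1 hC1 hr.le hr1 (ha f hf hp hm) hz1n hmax' hab
    (hC f hf hp r _ hr.le hr1 hb0 hmax' z1 hz1n)
  have hd : 0 < 1 - r := by linarith
  have h2 : 2 * p * Real.log (32 / (1 - r)) + 2 * Real.log C + 3 * Real.log 2 =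
      Real.log ((32 / (1 - r)) ^ (2 * p) * C ^ 2 * 2 ^ 3) := by
    rw [Real.log_mul (by positivity) (by norm_num), Real.log_mul (by positivity) (by positivity),
      Real.log_pow, Real.log_pow, Real.log_pow]
    push_cast; ring
  rw [h2, Real.log_le_log_iff (by positivity) (by positivity), div_le_iff₀ (by linarith)] at h1
  refine h1.trans (le_of_eq ?_)
  rw [div_pow, div_pow, one_pow]
  ring


/-- Integral of the modulus over the circle of radius `exp x`. -/
def bkJ (f : ℂ → ℂ) (x : ℝ) : ℝ :=
  ∫ y in (-Real.pi)..Real.pi, ‖f (Complex.exp (bkpt x y))‖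

lemma bkJ_le {f : ℂ → ℂ} {x M : ℝ} (hM : ∀ z : ℂ, ‖z‖ ≤ Real.exp x → ‖f z‖ ≤ M) :
    bkJ f x ≤ 2 * Real.pi * M := by
  have hpi := Real.pi_pos
  have h := intervalIntegral.norm_integral_le_of_norm_le_const (a := -Real.pi) (b := Real.pi)
    (f := fun y => ‖f (Complex.exp (bkpt x y))‖) (C := M) (by
      intro y _
      rw [norm_norm]
      apply hM
      rw [Complex.norm_exp, bkpt_re])
  have h2 : |Real.pi - -Real.pi| = 2 * Real.pi := by
    rw [abs_of_pos (by linarith)]; ring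
  rw [h2] at h
  have := (le_abs_self _).trans h
  unfold bkJ
  linarith

lemma bk_step1 {p : ℕ} {f : ℂ → ℂ} (hf : DifferentiableOn ℂ f (ball 0 1))
    (hp : PValentOn f (ball 0 1) p) {x0 x l M S : ℝ} (hx : x0 ≤ x) (hx0 : x < 0) (hl : 0 < l)
    (hM0 : 0 ≤ M)
    (hM : ∀ z : ℂ, ‖z‖ ≤ Real.exp x → ‖f z‖ ≤ M) (hS : ∀ t ∈ Icc x0 x, bkJ f t ≤ S) :
    bkJ f x ≤ bkJ f x0 + l * (p * (2 * Real.pi * M)) + (x - x0) * ((S + 2 * Real.pi) / (4 * l)) := by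
  have hpi := Real.pi_pos
  have hy : -Real.pi ≤ Real.pi := by linarith
  set F : ℂ → ℂ := fun w => f (Complex.exp w) with hF
  have hFd : DifferentiableOn ℂ F {w : ℂ | w.re < 0} := bk_exp_diff hf
  have hmem : ∀ t ∈ Icc x0 x, ∀ y ∈ Icc (-Real.pi) Real.pi, bkpt t y ∈ {w : ℂ | w.re < 0} := by
    intro t ht y _
    simp only [mem_ofPred_eq, bkpt_re]
    exact ht.2.trans_lt hx0
  have hbox := bk_box bk_exp_open hFd hx hy hmem (bk_exp_pval hp hx0.le)
    (k := fun w => 1 / (‖w‖ + 1)) (by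
      apply Continuous.div continuous_const (continuous_norm.add continuous_const)
      intro w
      exact (by positivity : (0 : ℝ) < ‖w‖ + 1).ne')
    (fun w => by positivity) (V := 2 * Real.pi * M) (by positivity)
    (T := closedBall 0 M) measurableSet_closedBall (by
      intro t ht y _
      rw [mem_closedBall_zero_iff]
      apply hM
      rw [Complex.norm_exp, bkpt_re]
      exact Real.exp_le_exp.2 ht.2) bk_K2
  have hmaps : MapsTo (fun q : ℝ × ℝ => bkpt q.1 q.2) (Icc x0 x ×ˢ Icc (-Real.pi) Real.pi)
      {w : ℂ | w.re < 0} := fun q hq => hmem _ hq.1 _ hq.2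
  have hN : ContinuousOn (fun q : ℝ × ℝ => ‖F (bkpt q.1 q.2)‖) (Icc x0 x ×ˢ Icc (-Real.pi) Real.pi) :=
    (hFd.continuousOn.comp bkpt_cont.continuousOn hmaps).norm
  have hQ : ContinuousOn (fun q : ℝ × ℝ => 1 / (‖F (bkpt q.1 q.2)‖ + 1) * ‖deriv F (bkpt q.1 q.2)‖ ^ 2)
      (Icc x0 x ×ˢ Icc (-Real.pi) Real.pi) := by
    apply ContinuousOn.mul
    · apply ContinuousOn.div continuousOn_const (hN.add continuousOn_const)
      intro q _
      have := norm_nonneg (F (bkpt q.1 q.2))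
      show ‖F (bkpt q.1 q.2)‖ + 1 ≠ 0
      positivity
    · exact (((hFd.deriv bk_exp_open).continuousOn.comp bkpt_cont.continuousOn hmaps).norm).pow 2
  set H : ℝ × ℝ → ℝ := fun q => l * (1 / (‖F (bkpt q.1 q.2)‖ + 1) * ‖deriv F (bkpt q.1 q.2)‖ ^ 2)
    + (‖F (bkpt q.1 q.2)‖ + 1) / (4 * l) with hH
  have hHc : ContinuousOn H (Icc x0 x ×ˢ Icc (-Real.pi) Real.pi) :=
    (continuousOn_const.mul hQ).add ((hN.add continuousOn_const).div_const _)
  have hHc' : ContinuousOn (fun q : ℝ × ℝ => H (q.2, q.1)) (Icc (-Real.pi) Real.pi ×ˢ Icc x0 x) := by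
    apply hHc.comp continuous_swap.continuousOn
    intro q hq; exact ⟨hq.2, hq.1⟩
  have hFi : ∀ t ∈ Icc x0 x, IntervalIntegrable (fun y => ‖F (bkpt t y)‖) volume (-Real.pi) Real.pi := by
    intro t ht
    apply ContinuousOn.intervalIntegrable
    rw [uIcc_of_le hy]
    exact hN.comp (f := fun y : ℝ => (t, y)) (by fun_prop) fun y hyy => ⟨ht, hyy⟩
  have hQi : ∀ t ∈ Icc x0 x, IntervalIntegrable (fun y => 1 / (‖F (bkpt t y)‖ + 1) * ‖deriv F (bkpt t y)‖ ^ 2)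
      volume (-Real.pi) Real.pi := by
    intro t ht
    apply ContinuousOn.intervalIntegrable
    rw [uIcc_of_le hy]
    exact hQ.comp (f := fun y : ℝ => (t, y)) (by fun_prop) fun y hyy => ⟨ht, hyy⟩
  have hx0m : x0 ∈ Icc x0 x := left_mem_Icc.2 hx
  have hxm : x ∈ Icc x0 x := right_mem_Icc.2 hx
  have h1 : bkJ f x - bkJ f x0 ≤ ∫ y in (-Real.pi)..Real.pi, ∫ t in x0..x, H (t, y) := by
    have : bkJ f x - bkJ f x0 = ∫ y in (-Real.pi)..Real.pi, (‖F (bkpt x y)‖ - ‖F (bkpt x0 y)‖) :=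
      (intervalIntegral.integral_sub (hFi x hxm) (hFi x0 hx0m)).symm
    rw [this]
    apply intervalIntegral.integral_mono_on hy ((hFi x hxm).sub (hFi x0 hx0m)) (bk_int hy hx hHc')
    intro y hyy
    exact bk_path2 (c := fun t => F (bkpt t y)) (c' := fun t => deriv F (bkpt t y))
        hx (fun t ht => bk_dx bk_exp_open hFd (hmem t ht y hyy))
        ((hFd.deriv bk_exp_open).continuousOn.comp (f := fun t : ℝ => bkpt t y)
          (by unfold bkpt; fun_prop) (fun t ht => hmem t ht y hyy)) hl
  rw [bk_swap hx hy hHc] at h1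
  have hqi := bk_int hx hy hQ
  have h2 : ∫ t in x0..x, ∫ y in (-Real.pi)..Real.pi, H (t, y) ≤
      ∫ t in x0..x, (l * (∫ y in (-Real.pi)..Real.pi, 1 / (‖F (bkpt t y)‖ + 1) * ‖deriv F (bkpt t y)‖ ^ 2)
        + (S + 2 * Real.pi) / (4 * l)) := by
    apply intervalIntegral.integral_mono_on hx (bk_int hx hy hHc) ((hqi.const_mul l).add (by simp))
    intro t ht
    have e1 : ∫ y in (-Real.pi)..Real.pi, H (t, y) =
        l * (∫ y in (-Real.pi)..Real.pi, 1 / (‖F (bkpt t y)‖ + 1) * ‖deriv F (bkpt t y)‖ ^ 2)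
        + (bkJ f t + 2 * Real.pi) / (4 * l) := by
      simp only [hH]
      rw [intervalIntegral.integral_add ((hQi t ht).const_mul l)
        (((hFi t ht).add (by simp)).div_const _), intervalIntegral.integral_const_mul,
        intervalIntegral.integral_div, intervalIntegral.integral_add (hFi t ht) (by simp),
        intervalIntegral.integral_const, smul_eq_mul]
      unfold bkJ
      congr 3
      ring
    rw [e1]
    have := hS t ht
    gcongr
  rw [intervalIntegral.integral_add (hqi.const_mul l) (by simp), intervalIntegral.integral_const_mul,
    intervalIntegral.integral_const, smul_eq_mul] at h2
  have h3 := mul_le_mul_of_nonneg_left hbox hl.le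
  linarith

lemma bk_step {p : ℕ} {f : ℂ → ℂ} (hf : DifferentiableOn ℂ f (ball 0 1))
    (hp : PValentOn f (ball 0 1) p) {x0 x1 l M : ℝ} (hx : x0 ≤ x1) (hx0 : x1 < 0) (hl : 0 < l)
    (hM0 : 0 ≤ M) (hxl : x1 - x0 ≤ l)
    (hM : ∀ z : ℂ, ‖z‖ ≤ Real.exp x1 → ‖f z‖ ≤ M) :
    bkJ f x1 ≤ 4 / 3 * (bkJ f x0 + l * (p * (2 * Real.pi * M)) + Real.pi / 2) := by
  have hpi := Real.pi_pos
  set S := sSup (bkJ f '' Icc x0 x1) with hS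
  have hbdd : BddAbove (bkJ f '' Icc x0 x1) := by
    refine ⟨2 * Real.pi * M, ?_⟩
    rintro _ ⟨t, ht, rfl⟩
    exact bkJ_le fun z hz => hM z (hz.trans (Real.exp_le_exp.2 ht.2))
  have hle : ∀ t ∈ Icc x0 x1, bkJ f t ≤ S := fun t ht => le_csSup hbdd ⟨t, ht, rfl⟩
  have hS0 : 0 ≤ S := by
    refine le_trans ?_ (hle x1 (right_mem_Icc.2 hx))
    exact intervalIntegral.integral_nonneg (by linarith) fun y _ => norm_nonneg _
  have hSle : S ≤ bkJ f x0 + l * (p * (2 * Real.pi * M)) + (S + 2 * Real.pi) / 4 := by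
    apply csSup_le ((nonempty_Icc.2 hx).image _)
    rintro _ ⟨t, ht, rfl⟩
    refine (bk_step1 hf hp ht.1 (ht.2.trans_lt hx0) hl hM0
      (fun z hz => hM z (hz.trans (Real.exp_le_exp.2 ht.2)))
      (fun s hs => hle s ⟨hs.1, hs.2.trans ht.2⟩)).trans ?_
    have h1 : (t - x0) * ((S + 2 * Real.pi) / (4 * l)) ≤ l * ((S + 2 * Real.pi) / (4 * l)) := by
      gcongr
      linarith [ht.2]
    have h2 : l * ((S + 2 * Real.pi) / (4 * l)) = (S + 2 * Real.pi) / 4 := by field_simp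
    linarith
  have := hle x1 (right_mem_Icc.2 hx)
  linarith

lemma bk_mean (p : ℕ) (hp1 : 1 ≤ p) : ∃ D : ℝ, 0 < D ∧ ∀ f : ℂ → ℂ, DifferentiableOn ℂ f (ball 0 1) →
    PValentOn f (ball 0 1) p → (∀ i ≤ p, ‖iteratedDeriv i f 0‖ ≤ i !) →
    ∀ n : ℕ, bkJ f (Real.log (1 - (1 / 2) ^ (n + 1))) ≤ D * (2 ^ (2 * p - 1)) ^ (n + 1) := by
  have hpi := Real.pi_pos
  obtain ⟨C, hC1, hC⟩ := bk_growth p hp1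
  have hpR : (1 : ℝ) ≤ p := by exact_mod_cast hp1
  set q : ℝ := 2 ^ (2 * p - 1) with hq
  have hq2 : 2 ≤ q := by
    calc (2 : ℝ) = 2 ^ 1 := by norm_num
      _ ≤ _ := pow_le_pow_right₀ (by norm_num) (by omega)
  have hq4 : (2 : ℝ) ^ (2 * p) = 2 * q := by
    rw [hq, ← pow_succ']; congr 1; omega
  set E : ℝ := 2 * Real.pi * p * C * (2 * q) + Real.pi / 2 with hE
  have hE0 : 0 < E := by positivity
  refine ⟨2 * E, by positivity, ?_⟩
  intro f hf hp hm n
  have hbd : ∀ n : ℕ, ∀ z : ℂ, ‖z‖ ≤ Real.exp (Real.log (1 - (1 / 2) ^ (n + 1))) →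
      ‖f z‖ ≤ C * (2 * q) ^ (n + 1) := by
    intro n z hz
    have h1 : (1 / 2 : ℝ) ^ (n + 1) < 1 := pow_lt_one₀ (by norm_num) (by norm_num) (by omega)
    have h2 : (0 : ℝ) < (1 / 2 : ℝ) ^ (n + 1) := by positivity
    rw [Real.exp_log (by linarith)] at hz
    refine (hC f hf hp hm _ (by linarith) z hz).trans (le_of_eq ?_)
    have e0 : 1 / (1 / 2 : ℝ) ^ (n + 1) = 2 ^ (n + 1) := by rw [one_div_pow, one_div_one_div]
    rw [← hq4, sub_sub_cancel, e0, ← pow_mul, ← pow_mul, mul_comm (2 * p)]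
  induction n with
  | zero =>
    refine (bkJ_le (hbd 0)).trans ?_
    rw [zero_add, pow_one, pow_one]
    have h1 : 2 * Real.pi * (C * (2 * q)) ≤ E := by
      rw [hE]
      have : 2 * Real.pi * (C * (2 * q)) * 1 ≤ 2 * Real.pi * (C * (2 * q)) * p := by gcongr
      nlinarith
    nlinarith
  | succ n ih =>
    have h1 : (1 / 2 : ℝ) ^ (n + 1) ≤ 1 / 2 := by
      calc (1 / 2 : ℝ) ^ (n + 1) ≤ (1 / 2) ^ 1 :=
            pow_le_pow_of_le_one (by norm_num) (by norm_num) (by omega)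
        _ = _ := by norm_num
    set d : ℝ := (1 / 2 : ℝ) ^ (n + 1) with hd
    have hd0 : 0 < d := by positivity
    have hd1 : (1 / 2 : ℝ) ^ (n + 1 + 1) = d / 2 := by rw [pow_succ, hd]; ring
    have hb := hbd (n + 1)
    rw [hd1] at hb ⊢
    have hst := bk_step hf hp (x0 := Real.log (1 - d)) (x1 := Real.log (1 - d / 2)) (l := d)
      (Real.log_le_log (by linarith) (by linarith))
      (Real.log_neg (by linarith) (by linarith)) hd0 (by positivity) (by
        rw [← Real.log_div (by linarith) (by linarith)]
        have hpos : 0 < 1 - d := by linarith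
        refine (Real.log_le_sub_one_of_pos (div_pos (by linarith) hpos)).trans ?_
        rw [sub_le_iff_le_add, div_le_iff₀ hpos]
        nlinarith) hb
    have e1 : d * (p * (2 * Real.pi * (C * (2 * q) ^ (n + 1 + 1)))) =
        2 * Real.pi * p * C * (2 * q) * q ^ (n + 1) := by
      rw [pow_succ (2 * q), mul_pow, hd, one_div_pow]
      field_simp
    rw [e1] at hst
    have hqn : 1 ≤ q ^ (n + 1) := one_le_pow₀ (by linarith)
    have h2 : 2 * Real.pi * p * C * (2 * q) * q ^ (n + 1) + Real.pi / 2 ≤ E * q ^ (n + 1) := by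
      rw [hE, add_mul]
      have : Real.pi / 2 * 1 ≤ Real.pi / 2 * q ^ (n + 1) := by gcongr
      linarith
    have h3 : 2 * E * q ^ (n + 1 + 1) ≥ 2 * E * (q ^ (n + 1) * 2) := by
      rw [pow_succ]; gcongr
    linarith


lemma bk_coeff {f : ℂ → ℂ} {a : ℕ → ℂ}
    (ha : ∀ z ∈ ball (0 : ℂ) 1, HasSum (fun k => a k * z ^ k) (f z)) :
    HasFPowerSeriesAt f (FormalMultilinearSeries.ofScalars ℂ a) 0 := by
  rw [hasFPowerSeriesAt_iff]
  filter_upwards [ball_mem_nhds (0 : ℂ) one_pos] with z hz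
  have := ha z hz
  simpa [FormalMultilinearSeries.coeff_ofScalars, mul_comm] using this

lemma bk_coeff_deriv {f : ℂ → ℂ} {a : ℕ → ℂ}
    (ha : ∀ z ∈ ball (0 : ℂ) 1, HasSum (fun k => a k * z ^ k) (f z)) (k : ℕ) :
    iteratedDeriv k f 0 = a k * k ! := by
  have h1 := bk_coeff ha
  have h2 := h1.analyticAt.hasFPowerSeriesAt
  have h3 := congrArg (fun P => FormalMultilinearSeries.coeff P k) (h1.eq_formalMultilinearSeries h2)
  simp only [FormalMultilinearSeries.coeff_ofScalars] at h3
  have : (k ! : ℂ) ≠ 0 := by exact_mod_cast k.factorial_ne_zero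
  rw [h3]
  field_simp

lemma bk_coeff_le {f : ℂ → ℂ} {a : ℕ → ℂ} (hf : DifferentiableOn ℂ f (ball 0 1))
    (ha : ∀ z ∈ ball (0 : ℂ) 1, HasSum (fun k => a k * z ^ k) (f z)) (k : ℕ) {r : ℝ} (hr : 0 < r)
    (hr1 : r < 1) : ‖a k‖ ≤ (2 * Real.pi)⁻¹ * bkJ f (Real.log r) * r⁻¹ ^ k := by
  have hpi := Real.pi_pos
  have h1 := bk_coeff ha
  have h2 := DifferentiableOn.hasFPowerSeriesOnBall (R := ⟨r, hr.le⟩) (c := 0) (f := f)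
    (hf.mono (closedBall_subset_ball hr1)) hr
  have h3 := congrArg (fun P => FormalMultilinearSeries.coeff P k)
    (h1.eq_formalMultilinearSeries h2.hasFPowerSeriesAt)
  simp only [FormalMultilinearSeries.coeff_ofScalars] at h3
  rw [h3, ← FormalMultilinearSeries.norm_apply_eq_norm_coef]
  refine (norm_cauchyPowerSeries_le f 0 r k).trans (le_of_eq ?_)
  rw [abs_of_pos hr]
  congr 2
  have hper : Function.Periodic (fun y => ‖f (circleMap 0 r y)‖) (2 * Real.pi) := by
    intro y
    simp only
    rw [periodic_circleMap 0 r y]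
  have h4 := hper.intervalIntegral_add_eq 0 (-Real.pi)
  rw [zero_add, show -Real.pi + 2 * Real.pi = Real.pi by ring] at h4
  rw [h4]
  unfold bkJ
  have hcm : ∀ y : ℝ, Complex.exp (bkpt (Real.log r) y) = circleMap 0 r y := by
    intro y
    unfold bkpt circleMap
    rw [Complex.exp_add, ← Complex.ofReal_exp, Real.exp_log hr, zero_add]
  simp only [hcm]

lemma bk_final (p : ℕ) (hp1 : 1 ≤ p) : ∃ A : ℝ, 0 < A ∧ ∀ (f : ℂ → ℂ) (a : ℕ → ℂ),
    DifferentiableOn ℂ f (ball 0 1) → PValentOn f (ball 0 1) p →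
    (∀ z ∈ ball (0 : ℂ) 1, HasSum (fun k => a k * z ^ k) (f z)) → (∀ i ≤ p, ‖a i‖ ≤ 1) →
    ∀ k : ℕ, 1 ≤ k → ‖a k‖ ≤ A * (k : ℝ) ^ (2 * p - 1) := by
  have hpi := Real.pi_pos
  obtain ⟨D, hD0, hD⟩ := bk_mean p hp1
  refine ⟨(2 * Real.pi)⁻¹ * D * 4 ^ (2 * p - 1) * 2, by positivity, ?_⟩
  intro f a hf hp ha hm k hk
  have hm' : ∀ i ≤ p, ‖iteratedDeriv i f 0‖ ≤ i ! := by
    intro i hi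
    rw [bk_coeff_deriv ha, norm_mul, Complex.norm_natCast]
    have := hm i hi
    have h0 : (0 : ℝ) ≤ i ! := by positivity
    nlinarith
  set n := Nat.log 2 k + 1 with hn
  have h1 : 2 ^ Nat.log 2 k ≤ k := Nat.pow_log_le_self 2 (by omega)
  have h2 : k < 2 ^ (Nat.log 2 k + 1) := Nat.lt_pow_succ_log_self (by norm_num) k
  have h1' : (2 : ℝ) ^ (n + 1) ≤ 4 * k := by
    have : (2 : ℝ) ^ Nat.log 2 k ≤ k := by exact_mod_cast h1
    rw [hn, pow_succ, pow_succ]; linarith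
  have h2' : (2 * k : ℝ) ≤ 2 ^ (n + 1) := by
    have : (k : ℝ) ≤ 2 ^ n := by exact_mod_cast h2.le
    rw [pow_succ]; linarith
  set d : ℝ := (1 / 2) ^ (n + 1) with hd
  have hd0 : 0 < d := by positivity
  have hkd : k * d ≤ 1 / 2 := by
    rw [hd, one_div_pow, mul_one_div, div_le_iff₀ (by positivity)]
    linarith
  have hkR : (1 : ℝ) ≤ k := by exact_mod_cast hk
  have hd1 : d ≤ 1 / 2 := by nlinarith
  have hJ := hD f hf hp hm' n
  rw [← hd] at hJ
  refine (bk_coeff_le hf ha k (r := 1 - d) (by linarith) (by linarith)).trans ?_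
  have hb : 1 / 2 ≤ (1 - d) ^ k := by
    have := one_add_mul_le_pow (a := -d) (by linarith) k
    rw [← sub_eq_add_neg] at this
    linarith
  have hb' : (1 - d)⁻¹ ^ k ≤ 2 := by
    rw [inv_pow, inv_le_comm₀ (by linarith) (by norm_num)]
    linarith
  have hq : ((2 : ℝ) ^ (2 * p - 1)) ^ (n + 1) ≤ 4 ^ (2 * p - 1) * (k : ℝ) ^ (2 * p - 1) := by
    rw [← pow_mul, mul_comm, pow_mul, ← mul_pow]
    gcongr
  calc (2 * Real.pi)⁻¹ * bkJ f (Real.log (1 - d)) * (1 - d)⁻¹ ^ k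
      ≤ (2 * Real.pi)⁻¹ * (D * (4 ^ (2 * p - 1) * (k : ℝ) ^ (2 * p - 1))) * 2 := by
        have h5 : bkJ f (Real.log (1 - d)) ≤ D * (4 ^ (2 * p - 1) * (k : ℝ) ^ (2 * p - 1)) :=
          hJ.trans (mul_le_mul_of_nonneg_left hq hD0.le)
        have h6 : 0 ≤ (1 - d)⁻¹ ^ k := pow_nonneg (inv_nonneg.2 (by linarith)) _
        apply mul_le_mul _ hb' h6 (by positivity)
        exact mul_le_mul_of_nonneg_left h5 (by positivity)
    _ = _ := by ring

end BiernackiAux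

/-- Biernacki's theorem: for every `p ≥ 1` there is `A_p > 0` such that if
`f(z) = ∑ a_k z^k` is analytic and `p`-valent in the open unit disk, then for all `k ≥ p+1`,
`|a_k| ≤ A_p · (max_{0 ≤ i ≤ p} |a_i|) · k^{2p-1}`. -/
theorem biernacki (p : ℕ) (hp : 1 ≤ p) :
    ∃ A : ℝ, 0 < A ∧
      ∀ (f : ℂ → ℂ) (a : ℕ → ℂ),
        AnalyticOnNhd ℂ f (ball 0 1) →
        PValentOn f (ball 0 1) p →
        (∀ z ∈ ball (0 : ℂ) 1, HasSum (fun k => a k * z ^ k) (f z)) →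
        ∀ k : ℕ, p + 1 ≤ k →
          ‖a k‖ ≤ A * ((Finset.range (p + 1)).sup'
              (Finset.nonempty_range_iff.mpr (Nat.succ_ne_zero p)) fun i => ‖a i‖) *
            (k : ℝ) ^ (2 * p - 1) := by
  obtain ⟨A, hA0, hA⟩ := bk_final p hp
  refine ⟨A, hA0, ?_⟩
  intro f a hf hpv ha k hk
  set μ := (Finset.range (p + 1)).sup'
    (Finset.nonempty_range_iff.mpr (Nat.succ_ne_zero p)) fun i => ‖a i‖ with hμ
  have hle : ∀ i ≤ p, ‖a i‖ ≤ μ := fun i hi =>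
    Finset.le_sup' (fun i => ‖a i‖) (Finset.mem_range.2 (by omega))
  have hμ0 : 0 ≤ μ := (norm_nonneg _).trans (hle 0 (by omega))
  have key : ∀ m : ℝ, μ < m → ‖a k‖ ≤ A * m * (k : ℝ) ^ (2 * p - 1) := by
    intro m hm
    have hm0 : 0 < m := hμ0.trans_lt hm
    have hmC : (m : ℂ) ≠ 0 := by exact_mod_cast hm0.ne'
    have hnm : ‖(m : ℂ)‖ = m := by rw [Complex.norm_real, Real.norm_of_nonneg hm0.le]
    have h := hA (fun z => f z / m) (fun i => a i / m) (hf.differentiableOn.div_const _) (by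
      intro c s hs
      apply hpv (c * m) s
      intro t ht
      refine ⟨(hs t ht).1, ?_⟩
      rw [← (hs t ht).2]
      field_simp) (by
      intro z hz
      have := (ha z hz).div_const (m : ℂ)
      refine this.congr_fun ?_
      intro i
      ring) (by
      intro i hi
      rw [norm_div, hnm, div_le_one hm0]
      exact (hle i hi).trans hm.le) k (by omega)
    rw [norm_div, hnm, div_le_iff₀ hm0] at h
    linarith
  refine le_of_forall_pos_le_add fun ε hε => ?_
  have hP : 0 < A * (k : ℝ) ^ (2 * p - 1) := by
    have : (0 : ℝ) < k := by exact_mod_cast (by omega : 0 < k)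
    positivity
  refine (key (μ + ε / (A * (k : ℝ) ^ (2 * p - 1))) (by linarith [div_pos hε hP])).trans (le_of_eq ?_)
  have : (k : ℝ) ^ (2 * p - 1) ≠ 0 := fun h => by rw [h] at hP; simp at hP
  field_simp
end
end

section
/- For every positive integer p there exists a constant A'_p > 0, depending only on p, with the following property. Let 0 < β < α < 1, let B be an open Euclidean ball in ℂⁿ, and let f be analytic and sectionally p-valent in B. Then sup_{αB} |f| ≤ c_p(α, β) · sup_{βB} |f|, where αB and βB denote the concentric balls of radii scaled, respectively, by α and β, and c_p(α, β) = ( (p+1)·α^p + A'_p/(1−α)^{2p+1} ) / β^p. -/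
open Metric Set

noncomputable section

/-- `f` is sectionally `p`-valent in `W ⊆ ℂⁿ`: on every complex affine line
`L = {a + t·b : t ∈ ℂ}` (with `b ≠ 0`) and every `c ∈ ℂ`, the equation `f = c` has at most
`p` solutions on `L ∩ W`. -/
def SectionallyPValentOn {n : ℕ} (f : EuclideanSpace ℂ (Fin n) → ℂ)
    (W : Set (EuclideanSpace ℂ (Fin n))) (p : ℕ) : Prop :=
  ∀ a b : EuclideanSpace ℂ (Fin n), b ≠ 0 → ∀ c : ℂ, ∀ s : Finset ℂ,
    (∀ t ∈ s, a + t • b ∈ W ∧ f (a + t • b) = c) → s.card ≤ p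

lemma dpv_poisson_cont (w : ℂ) (hw : ‖w‖ < 1) :
    Continuous (fun θ : ℝ => poissonKernel 0 w (circleMap 0 1 θ)) := by
  unfold poissonKernel
  refine Continuous.div (by fun_prop) (by fun_prop) ?_
  intro θ h
  simp only [sub_zero] at h
  have h1 : circleMap 0 1 θ = w := by
    simpa [sub_eq_zero] using h
  have h2 : ‖circleMap 0 1 θ‖ = 1 := by simp
  rw [h1] at h2
  linarith

lemma dpv_poisson_nonneg (w : ℂ) (hw : ‖w‖ < 1) (θ : ℝ) :
    0 ≤ poissonKernel 0 w (circleMap 0 1 θ) := by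
  unfold poissonKernel
  apply div_nonneg _ (by positivity)
  have h2 : ‖circleMap 0 1 θ‖ = 1 := by simp
  simp only [sub_zero, h2]
  nlinarith [norm_nonneg w]

lemma dpv_poisson_re (w : ℂ) (hw : ‖w‖ < 1) (Q : ℂ → ℂ) (hQ : DiffContOnCl ℂ Q (ball 0 1)) :
    ∫ θ in (0 : ℝ)..(2 * Real.pi), poissonKernel 0 w (circleMap 0 1 θ) * (Q (circleMap 0 1 θ)).re
      = 2 * Real.pi * (Q w).re := by
  have h := hQ.circleAverage_poissonKernel_smul (w := w) (by simpa using hw)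
  rw [Real.circleAverage] at h
  have hQc : Continuous (fun θ : ℝ => Q (circleMap 0 1 θ)) := by
    apply hQ.continuousOn.comp_continuous (continuous_circleMap 0 1)
    intro θ
    rw [closure_ball 0 one_ne_zero]
    simp
  have hi : IntervalIntegrable (fun θ : ℝ => poissonKernel 0 w (circleMap 0 1 θ) •
      Q (circleMap 0 1 θ)) MeasureTheory.volume 0 (2 * Real.pi) :=
    ((dpv_poisson_cont w hw).smul hQc).intervalIntegrable _ _
  have h2 := Complex.reCLM.intervalIntegral_comp_comm hi
  simp only [Complex.reCLM_apply, Complex.smul_re, smul_eq_mul] at h2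
  rw [h2, ← h]
  simp only [Complex.smul_re, Pi.smul_apply', smul_eq_mul]
  field_simp

lemma dpv_poisson_int (w : ℂ) (hw : ‖w‖ < 1) :
    ∫ θ in (0 : ℝ)..(2 * Real.pi), poissonKernel 0 w (circleMap 0 1 θ) = 2 * Real.pi := by
  have := dpv_poisson_re w hw (fun _ => 1) diffContOnCl_const
  simpa using this

lemma dpv_approx (h : ℂ → ℝ) (hc : ContinuousOn h (sphere 0 1)) (ε : ℝ) (hε : 0 < ε) :
    ∃ Q : ℂ → ℂ, Differentiable ℂ Q ∧ ∀ z ∈ sphere (0 : ℂ) 1, |(Q z).re - h z| ≤ ε := by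
  have : Fact (0 < (2 * Real.pi)) := ⟨by positivity⟩
  have hspan : ∀ q ∈ Submodule.span ℂ (range (@fourier (2 * Real.pi))), ∀ c : ℂ,
      ∃ Q : ℂ → ℂ, Differentiable ℂ Q ∧ ∀ x : AddCircle (2 * Real.pi),
        (Q (AddCircle.toCircle x)).re = (c * q x).re := by
    intro q hq
    induction hq using Submodule.span_induction with
    | mem q hq =>
      obtain ⟨n, rfl⟩ := hq
      intro c
      rcases Int.eq_nat_or_neg n with ⟨k, rfl | rfl⟩
      · refine ⟨fun z => c * z ^ k, by fun_prop, fun x => ?_⟩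
        simp [fourier_apply, AddCircle.toCircle_nsmul]
      · refine ⟨fun z => (starRingEnd ℂ) c * z ^ k, by fun_prop, fun x => ?_⟩
        have hx : (c * fourier (-(k : ℤ)) x) =
            (starRingEnd ℂ) ((starRingEnd ℂ) c * (AddCircle.toCircle x : ℂ) ^ k) := by
          rw [fourier_apply, neg_smul, natCast_zsmul, AddCircle.toCircle_neg,
            AddCircle.toCircle_nsmul, Circle.coe_inv_eq_conj, Circle.coe_pow, map_mul,
            Complex.conj_conj]
        rw [hx, Complex.conj_re]
    | zero => exact fun c => ⟨fun _ => 0, by fun_prop, by simp⟩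
    | add q r _ _ hq hr =>
      intro c
      obtain ⟨Q, hQ, hQ'⟩ := hq c
      obtain ⟨R, hR, hR'⟩ := hr c
      refine ⟨fun z => Q z + R z, by fun_prop, fun x => ?_⟩
      simp only [Complex.add_re, hQ', hR', ContinuousMap.add_apply, mul_add]
    | smul a q _ hq =>
      intro c
      obtain ⟨Q, hQ, hQ'⟩ := hq (c * a)
      refine ⟨Q, hQ, fun x => ?_⟩
      rw [hQ', ContinuousMap.smul_apply, smul_eq_mul, mul_assoc]
  let H : C(AddCircle (2 * Real.pi), ℂ) :=
    ⟨fun x => (h (AddCircle.toCircle x) : ℂ), by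
      apply Complex.continuous_ofReal.comp
      apply hc.comp_continuous (continuous_subtype_val.comp AddCircle.continuous_toCircle)
      intro x; exact (AddCircle.toCircle x).2⟩
  have hH : H ∈ (Submodule.span ℂ (range (@fourier (2 * Real.pi)))).topologicalClosure := by
    rw [span_fourier_closure_eq_top]; trivial
  obtain ⟨q, hq, hd⟩ := Metric.mem_closure_iff.1 hH ε hε
  obtain ⟨Q, hQ, hQ'⟩ := hspan q hq 1
  refine ⟨Q, hQ, fun z hz => ?_⟩
  obtain ⟨x, hx⟩ : ∃ x : AddCircle (2 * Real.pi), (AddCircle.toCircle x : ℂ) = z := by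
    obtain ⟨x, hx⟩ := (AddCircle.homeomorphCircle (T := 2 * Real.pi) (by positivity)).surjective
      (⟨z, by simpa [Submonoid.unitSphere] using hz⟩ : Circle)
    refine ⟨x, ?_⟩
    rw [AddCircle.homeomorphCircle_apply] at hx
    rw [hx]
  rw [← hx, hQ' x, one_mul]
  have h1 := ContinuousMap.dist_apply_le_dist x (f := H) (g := q)
  have h2 : |(q x - H x).re| ≤ ‖q x - H x‖ := Complex.abs_re_le_norm _
  rw [← dist_eq_norm, dist_comm] at h2
  have h3 : (q x - H x).re = (q x).re - h (AddCircle.toCircle x) := by simp [H]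
  rw [h3] at h2
  linarith

lemma dpv_subharmonic (g : ℂ → ℂ) (hg : DiffContOnCl ℂ g (ball 0 1)) (h : ℂ → ℝ)
    (hc : ContinuousOn h (sphere 0 1)) (hgh : ∀ z ∈ sphere (0 : ℂ) 1, ‖g z‖ ≤ Real.exp (h z))
    (w : ℂ) (hw : ‖w‖ < 1) :
    ‖g w‖ ≤ Real.exp ((1 / (2 * Real.pi)) * ∫ θ in (0 : ℝ)..(2 * Real.pi),
      poissonKernel 0 w (circleMap 0 1 θ) * h (circleMap 0 1 θ)) := by
  set J := ∫ θ in (0 : ℝ)..(2 * Real.pi),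
      poissonKernel 0 w (circleMap 0 1 θ) * h (circleMap 0 1 θ) with hJ
  have key : ∀ ε : ℝ, 0 < ε → ‖g w‖ ≤ Real.exp ((1 / (2 * Real.pi)) * J + ε) := by
    intro ε hε
    obtain ⟨Q, hQ, hQh⟩ := dpv_approx h hc (ε / 2) (by positivity)
    have hb : ‖g w * Complex.exp (-Q w)‖ ≤ Real.exp (ε / 2) := by
      apply Complex.norm_le_of_forall_mem_frontier_norm_le (U := ball 0 1) isBounded_ball
        (f := fun z => g z * Complex.exp (-Q z))
      · exact hg.smul (Differentiable.diffContOnCl (by fun_prop))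
      · intro z hz
        rw [frontier_ball 0 one_ne_zero] at hz
        rw [norm_mul, Complex.norm_exp]
        calc ‖g z‖ * Real.exp ((-Q z).re) ≤ Real.exp (h z) * Real.exp ((-Q z).re) := by
              gcongr; exact hgh z hz
          _ ≤ _ := by
              rw [← Real.exp_add, Real.exp_le_exp, Complex.neg_re]
              have := (abs_le.1 (hQh z hz)).1
              linarith
      · exact subset_closure (by simpa using hw)
    rw [norm_mul, Complex.norm_exp, Complex.neg_re, Real.exp_neg, ← div_eq_mul_inv,
      div_le_iff₀ (Real.exp_pos _), ← Real.exp_add] at hb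
    refine hb.trans (Real.exp_le_exp.2 ?_)
    have h1 := dpv_poisson_re w hw Q (Differentiable.diffContOnCl hQ)
    have h2 : ∫ θ in (0 : ℝ)..(2 * Real.pi),
        poissonKernel 0 w (circleMap 0 1 θ) * (Q (circleMap 0 1 θ)).re ≤
        ∫ θ in (0 : ℝ)..(2 * Real.pi),
          (poissonKernel 0 w (circleMap 0 1 θ) * h (circleMap 0 1 θ) +
          (ε / 2) * poissonKernel 0 w (circleMap 0 1 θ)) := by
      have hPc := dpv_poisson_cont w hw
      have hhc : Continuous (fun θ : ℝ => h (circleMap 0 1 θ)) :=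
        hc.comp_continuous (continuous_circleMap 0 1) (by simp)
      have hQc := hQ.continuous
      apply intervalIntegral.integral_mono_on (by positivity)
      · apply Continuous.intervalIntegrable; fun_prop
      · apply Continuous.intervalIntegrable
        exact (hPc.mul hhc).add (continuous_const.mul hPc)
      · intro θ _
        have := (abs_le.1 (hQh (circleMap 0 1 θ) (by simp))).2
        nlinarith [dpv_poisson_nonneg w hw θ]
    rw [h1, intervalIntegral.integral_add, intervalIntegral.integral_const_mul,
      dpv_poisson_int w hw, ← hJ] at h2
    · have : (Q w).re ≤ 1 / (2 * Real.pi) * J + ε / 2 := by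
        have hpi : 0 < 2 * Real.pi := by positivity
        rw [← mul_le_mul_iff_right₀ hpi]
        refine h2.trans (le_of_eq ?_)
        field_simp
      linarith
    · apply Continuous.intervalIntegrable
      exact (dpv_poisson_cont w hw).mul
        (hc.comp_continuous (continuous_circleMap 0 1) (by simp))
    · apply Continuous.intervalIntegrable
      exact continuous_const.mul (dpv_poisson_cont w hw)
  have hlim : Filter.Tendsto (fun ε : ℝ => Real.exp ((1 / (2 * Real.pi)) * J + ε))
      (nhdsWithin 0 (Ioi 0)) (nhds (Real.exp ((1 / (2 * Real.pi)) * J + 0))) :=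
    (Continuous.tendsto (by fun_prop) 0).mono_left nhdsWithin_le_nhds
  rw [add_zero] at hlim
  apply ge_of_tendsto hlim
  filter_upwards [self_mem_nhdsWithin] with ε hε
  exact key ε hε

lemma dpv_sub2 (f : ℂ → ℂ) (hf : DiffContOnCl ℂ f (ball 0 1)) (w : ℂ) (hw : ‖w‖ < 1) :
    2 * Real.pi * ((1 / 2) * Real.log (1 + ‖f w‖ ^ 2)) ≤ ∫ θ in (0 : ℝ)..(2 * Real.pi),
      poissonKernel 0 w (circleMap 0 1 θ) *
        ((1 / 2) * Real.log (1 + ‖f (circleMap 0 1 θ)‖ ^ 2)) := by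
  set h : ℂ → ℝ := fun z => (1 / 2) * Real.log (1 + ‖f z‖ ^ 2) with hh
  have hexp : ∀ z, Real.exp (h z) ^ 2 = 1 + ‖f z‖ ^ 2 := by
    intro z
    rw [← Real.exp_nat_mul, hh]
    simp only [Nat.cast_ofNat]
    rw [← mul_assoc]
    norm_num
    rw [Real.exp_log (by positivity)]
  have hfc : ContinuousOn f (sphere 0 1) := hf.continuousOn.mono (by
    rw [closure_ball 0 one_ne_zero]; exact sphere_subset_closedBall)
  have hhc : ContinuousOn h (sphere 0 1) := by
    apply ContinuousOn.mul continuousOn_const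
    apply ContinuousOn.log (by fun_prop)
    intro z _; positivity
  have hb : ∀ z ∈ sphere (0 : ℂ) 1, ‖1 + (starRingEnd ℂ) (f w) * f z‖ ≤ Real.exp (h w + h z) := by
    intro z _
    rw [Real.exp_add]
    apply le_of_sq_le_sq _ (by positivity)
    rw [mul_pow, hexp, hexp]
    have h1 : ‖1 + (starRingEnd ℂ) (f w) * f z‖ ≤ 1 + ‖f w‖ * ‖f z‖ := by
      refine (norm_add_le _ _).trans ?_
      simp
    have h2 := pow_le_pow_left₀ (norm_nonneg _) h1 2
    nlinarith [sq_nonneg (‖f w‖ - ‖f z‖)]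
  have hsub := dpv_subharmonic (fun z => 1 + (starRingEnd ℂ) (f w) * f z)
    ((hf.const_smul ((starRingEnd ℂ) (f w))).const_add 1) (fun z => h w + h z)
    (by fun_prop) hb w hw
  have hgw : ‖1 + (starRingEnd ℂ) (f w) * f w‖ = Real.exp (2 * h w) := by
    have : (1 + (starRingEnd ℂ) (f w) * f w) = ((1 + ‖f w‖ ^ 2 : ℝ) : ℂ) := by
      rw [Complex.conj_mul']; push_cast; ring
    rw [this, Complex.norm_real, Real.norm_of_nonneg (by positivity), ← hexp, ← Real.exp_nat_mul]
    norm_num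
  rw [hgw, Real.exp_le_exp] at hsub
  have hPc := dpv_poisson_cont w hw
  have hhc' : Continuous (fun θ : ℝ => h (circleMap 0 1 θ)) :=
    hhc.comp_continuous (continuous_circleMap 0 1) (by simp)
  have hi : ∫ θ in (0 : ℝ)..(2 * Real.pi), poissonKernel 0 w (circleMap 0 1 θ) *
      (h w + h (circleMap 0 1 θ)) = h w * (2 * Real.pi) + ∫ θ in (0 : ℝ)..(2 * Real.pi),
      poissonKernel 0 w (circleMap 0 1 θ) * h (circleMap 0 1 θ) := by
    have hc : h w * (2 * Real.pi) = ∫ θ in (0 : ℝ)..(2 * Real.pi),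
        h w * poissonKernel 0 w (circleMap 0 1 θ) := by
      rw [intervalIntegral.integral_const_mul, dpv_poisson_int w hw]
    rw [hc, ← intervalIntegral.integral_add]
    · congr 1; ext θ; ring
    · exact (continuous_const.mul hPc).intervalIntegrable _ _
    · exact (hPc.mul hhc').intervalIntegrable _ _
  rw [hi] at hsub
  change 2 * Real.pi * h w ≤ ∫ θ in (0 : ℝ)..(2 * Real.pi),
      poissonKernel 0 w (circleMap 0 1 θ) * h (circleMap 0 1 θ)
  set J := ∫ θ in (0 : ℝ)..(2 * Real.pi),
      poissonKernel 0 w (circleMap 0 1 θ) * h (circleMap 0 1 θ)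
  have hpi : 0 < 2 * Real.pi := by positivity
  rw [← mul_le_mul_iff_right₀ hpi] at hsub
  have : 2 * Real.pi * (1 / (2 * Real.pi) * (h w * (2 * Real.pi) + J)) =
    h w * (2 * Real.pi) + J := by field_simp
  linarith

lemma dpv_kernel_re (a : ℂ) : ((1 + a) / (1 - a)).re = (1 - ‖a‖ ^ 2) / ‖1 - a‖ ^ 2 := by
  have h := congrFun (poissonKernel_eq_re_herglotzRieszKernel (c := 0) (w := a)) 1
  simp only [poissonKernel, herglotzRieszKernel, Function.comp_apply, sub_zero] at h
  rw [← h]; simp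

lemma dpv_kernel_sq (a : ℂ) (ha : ‖a‖ < 1) : ‖(1 + a) / (1 - a)‖ ^ 2 =
    2 * (1 + ‖a‖ ^ 2) / (1 - ‖a‖ ^ 2) * ((1 + a) / (1 - a)).re - 1 := by
  have h1 : 1 - a ≠ 0 := by
    intro h
    rw [← sub_eq_zero.1 h] at ha
    simp at ha
  have h2 : ‖1 - a‖ ^ 2 ≠ 0 := by simpa using h1
  have h3 : 1 - ‖a‖ ^ 2 ≠ 0 := by nlinarith [norm_nonneg a]
  have h4 : ‖1 + a‖ ^ 2 = 2 * (1 + ‖a‖ ^ 2) - ‖1 - a‖ ^ 2 := by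
    simp only [Complex.sq_norm, Complex.normSq_apply, Complex.add_re, Complex.add_im,
      Complex.sub_re, Complex.sub_im, Complex.one_re, Complex.one_im]
    ring
  rw [dpv_kernel_re, norm_div, div_pow, h4]
  field_simp

/-- the kernel in logarithmic coordinates -/
noncomputable def dpvK (w ζ : ℂ) : ℂ :=
  (1 + (starRingEnd ℂ) w * Complex.exp ζ) / (1 - (starRingEnd ℂ) w * Complex.exp ζ)

lemma dpv_exp (x y : ℝ) : Complex.exp (x + y * Complex.I) = Real.exp x * circleMap 0 1 y := by
  rw [Complex.exp_add, circleMap]; simp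

lemma dpvK_re (w : ℂ) (x y : ℝ) :
    (dpvK w (x + y * Complex.I)).re = poissonKernel 0 (Real.exp x * w) (circleMap 0 1 y) := by
  unfold dpvK
  rw [dpv_kernel_re, dpv_exp, poissonKernel]
  have hu : ‖circleMap 0 1 y‖ = 1 := by simp
  have h2 : ‖1 - (starRingEnd ℂ) w * (Real.exp x * circleMap 0 1 y)‖ =
      ‖circleMap 0 1 y - Real.exp x * w‖ := by
    have hc : circleMap 0 1 y * (starRingEnd ℂ) (circleMap 0 1 y) = 1 := by
      rw [Complex.mul_conj', hu]; simp
    have : circleMap 0 1 y * (starRingEnd ℂ) (1 - (starRingEnd ℂ) w * (Real.exp x * circleMap 0 1 y))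
        = circleMap 0 1 y - Real.exp x * w := by
      rw [map_sub, map_mul, map_mul, Complex.conj_conj, Complex.conj_ofReal, map_one]
      linear_combination (-(Real.exp x : ℂ) * w) * hc
    rw [← this, norm_mul, hu, Complex.norm_conj, one_mul]
  simp only [sub_zero, h2, hu, norm_mul, Complex.norm_conj, Complex.norm_real]
  congr 1; ring

lemma dpvK_sq_int (w : ℂ) (hw : ‖w‖ < 1) (x : ℝ) (hx : x ≤ 0) :
    ∫ y in (0 : ℝ)..(2 * Real.pi), ‖dpvK w (x + y * Complex.I)‖ ^ 2 =
      2 * Real.pi * (1 + 4 * (Real.exp x * ‖w‖) ^ 2 / (1 - (Real.exp x * ‖w‖) ^ 2)) := by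
  have hex : Real.exp x ≤ 1 := Real.exp_le_one_iff.2 hx
  have hn : ‖(Real.exp x : ℂ) * w‖ = Real.exp x * ‖w‖ := by
    rw [norm_mul, Complex.norm_real, Real.norm_of_nonneg (Real.exp_pos x).le]
  have hlt : Real.exp x * ‖w‖ < 1 := by nlinarith [norm_nonneg w, Real.exp_pos x]
  have h1 : ∀ y : ℝ, ‖dpvK w (x + y * Complex.I)‖ ^ 2 =
      2 * (1 + (Real.exp x * ‖w‖) ^ 2) / (1 - (Real.exp x * ‖w‖) ^ 2) *
        poissonKernel 0 (Real.exp x * w) (circleMap 0 1 y) - 1 := by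
    intro y
    have ha : ‖(starRingEnd ℂ) w * Complex.exp (x + y * Complex.I)‖ = Real.exp x * ‖w‖ := by
      rw [dpv_exp, norm_mul, norm_mul, Complex.norm_conj, Complex.norm_real,
        Real.norm_of_nonneg (Real.exp_pos x).le]
      simp [mul_comm]
    have := dpv_kernel_sq ((starRingEnd ℂ) w * Complex.exp (x + y * Complex.I)) (by rw [ha]; exact hlt)
    rw [ha] at this
    rw [← dpvK_re]
    exact this
  simp_rw [h1]
  rw [intervalIntegral.integral_sub, intervalIntegral.integral_const_mul,
    dpv_poisson_int _ (by rw [hn]; exact hlt)]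
  · have : 1 - (Real.exp x * ‖w‖) ^ 2 ≠ 0 := by
      have : 0 ≤ Real.exp x * ‖w‖ := by positivity
      nlinarith
    simp only [intervalIntegral.integral_const, smul_eq_mul]
    generalize Real.exp x * ‖w‖ = ρ at this
    field_simp
    ring
  · exact (continuous_const.mul (dpv_poisson_cont _ (by rw [hn]; exact hlt))).intervalIntegrable _ _
  · exact continuous_const.intervalIntegrable _ _

lemma dpv_x_int (r β : ℝ) (hr : 0 ≤ r) (hr1 : r < 1) (hβ : 0 < β) (hβ1 : β < 1) :
    ∫ x in (Real.log β)..0, (1 + 4 * (Real.exp x * r) ^ 2 / (1 - (Real.exp x * r) ^ 2)) ≤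
      Real.log (1 / β) + 2 * Real.log (1 / (1 - r ^ 2)) := by
  have hlog : Real.log β < 0 := Real.log_neg hβ hβ1
  have hpos : ∀ x : ℝ, x ≤ 0 → 0 < 1 - (Real.exp x * r) ^ 2 := by
    intro x hx
    have : Real.exp x ≤ 1 := Real.exp_le_one_iff.2 hx
    have h0 : 0 ≤ Real.exp x * r := by positivity
    have : Real.exp x * r < 1 := by nlinarith [Real.exp_pos x]
    nlinarith
  rw [intervalIntegral.integral_eq_sub_of_hasDerivAt
    (f := fun x => x - 2 * Real.log (1 - (Real.exp x * r) ^ 2))]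
  · have h1 : Real.log (1 - (β * r) ^ 2) ≤ 0 := by
      have := hpos (Real.log β) hlog.le
      rw [Real.exp_log hβ] at this
      exact Real.log_nonpos this.le (by nlinarith [sq_nonneg (β * r)])
    rw [Real.exp_log hβ, Real.exp_zero, one_mul, one_div, one_div, Real.log_inv, Real.log_inv]
    linarith
  · intro x hx
    rw [uIcc_of_le hlog.le] at hx
    have hp := hpos x hx.2
    have h1 := ((((Real.hasDerivAt_exp x).mul_const r).pow 2).const_sub 1).log hp.ne'
    refine ((hasDerivAt_id x).sub (h1.const_mul 2)).congr_deriv ?_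
    simp
    ring
  · apply ContinuousOn.intervalIntegrable
    apply ContinuousOn.add continuousOn_const
    apply ContinuousOn.div (by fun_prop) (by fun_prop)
    intro x hx
    rw [uIcc_of_le hlog.le] at hx
    exact (hpos x hx.2).ne'

lemma dpv_det (a : ℂ) :
    ((ContinuousLinearMap.toSpanSingleton ℂ a).restrictScalars ℝ : ℂ →L[ℝ] ℂ).det = ‖a‖ ^ 2 := by
  have h := Algebra.norm_complex_apply a
  rw [Algebra.norm_apply, Complex.normSq_eq_norm_sq] at h
  rw [← h, ContinuousLinearMap.det]
  congr 1
  ext x <;> simp [mul_comm]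

open MeasureTheory in
lemma dpv_area (p : ℕ) (U : Set ℂ) (hU : IsOpen U) (g g' : ℂ → ℂ)
    (hg : ∀ z ∈ U, HasStrictDerivAt g (g' z) z) (hc : ContinuousOn g' U)
    (hp : ∀ c : ℂ, ∀ s : Finset ℂ, (∀ t ∈ s, t ∈ U ∧ g t = c) → s.card ≤ p)
    (φ : ℂ → ENNReal) (hφ : Measurable φ) (T : Set ℂ) (hT : MeasurableSet T)
    (hUT : ∀ z ∈ U, g z ∈ T) :
    ∫⁻ z in U, ENNReal.ofReal (‖g' z‖ ^ 2) * φ (g z) ≤ p * ∫⁻ w in T, φ w := by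
  classical
  set S : Set ℂ := U ∩ g' ⁻¹' {0}ᶜ with hS
  have hSo : IsOpen S := hc.isOpen_inter_preimage hU isOpen_compl_singleton
  have hSU : S ⊆ U := inter_subset_left
  -- local injectivity
  have hloc : ∀ z ∈ S, ∃ N ∈ nhds z, IsOpen N ∧ InjOn g N := by
    intro z hz
    have hd := (hg z (hSU hz)).hasStrictFDerivAt_equiv hz.2
    refine ⟨(hd.toOpenPartialHomeomorph g).source, ?_, (hd.toOpenPartialHomeomorph g).open_source, ?_⟩
    · exact (hd.toOpenPartialHomeomorph g).open_source.mem_nhds hd.mem_toOpenPartialHomeomorph_source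
    · exact (hd.toOpenPartialHomeomorph g).injOn
  choose! N hN hNo hNi using hloc
  obtain ⟨C, hCS, hCc, hCU⟩ := TopologicalSpace.countable_cover_nhdsWithin
    (f := N) (s := S) (fun x hx => mem_nhdsWithin_of_mem_nhds (hN x hx))
  rcases C.eq_empty_or_nonempty with hCe | hCne
  · have hSe : S = ∅ := by simpa [hCe] using hCU
    have : ∫⁻ z in U, ENNReal.ofReal (‖g' z‖ ^ 2) * φ (g z) = 0 := by
      rw [setLIntegral_congr_fun (g := fun _ => 0) hU.measurableSet]
      · simp
      · intro z hz
        have : g' z = 0 := by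
          by_contra h
          have : z ∈ S := ⟨hz, h⟩
          simp [hSe] at this
        simp [this]
    rw [this]; exact bot_le
  obtain ⟨e, he⟩ := hCc.exists_eq_range hCne
  have heS : ∀ i, e i ∈ S := fun i => hCS (he ▸ mem_range_self i)
  set A : ℕ → Set ℂ := disjointed (fun i => N (e i) ∩ S) with hA
  have hAm : ∀ i, MeasurableSet (A i) := fun i =>
    MeasurableSet.disjointed (fun j => ((hNo _ (heS j)).inter hSo).measurableSet) i
  have hAd : Pairwise (Function.onFun Disjoint A) := disjoint_disjointed _
  have hAN : ∀ i, A i ⊆ N (e i) ∩ S := fun i => disjointed_subset _ i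
  have hAU : ⋃ i, A i = S := by
    rw [hA, iUnion_disjointed]
    apply subset_antisymm
    · exact iUnion_subset fun i => inter_subset_right
    · intro z hz
      have := hCU hz
      rw [he] at this
      simp only [mem_range, iUnion_exists, iUnion_iUnion_eq', mem_iUnion] at this
      obtain ⟨i, hi⟩ := this
      exact mem_iUnion.2 ⟨i, hi, hz⟩
  have hder : ∀ i, ∀ x ∈ A i, HasFDerivWithinAt g
      ((ContinuousLinearMap.toSpanSingleton ℂ (g' x)).restrictScalars ℝ : ℂ →L[ℝ] ℂ) (A i) x := by
    intro i x hx
    exact ((hg x (hSU (hAN i hx).2)).hasDerivAt.hasFDerivAt.restrictScalars ℝ).hasFDerivWithinAt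
  have hinj : ∀ i, InjOn g (A i) := fun i =>
    (hNi _ (heS i)).mono ((hAN i).trans inter_subset_left)
  have him : ∀ i, MeasurableSet (g '' A i) := fun i =>
    measurable_image_of_fderivWithin (hAm i) (hder i) (hinj i)
  have h1 : ∫⁻ z in U, ENNReal.ofReal (‖g' z‖ ^ 2) * φ (g z)
      = ∫⁻ z in S, ENNReal.ofReal (‖g' z‖ ^ 2) * φ (g z) := by
    rw [← lintegral_indicator hU.measurableSet, ← lintegral_indicator hSo.measurableSet]
    congr 1
    ext z
    by_cases hz : z ∈ S
    · simp [hz, hSU hz]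
    · by_cases hzU : z ∈ U
      · have : g' z = 0 := by
          by_contra h
          exact hz ⟨hzU, h⟩
        simp [hz, hzU, this]
      · simp [hz, hzU]
  rw [h1, ← hAU, lintegral_iUnion hAm hAd]
  have h2 : ∀ i, ∫⁻ z in A i, ENNReal.ofReal (‖g' z‖ ^ 2) * φ (g z)
      = ∫⁻ w, (g '' A i).indicator φ w := by
    intro i
    rw [lintegral_indicator (him i),
      lintegral_image_eq_lintegral_abs_det_fderiv_mul volume (hAm i) (hder i) (hinj i)]
    simp only [dpv_det, abs_pow, abs_norm]
  simp_rw [h2]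
  rw [← lintegral_tsum (fun i => (hφ.indicator (him i)).aemeasurable),
    ← lintegral_const_mul _ hφ, ← lintegral_indicator hT]
  apply lintegral_mono
  intro w
  apply ENNReal.tsum_le_of_sum_range_le
  intro n
  set F := (Finset.range n).filter (fun i => w ∈ g '' A i) with hF
  have hsum : ∑ i ∈ Finset.range n, (g '' A i).indicator φ w = F.card * φ w := by
    rw [hF, Finset.card_filter]
    push_cast
    rw [Finset.sum_mul]
    apply Finset.sum_congr rfl
    intro i _
    by_cases h : w ∈ g '' A i
    · rw [indicator_of_mem h, if_pos h, one_mul]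
    · rw [indicator_of_notMem h, if_neg h, zero_mul]
  rw [hsum]
  by_cases hFe : F = ∅
  · simp [hFe]
  obtain ⟨i0, hi0⟩ := Finset.nonempty_iff_ne_empty.2 hFe
  have hwT : w ∈ T := by
    obtain ⟨z, hz, rfl⟩ := (Finset.mem_filter.1 hi0).2
    exact hUT z (hSU (hAN _ hz).2)
  rw [indicator_of_mem hwT]
  gcongr
  have : ∀ i, ∃ z, i ∈ F → z ∈ A i ∧ g z = w := by
    intro i
    by_cases h : i ∈ F
    · obtain ⟨z, hz, hh⟩ := (Finset.mem_filter.1 h).2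
      exact ⟨z, fun _ => ⟨hz, hh⟩⟩
    · exact ⟨0, fun h' => absurd h' h⟩
  choose ζ hζ using this
  have hinjζ : InjOn ζ F := by
    intro i hi j hj hij
    by_contra hne
    exact disjoint_left.1 (hAd hne) (hζ i hi).1 (hij ▸ (hζ j hj).1)
  rw [← Finset.card_image_of_injOn hinjζ]
  apply hp w
  intro t ht
  obtain ⟨i, hi, rfl⟩ := Finset.mem_image.1 ht
  exact ⟨hSU (hAN i (hζ i hi).1).2, (hζ i hi).2⟩

open MeasureTheory in
lemma dpv_radial (M : ℝ) (hM : 0 ≤ M) :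
    ∫⁻ w in closedBall (0 : ℂ) M, ENNReal.ofReal (1 / (1 + ‖w‖ ^ 2))
      ≤ ENNReal.ofReal (Real.pi * Real.log (1 + M ^ 2)) := by
  rw [← lintegral_indicator measurableSet_closedBall, ← Complex.lintegral_comp_polarCoord_symm]
  have h1 : ∀ q ∈ polarCoord.target, ENNReal.ofReal q.1 • (closedBall (0 : ℂ) M).indicator
      (fun w => ENNReal.ofReal (1 / (1 + ‖w‖ ^ 2))) (Complex.polarCoord.symm q)
      = (Ioc (0 : ℝ) M ×ˢ Ioo (-Real.pi) Real.pi).indicator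
        (fun q => ENNReal.ofReal (q.1 / (1 + q.1 ^ 2))) q := by
    rintro ⟨r, θ⟩ hq
    simp only [polarCoord_target, mem_prod, mem_Ioi] at hq
    have hn : ‖Complex.polarCoord.symm (r, θ)‖ = r := by
      rw [Complex.norm_polarCoord_symm]; exact abs_of_pos hq.1
    by_cases h : r ≤ M
    · rw [indicator_of_mem (by rw [mem_closedBall_zero_iff, hn]; exact h), indicator_of_mem (by simp [hq.1, h]; exact hq.2),
        hn, smul_eq_mul, ← ENNReal.ofReal_mul hq.1.le]
      congr 1; simp; ring
    · rw [indicator_of_notMem (by rw [mem_closedBall_zero_iff, hn]; exact h), indicator_of_notMem (by simp [h])]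
      simp
  rw [setLIntegral_congr_fun polarCoord.open_target.measurableSet h1]
  refine (setLIntegral_le_lintegral _ _).trans ?_
  rw [lintegral_indicator (measurableSet_Ioc.prod measurableSet_Ioo)]
  have hm : Measurable (fun r : ℝ => ENNReal.ofReal (r / (1 + r ^ 2))) := by fun_prop
  have : ∫⁻ q in Ioc (0 : ℝ) M ×ˢ Ioo (-Real.pi) Real.pi, ENNReal.ofReal (q.1 / (1 + q.1 ^ 2))
      = (∫⁻ r in Ioc (0 : ℝ) M, ENNReal.ofReal (r / (1 + r ^ 2))) * ENNReal.ofReal (2 * Real.pi) := by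
    rw [Measure.volume_eq_prod, ← Measure.prod_restrict, lintegral_prod _ (by fun_prop)]
    simp only [lintegral_const, Measure.restrict_apply_univ, Real.volume_Ioo]
    rw [lintegral_mul_const _ hm]
    congr 2; ring
  rw [this]
  have hpos : ∀ r : ℝ, (1 + r ^ 2) ≠ 0 := fun r => by positivity
  have hcont : Continuous (fun r : ℝ => r / (1 + r ^ 2)) := by fun_prop (disch := assumption)
  have hint : ∫ r in (0 : ℝ)..M, r / (1 + r ^ 2) = (1 / 2) * Real.log (1 + M ^ 2) := by
    rw [intervalIntegral.integral_eq_sub_of_hasDerivAt (f := fun r => (1 / 2) * Real.log (1 + r ^ 2))]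
    · simp
    · intro r _
      have := (((hasDerivAt_pow 2 r).const_add 1).log (hpos r)).const_mul (1 / 2)
      refine this.congr_deriv ?_
      simp; ring
    · exact hcont.intervalIntegrable _ _
  rw [← ofReal_integral_eq_lintegral_ofReal
    (hcont.integrableOn_Icc.mono_set Ioc_subset_Icc_self), ← intervalIntegral.integral_of_le hM,
    hint, ← ENNReal.ofReal_mul]
  · apply le_of_eq; congr 1; ring
  · apply mul_nonneg (by norm_num); apply Real.log_nonneg; nlinarith [sq_nonneg M]
  · filter_upwards [ae_restrict_mem measurableSet_Ioc] with r hr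
    have := hr.1
    simp only [Pi.zero_apply]; positivity

open MeasureTheory in
lemma dpv_energy (p : ℕ) (f : ℂ → ℂ) (hf : AnalyticOnNhd ℂ f (closedBall 0 1))
    (hp : ∀ c : ℂ, ∀ s : Finset ℂ, (∀ t ∈ s, t ∈ ball (0 : ℂ) 1 ∧ f t = c) → s.card ≤ p)
    (a M : ℝ) (hM0 : 0 ≤ M) (hM : ∀ z ∈ closedBall (0 : ℂ) 1, ‖f z‖ ≤ M) :
    ∫⁻ ζ in (Ioo a 0 ×ℂ Ioo 0 (2 * Real.pi)),
      ENNReal.ofReal (‖deriv f (Complex.exp ζ) * Complex.exp ζ‖ ^ 2) *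
        ENNReal.ofReal (1 / (1 + ‖f (Complex.exp ζ)‖ ^ 2))
      ≤ p * ENNReal.ofReal (Real.pi * Real.log (1 + M ^ 2)) := by
  have hexp : ∀ ζ ∈ (Ioo a 0 ×ℂ Ioo 0 (2 * Real.pi)), Complex.exp ζ ∈ ball (0 : ℂ) 1 := by
    intro ζ hζ
    rw [mem_ball_zero_iff, Complex.norm_exp, Real.exp_lt_one_iff]
    exact hζ.1.2
  have hφ : Measurable (fun w : ℂ => ENNReal.ofReal (1 / (1 + ‖w‖ ^ 2))) := by fun_prop
  refine (dpv_area p _ (isOpen_Ioo.reProdIm isOpen_Ioo) (fun ζ => f (Complex.exp ζ))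
    (fun ζ => deriv f (Complex.exp ζ) * Complex.exp ζ) ?_ ?_ ?_ _ hφ (closedBall 0 M)
    measurableSet_closedBall ?_).trans ?_
  · intro ζ hζ
    exact (hf _ (ball_subset_closedBall (hexp ζ hζ))).hasStrictDerivAt.comp ζ
      (Complex.hasStrictDerivAt_exp ζ)
  · apply ContinuousOn.mul _ (by fun_prop)
    exact hf.deriv.continuousOn.comp (by fun_prop)
      (fun ζ hζ => ball_subset_closedBall (hexp ζ hζ))
  · intro c s hs
    classical
    have hinj : InjOn Complex.exp s := by
      intro u hu v hv huv
      have hu' := (hs u hu).1.2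
      have hv' := (hs v hv).1.2
      obtain ⟨n, hn⟩ := Complex.exp_eq_exp_iff_exists_int.1 huv
      have him : u.im = v.im + n * (2 * Real.pi) := by
        rw [hn]; simp
      have hpi := Real.pi_pos
      have h1 : (n : ℝ) < 1 := by
        by_contra h
        push Not at h
        have := hu'.2
        have := hv'.1
        nlinarith
      have h2 : (-1 : ℝ) < n := by
        by_contra h
        push Not at h
        have := hu'.1
        have := hv'.2
        nlinarith
      have : n = 0 := by
        have h1' : n < 1 := by exact_mod_cast h1
        have h2' : -1 < n := by exact_mod_cast h2
        omega
      rw [hn, this]; simp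
    rw [← Finset.card_image_of_injOn hinj]
    apply hp c
    intro t ht
    obtain ⟨u, hu, rfl⟩ := Finset.mem_image.1 ht
    exact ⟨hexp u (hs u hu).1, (hs u hu).2⟩
  · intro ζ hζ
    simpa using hM _ (ball_subset_closedBall (hexp ζ hζ))
  · gcongr
    exact dpv_radial M hM0

/-- conjugate gradient of the potential -/
noncomputable def dpvQ (f : ℂ → ℂ) (ζ : ℂ) : ℂ :=
  (starRingEnd ℂ) (f (Complex.exp ζ)) * (deriv f (Complex.exp ζ) * Complex.exp ζ) /
    ((1 + ‖f (Complex.exp ζ)‖ ^ 2 : ℝ) : ℂ)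

/-- the potential -/
noncomputable def dpvU (f : ℂ → ℂ) (ζ : ℂ) : ℝ :=
  (1 / 2) * Real.log (1 + ‖f (Complex.exp ζ)‖ ^ 2)

lemma dpvU_hasFDerivAt (f : ℂ → ℂ) (ζ : ℂ) (hf : DifferentiableAt ℂ f (Complex.exp ζ)) :
    ∃ T : ℂ →L[ℝ] ℝ, HasFDerivAt (dpvU f) T ζ ∧ ∀ v, T v = (dpvQ f ζ * v).re := by
  have hG : HasDerivAt (fun ζ => f (Complex.exp ζ)) (deriv f (Complex.exp ζ) * Complex.exp ζ) ζ :=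
    hf.hasDerivAt.comp ζ (Complex.hasDerivAt_exp ζ)
  have h1 := (hG.hasFDerivAt.restrictScalars ℝ).norm_sq
  have h2 := ((h1.const_add 1).log (by positivity)).const_mul (1 / 2 : ℝ)
  refine ⟨_, h2, fun v => ?_⟩
  have h3 : dpvQ f ζ * v = ((1 + ‖f (Complex.exp ζ)‖ ^ 2)⁻¹ : ℝ) *
      ((v * (deriv f (Complex.exp ζ) * Complex.exp ζ)) * (starRingEnd ℂ) (f (Complex.exp ζ))) := by
    unfold dpvQ; push_cast; ring
  rw [h3, Complex.re_ofReal_mul]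
  simp [Complex.inner, -Complex.mul_re]
  ring_nf

lemma dpvK_den (w : ℂ) (hw : ‖w‖ < 1) (ζ : ℂ) (hζ : ζ.re ≤ 0) :
    1 - (starRingEnd ℂ) w * Complex.exp ζ ≠ 0 := by
  intro h
  have h1 : ‖(starRingEnd ℂ) w * Complex.exp ζ‖ = 1 := by
    rw [← sub_eq_zero.1 h]; simp
  rw [norm_mul, Complex.norm_conj, Complex.norm_exp] at h1
  have := Real.exp_le_one_iff.2 hζ
  nlinarith [norm_nonneg w, Real.exp_pos ζ.re]

lemma dpvK_cont (w : ℂ) (hw : ‖w‖ < 1) : ContinuousOn (dpvK w) {ζ | ζ.re ≤ 0} := by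
  unfold dpvK
  exact ContinuousOn.div (by fun_prop) (by fun_prop) (fun ζ hζ => dpvK_den w hw ζ hζ)

lemma dpv_exp_mem (ζ : ℂ) (hζ : ζ.re ≤ 0) : Complex.exp ζ ∈ closedBall (0 : ℂ) 1 := by
  rw [mem_closedBall_zero_iff, Complex.norm_exp, Real.exp_le_one_iff]
  exact hζ

lemma dpvU_cont (f : ℂ → ℂ) (hf : AnalyticOnNhd ℂ f (closedBall 0 1)) :
    ContinuousOn (dpvU f) {ζ | ζ.re ≤ 0} := by
  have h1 : ContinuousOn (fun ζ => f (Complex.exp ζ)) {ζ | ζ.re ≤ 0} :=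
    hf.continuousOn.comp (by fun_prop) (fun ζ hζ => dpv_exp_mem ζ hζ)
  unfold dpvU
  apply ContinuousOn.mul continuousOn_const
  apply ContinuousOn.log (continuousOn_const.add (h1.norm.pow 2))
  intro z _
  have : 0 < 1 + ‖f (Complex.exp z)‖ ^ 2 := by positivity
  exact this.ne'

lemma dpvQ_cont (f : ℂ → ℂ) (hf : AnalyticOnNhd ℂ f (closedBall 0 1)) :
    ContinuousOn (dpvQ f) {ζ | ζ.re ≤ 0} := by
  have h1 : ContinuousOn (fun ζ => f (Complex.exp ζ)) {ζ | ζ.re ≤ 0} :=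
    hf.continuousOn.comp (by fun_prop) (fun ζ hζ => dpv_exp_mem ζ hζ)
  have h2 : ContinuousOn (fun ζ => deriv f (Complex.exp ζ)) {ζ | ζ.re ≤ 0} :=
    hf.deriv.continuousOn.comp (by fun_prop) (fun ζ hζ => dpv_exp_mem ζ hζ)
  unfold dpvQ
  apply ContinuousOn.div
  · exact (Complex.continuous_conj.comp_continuousOn h1).mul (h2.mul (by fun_prop))
  · exact Complex.continuous_ofReal.comp_continuousOn
      (continuousOn_const.add (h1.norm.pow 2))
  · intro ζ _
    have : (1 + ‖f (Complex.exp ζ)‖ ^ 2 : ℝ) ≠ 0 := by positivity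
    exact_mod_cast this

open MeasureTheory in
lemma dpv_green (f : ℂ → ℂ) (hf : AnalyticOnNhd ℂ f (closedBall 0 1)) (w : ℂ) (hw : ‖w‖ < 1)
    (a : ℝ) (ha : a < 0) :
    (∫ y in (0 : ℝ)..(2 * Real.pi), (dpvU f (0 + y * Complex.I) : ℂ) * dpvK w (0 + y * Complex.I)) -
    (∫ y in (0 : ℝ)..(2 * Real.pi), (dpvU f (a + y * Complex.I) : ℂ) * dpvK w (a + y * Complex.I)) =
    ∫ x in a..0, ∫ y in (0 : ℝ)..(2 * Real.pi),
      dpvK w (x + y * Complex.I) * (starRingEnd ℂ) (dpvQ f (x + y * Complex.I)) := by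
  have hU : ∀ ζ : ℂ, ζ.re ≤ 0 → ∃ T : ℂ →L[ℝ] ℝ, HasFDerivAt (dpvU f) T ζ ∧
      ∀ v, T v = (dpvQ f ζ * v).re := fun ζ hζ =>
    dpvU_hasFDerivAt f ζ (hf _ (dpv_exp_mem ζ hζ)).differentiableAt
  have hK : ∀ ζ : ℂ, ζ.re ≤ 0 → DifferentiableAt ℂ (dpvK w) ζ := fun ζ hζ => by
    unfold dpvK
    exact DifferentiableAt.div (by fun_prop) (by fun_prop) (dpvK_den w hw ζ hζ)
  have hF : ∀ ζ : ℂ, ∃ T : ℂ →L[ℝ] ℂ, ζ.re ≤ 0 →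
      HasFDerivAt (fun ζ => (dpvU f ζ : ℂ) * dpvK w ζ) T ζ ∧
      Complex.I • T 1 - T Complex.I =
        Complex.I * (dpvK w ζ * (starRingEnd ℂ) (dpvQ f ζ)) := by
    intro ζ
    by_cases hζ : ζ.re ≤ 0
    · obtain ⟨T, hT, hTv⟩ := hU ζ hζ
      have h1 : HasFDerivAt (fun ζ => (dpvU f ζ : ℂ)) (Complex.ofRealCLM.comp T) ζ :=
        Complex.ofRealCLM.hasFDerivAt.comp ζ hT
      have h2 := h1.mul ((hK ζ hζ).hasDerivAt.hasFDerivAt.restrictScalars ℝ)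
      refine ⟨_, fun _ => ⟨h2, ?_⟩⟩
      simp [hTv]
      apply Complex.ext <;> simp <;> ring
    · exact ⟨0, fun h => absurd h hζ⟩
  choose F' hF' using hF
  have hpi : (0 : ℝ) ≤ 2 * Real.pi := by positivity
  have hsub : ∀ ζ ∈ (uIcc a 0 ×ℂ uIcc 0 (2 * Real.pi)), ζ.re ≤ 0 := by
    intro ζ hζ
    have := hζ.1
    rw [uIcc_of_le ha.le] at this
    exact this.2
  have hKc := dpvK_cont w hw
  have hQc := dpvQ_cont f hf
  have hUc := dpvU_cont f hf
  have hIc : ContinuousOn (fun ζ => Complex.I * (dpvK w ζ * (starRingEnd ℂ) (dpvQ f ζ)))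
      {ζ | ζ.re ≤ 0} :=
    continuousOn_const.mul (hKc.mul (Complex.continuous_conj.comp_continuousOn hQc))
  have hcomp : IsCompact (uIcc a 0 ×ℂ uIcc 0 (2 * Real.pi)) := isCompact_uIcc.reProdIm isCompact_uIcc
  have main := Complex.integral_boundary_rect_of_hasFDerivAt_real_off_countable
    (fun ζ => (dpvU f ζ : ℂ) * dpvK w ζ) F' (⟨a, 0⟩ : ℂ) (⟨0, 2 * Real.pi⟩ : ℂ) ∅
    countable_empty
    (((Complex.continuous_ofReal.comp_continuousOn hUc).mul hKc).mono hsub)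
    (by
      intro ζ hζ
      refine (hF' ζ ?_).1
      have := hζ.1.1.2
      simp only [max_eq_right ha.le] at this
      exact this.le)
    (by
      refine IntegrableOn.congr_fun (f := fun ζ => Complex.I * (dpvK w ζ *
        (starRingEnd ℂ) (dpvQ f ζ))) ?_ ?_ hcomp.measurableSet
      · exact (hIc.mono hsub).integrableOn_compact hcomp
      · intro ζ hζ
        exact (hF' ζ (hsub ζ hζ)).2.symm)
  have hper : ∀ x : ℝ, (dpvU f (x + ((2 * Real.pi : ℝ) : ℂ) * Complex.I) : ℂ) *
      dpvK w (x + ((2 * Real.pi : ℝ) : ℂ) * Complex.I) =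
      (dpvU f (x + ((0 : ℝ) : ℂ) * Complex.I) : ℂ) * dpvK w (x + ((0 : ℝ) : ℂ) * Complex.I) := by
    intro x
    have : Complex.exp (x + ((2 * Real.pi : ℝ) : ℂ) * Complex.I) =
        Complex.exp (x + ((0 : ℝ) : ℂ) * Complex.I) := by
      push_cast
      rw [Complex.exp_add, Complex.exp_two_pi_mul_I]
      simp
    simp only [dpvU, dpvK, this]
  have hrhs : ∫ x in a..0, ∫ y in (0 : ℝ)..(2 * Real.pi),
      (Complex.I • F' (x + y * Complex.I) 1 - F' (x + y * Complex.I) Complex.I) =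
      Complex.I * ∫ x in a..0, ∫ y in (0 : ℝ)..(2 * Real.pi),
      dpvK w (x + y * Complex.I) * (starRingEnd ℂ) (dpvQ f (x + y * Complex.I)) := by
    rw [← intervalIntegral.integral_const_mul]
    apply intervalIntegral.integral_congr
    intro x hx
    rw [uIcc_of_le ha.le] at hx
    simp only
    rw [← intervalIntegral.integral_const_mul]
    apply intervalIntegral.integral_congr
    intro y _
    exact (hF' (x + y * Complex.I) (by simpa using hx.2)).2
  simp only [hper, sub_self, zero_add] at main
  rw [hrhs] at main
  simp only [smul_eq_mul, Complex.ofReal_zero] at main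
  rw [← mul_sub] at main
  exact mul_left_cancel₀ Complex.I_ne_zero (by simpa using main)

open MeasureTheory in
lemma dpv_intOn {E : Type*} [NormedAddCommGroup E] [NormedSpace ℝ E] (g : ℂ → E)
    (hg : ContinuousOn g {ζ | ζ.re ≤ 0}) (a : ℝ) :
    IntegrableOn g (Ioo a 0 ×ℂ Ioo 0 (2 * Real.pi)) := by
  have hcomp : IsCompact (Icc a 0 ×ℂ Icc 0 (2 * Real.pi)) := isCompact_Icc.reProdIm isCompact_Icc
  refine ((hg.mono ?_).integrableOn_compact hcomp).mono_set ?_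
  · intro ζ hζ
    exact hζ.1.2
  · intro ζ hζ
    exact ⟨Ioo_subset_Icc_self hζ.1, Ioo_subset_Icc_self hζ.2⟩

open MeasureTheory in
lemma dpv_iter {E : Type*} [NormedAddCommGroup E] [NormedSpace ℝ E] (g : ℂ → E)
    (hg : ContinuousOn g {ζ | ζ.re ≤ 0}) (a : ℝ) (ha : a < 0) :
    ∫ x in a..0, ∫ y in (0 : ℝ)..(2 * Real.pi), g (x + y * Complex.I) =
      ∫ ζ in (Ioo a 0 ×ℂ Ioo 0 (2 * Real.pi)), g ζ := by
  have hpi : (0 : ℝ) ≤ 2 * Real.pi := by positivity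
  have he : ∀ q : ℝ × ℝ, Complex.measurableEquivRealProd.symm q = q.1 + q.2 * Complex.I := by
    intro q
    apply Complex.ext <;> simp [Complex.measurableEquivRealProd]
  have hmp := Complex.volume_preserving_equiv_real_prod.symm
  have hpre : Complex.measurableEquivRealProd.symm ⁻¹' (Ioo a 0 ×ℂ Ioo 0 (2 * Real.pi)) =
      Ioo a 0 ×ˢ Ioo 0 (2 * Real.pi) := by
    ext q
    simp [he, Complex.mem_reProdIm]
  have hemb := Complex.measurableEquivRealProd.symm.measurableEmbedding
  have hint := (hmp.integrableOn_comp_preimage hemb).2 (dpv_intOn g hg a)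
  have h1 := hmp.setIntegral_preimage_emb hemb g (Ioo a 0 ×ℂ Ioo 0 (2 * Real.pi))
  rw [hpre] at h1 hint
  rw [← h1, Measure.volume_eq_prod, setIntegral_prod _ (by rw [← Measure.volume_eq_prod]; exact hint)]
  rw [intervalIntegral.integral_of_le ha.le, integral_Ioc_eq_integral_Ioo]
  congr 1
  ext x
  rw [intervalIntegral.integral_of_le hpi, integral_Ioc_eq_integral_Ioo]
  simp only [he]

open MeasureTheory in
lemma dpv_Q_energy (p : ℕ) (f : ℂ → ℂ) (hf : AnalyticOnNhd ℂ f (closedBall 0 1))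
    (hp : ∀ c : ℂ, ∀ s : Finset ℂ, (∀ t ∈ s, t ∈ ball (0 : ℂ) 1 ∧ f t = c) → s.card ≤ p)
    (a M : ℝ) (hM0 : 0 ≤ M) (hM : ∀ z ∈ closedBall (0 : ℂ) 1, ‖f z‖ ≤ M) :
    ∫ ζ in (Ioo a 0 ×ℂ Ioo 0 (2 * Real.pi)), ‖dpvQ f ζ‖ ^ 2 ≤
      p * (Real.pi * Real.log (1 + M ^ 2)) := by
  have hlog : 0 ≤ Real.log (1 + M ^ 2) := Real.log_nonneg (by nlinarith)
  have hpi := Real.pi_pos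
  have hc : ContinuousOn (fun ζ => ‖dpvQ f ζ‖ ^ 2) {ζ | ζ.re ≤ 0} := (dpvQ_cont f hf).norm.pow 2
  rw [integral_eq_lintegral_of_nonneg_ae (Filter.Eventually.of_forall fun ζ => by positivity)
    (dpv_intOn _ hc a).1]
  apply ENNReal.toReal_le_of_le_ofReal (by positivity)
  rw [ENNReal.ofReal_mul (by positivity), ENNReal.ofReal_natCast]
  refine le_trans (lintegral_mono fun ζ => ?_) (dpv_energy p f hf hp a M hM0 hM)
  rw [← ENNReal.ofReal_mul (by positivity)]
  apply ENNReal.ofReal_le_ofReal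
  unfold dpvQ
  rw [norm_div, norm_mul, Complex.norm_conj, Complex.norm_real,
    Real.norm_of_nonneg (by positivity), div_pow, mul_pow]
  have h1 : 0 < 1 + ‖f (Complex.exp ζ)‖ ^ 2 := by positivity
  rw [mul_one_div, div_le_div_iff₀ (by positivity) h1]
  have h2 : 0 ≤ ‖deriv f (Complex.exp ζ) * Complex.exp ζ‖ ^ 2 := by positivity
  generalize ‖deriv f (Complex.exp ζ) * Complex.exp ζ‖ ^ 2 = D at *
  generalize ‖f (Complex.exp ζ)‖ ^ 2 = F at *
  nlinarith [mul_nonneg h2 h1.le]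

open MeasureTheory in
lemma dpv_key (p : ℕ) (hp1 : 1 ≤ p) (f : ℂ → ℂ) (hf : AnalyticOnNhd ℂ f (closedBall 0 1))
    (hp : ∀ c : ℂ, ∀ s : Finset ℂ, (∀ t ∈ s, t ∈ ball (0 : ℂ) 1 ∧ f t = c) → s.card ≤ p)
    (β : ℝ) (hβ : 0 < β) (hβ1 : β < 1) (hfβ : ∀ z, ‖z‖ = β → ‖f z‖ ≤ 1)
    (M : ℝ) (hM0 : 0 ≤ M) (hM : ∀ z ∈ closedBall (0 : ℂ) 1, ‖f z‖ ≤ M)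
    (w : ℂ) (hw : ‖w‖ < 1) :
    (1 / 2) * Real.log (1 + ‖f w‖ ^ 2) ≤ (1 / 2) * Real.log 2 + (1 / 4) * Real.log (1 + M ^ 2) +
      (p / 2) * (Real.log (1 / β) + 2 * Real.log (1 / (1 - ‖w‖ ^ 2))) := by
  have hpi := Real.pi_pos
  have ha : Real.log β < 0 := Real.log_neg hβ hβ1
  have hpp : (0 : ℝ) < p := by exact_mod_cast hp1
  have hKc := dpvK_cont w hw
  have hQc := dpvQ_cont f hf
  have hUc := dpvU_cont f hf
  set a := Real.log β with hadef
  have hgreen := dpv_green f hf w hw a ha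
  rw [dpv_iter (fun ζ => dpvK w ζ * (starRingEnd ℂ) (dpvQ f ζ))
    (hKc.mul (Complex.continuous_conj.comp_continuousOn hQc)) a ha] at hgreen
  -- integrability on vertical lines
  have hline : ∀ x : ℝ, x ≤ 0 → Continuous (fun y : ℝ =>
      (dpvU f (x + y * Complex.I) : ℂ) * dpvK w (x + y * Complex.I)) := by
    intro x hx
    have hm : ∀ y : ℝ, ((x : ℂ) + y * Complex.I) ∈ {ζ : ℂ | ζ.re ≤ 0} := by
      intro y; simpa using hx
    exact ((Complex.continuous_ofReal.comp_continuousOn hUc).mul hKc).comp_continuous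
      (f := fun y : ℝ => (x : ℂ) + y * Complex.I) (by fun_prop) hm
  have hre : ∀ x : ℝ, x ≤ 0 → (∫ y in (0 : ℝ)..(2 * Real.pi),
      (dpvU f (x + y * Complex.I) : ℂ) * dpvK w (x + y * Complex.I)).re =
      ∫ y in (0 : ℝ)..(2 * Real.pi), dpvU f (x + y * Complex.I) *
        poissonKernel 0 (Real.exp x * w) (circleMap 0 1 y) := by
    intro x hx
    have := Complex.reCLM.intervalIntegral_comp_comm ((hline x hx).intervalIntegrable
      (μ := volume) 0 (2 * Real.pi))
    rw [Complex.reCLM_apply] at this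
    rw [← this]
    congr 1
    ext y
    rw [Complex.reCLM_apply, Complex.re_ofReal_mul, dpvK_re]
  -- right boundary
  have hR : 2 * Real.pi * ((1 / 2) * Real.log (1 + ‖f w‖ ^ 2)) ≤
      (∫ y in (0 : ℝ)..(2 * Real.pi),
      (dpvU f (0 + y * Complex.I) : ℂ) * dpvK w (0 + y * Complex.I)).re := by
    have h0 := hre 0 le_rfl
    rw [Complex.ofReal_zero] at h0
    rw [h0]
    have hd : DiffContOnCl ℂ f (ball 0 1) := by
      apply DifferentiableOn.diffContOnCl
      rw [closure_ball 0 one_ne_zero]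
      exact hf.differentiableOn
    refine (dpv_sub2 f hd w hw).trans (le_of_eq ?_)
    congr 1
    ext y
    have := dpv_exp 0 y
    simp only [Complex.ofReal_zero, Real.exp_zero, Complex.ofReal_one, one_mul] at this
    simp only [dpvU, this, Real.exp_zero, Complex.ofReal_one, one_mul]
    ring
  -- left boundary
  have hL : (∫ y in (0 : ℝ)..(2 * Real.pi),
      (dpvU f (a + y * Complex.I) : ℂ) * dpvK w (a + y * Complex.I)).re ≤
      Real.pi * Real.log 2 := by
    rw [hre a ha.le]
    have hw' : ‖(Real.exp a : ℂ) * w‖ < 1 := by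
      rw [norm_mul, Complex.norm_real, Real.norm_of_nonneg (Real.exp_pos a).le, hadef,
        Real.exp_log hβ]
      nlinarith [norm_nonneg w]
    have hcU : Continuous (fun y : ℝ => dpvU f (a + y * Complex.I)) :=
      hUc.comp_continuous (f := fun y : ℝ => (a : ℂ) + y * Complex.I) (by fun_prop)
        (fun y => by simpa using ha.le)
    have h1 : ∫ y in (0 : ℝ)..(2 * Real.pi), dpvU f (a + y * Complex.I) *
        poissonKernel 0 (Real.exp a * w) (circleMap 0 1 y) ≤
        ∫ y in (0 : ℝ)..(2 * Real.pi), (1 / 2 * Real.log 2) *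
        poissonKernel 0 (Real.exp a * w) (circleMap 0 1 y) := by
      apply intervalIntegral.integral_mono (by positivity)
      · exact (hcU.mul (dpv_poisson_cont _ hw')).intervalIntegrable _ _
      · exact (continuous_const.mul (dpv_poisson_cont _ hw')).intervalIntegrable _ _
      · intro y
        apply mul_le_mul_of_nonneg_right _ (dpv_poisson_nonneg _ hw' y)
        unfold dpvU
        have hn : ‖f (Complex.exp (a + y * Complex.I))‖ ≤ 1 := by
          apply hfβ
          rw [Complex.norm_exp]
          simp [hadef, Real.exp_log hβ]
        have : Real.log (1 + ‖f (Complex.exp (a + y * Complex.I))‖ ^ 2) ≤ Real.log 2 := by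
          apply Real.log_le_log (by positivity)
          nlinarith [norm_nonneg (f (Complex.exp (a + y * Complex.I)))]
        linarith
    rw [intervalIntegral.integral_const_mul, dpv_poisson_int _ hw'] at h1
    linarith
  -- the area term
  have hK2c : ContinuousOn (fun ζ => ‖dpvK w ζ‖ ^ 2) {ζ | ζ.re ≤ 0} := hKc.norm.pow 2
  have hQ2c : ContinuousOn (fun ζ => ‖dpvQ f ζ‖ ^ 2) {ζ | ζ.re ≤ 0} := hQc.norm.pow 2
  have hK2 : ∫ ζ in (Ioo a 0 ×ℂ Ioo 0 (2 * Real.pi)), ‖dpvK w ζ‖ ^ 2 ≤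
      2 * Real.pi * (Real.log (1 / β) + 2 * Real.log (1 / (1 - ‖w‖ ^ 2))) := by
    rw [← dpv_iter (fun ζ => ‖dpvK w ζ‖ ^ 2) hK2c a ha]
    have : ∫ x in a..0, ∫ y in (0 : ℝ)..(2 * Real.pi), ‖dpvK w (x + y * Complex.I)‖ ^ 2 =
        ∫ x in a..0, 2 * Real.pi * (1 + 4 * (Real.exp x * ‖w‖) ^ 2 /
          (1 - (Real.exp x * ‖w‖) ^ 2)) := by
      apply intervalIntegral.integral_congr
      intro x hx
      rw [uIcc_of_le ha.le] at hx
      exact dpvK_sq_int w hw x hx.2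
    rw [this, intervalIntegral.integral_const_mul]
    exact mul_le_mul_of_nonneg_left (dpv_x_int ‖w‖ β (norm_nonneg w) hw hβ hβ1) (by positivity)
  have hQ2 := dpv_Q_energy p f hf hp a M hM0 hM
  have hA : ‖∫ ζ in (Ioo a 0 ×ℂ Ioo 0 (2 * Real.pi)),
      dpvK w ζ * (starRingEnd ℂ) (dpvQ f ζ)‖ ≤
      (p / 2) * (∫ ζ in (Ioo a 0 ×ℂ Ioo 0 (2 * Real.pi)), ‖dpvK w ζ‖ ^ 2) +
      (1 / (2 * p)) * ∫ ζ in (Ioo a 0 ×ℂ Ioo 0 (2 * Real.pi)), ‖dpvQ f ζ‖ ^ 2 := by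
    rw [← integral_const_mul, ← integral_const_mul, ← integral_add]
    · apply norm_integral_le_of_norm_le
      · exact ((dpv_intOn _ hK2c a).const_mul _).add ((dpv_intOn _ hQ2c a).const_mul _)
      · refine Filter.Eventually.of_forall fun ζ => ?_
        rw [norm_mul, Complex.norm_conj]
        have h3 : (p / 2 * ‖dpvK w ζ‖ ^ 2 + 1 / (2 * p) * ‖dpvQ f ζ‖ ^ 2) -
            ‖dpvK w ζ‖ * ‖dpvQ f ζ‖ = (p * ‖dpvK w ζ‖ - ‖dpvQ f ζ‖) ^ 2 / (2 * p) := by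
          field_simp
          ring
        have h4 : 0 ≤ (p * ‖dpvK w ζ‖ - ‖dpvQ f ζ‖) ^ 2 / (2 * p) := by positivity
        linarith
    · exact (dpv_intOn _ hK2c a).const_mul _
    · exact (dpv_intOn _ hQ2c a).const_mul _
  have hA' := (Complex.re_le_norm _).trans hA
  rw [← hgreen, Complex.sub_re] at hA'
  have h5 : (p / 2 : ℝ) * (∫ ζ in (Ioo a 0 ×ℂ Ioo 0 (2 * Real.pi)), ‖dpvK w ζ‖ ^ 2) ≤
      (p / 2) * (2 * Real.pi * (Real.log (1 / β) + 2 * Real.log (1 / (1 - ‖w‖ ^ 2)))) :=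
    mul_le_mul_of_nonneg_left hK2 (by positivity)
  have h6 : (1 / (2 * p) : ℝ) * (∫ ζ in (Ioo a 0 ×ℂ Ioo 0 (2 * Real.pi)), ‖dpvQ f ζ‖ ^ 2) ≤
      Real.pi * Real.log (1 + M ^ 2) / 2 := by
    refine (mul_le_mul_of_nonneg_left hQ2 (by positivity)).trans (le_of_eq ?_)
    field_simp
  have hpi2 : 0 < 2 * Real.pi := by positivity
  rw [← mul_le_mul_iff_right₀ hpi2]
  linarith

lemma dpv_step (p : ℕ) (hp1 : 1 ≤ p) (f : ℂ → ℂ) (hf : AnalyticOnNhd ℂ f (ball 0 1))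
    (hp : ∀ c : ℂ, ∀ s : Finset ℂ, (∀ t ∈ s, t ∈ ball (0 : ℂ) 1 ∧ f t = c) → s.card ≤ p)
    (β m : ℝ) (hβ : 0 < β) (hm : 0 < m) (hfβ : ∀ z, ‖z‖ = β → ‖f z‖ ≤ m)
    (r R : ℝ) (hr : 0 ≤ r) (hβR : β < R) (hrR : r < R) (hR1 : R < 1) (L : ℝ) (hL : 0 ≤ L)
    (hS : ∀ z, ‖z‖ ≤ R → (1 / 2) * Real.log (1 + (‖f z‖ / m) ^ 2) ≤ L) :
    ∀ z, ‖z‖ ≤ r → (1 / 2) * Real.log (1 + (‖f z‖ / m) ^ 2) ≤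
      (L + Real.log 2 + p * (Real.log (1 / β) + 2 * Real.log (1 / (R - r)))) / 2 := by
  intro z hz
  have hR0 : 0 < R := hβ.trans hβR
  have hRc : (R : ℂ) ≠ 0 := by exact_mod_cast hR0.ne'
  have hmc : (m : ℂ) ≠ 0 := by exact_mod_cast hm.ne'
  have hnR : ∀ u : ℂ, ‖(R : ℂ) * u‖ = R * ‖u‖ := fun u => by
    rw [norm_mul, Complex.norm_real, Real.norm_of_nonneg hR0.le]
  have hnm : ∀ u : ℂ, ‖u / (m : ℂ)‖ = ‖u‖ / m := fun u => by
    rw [norm_div, Complex.norm_real, Real.norm_of_nonneg hm.le]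
  set M := Real.sqrt (Real.exp (2 * L) - 1) with hMdef
  have hM2 : 1 + M ^ 2 = Real.exp (2 * L) := by
    have : 1 ≤ Real.exp (2 * L) := Real.one_le_exp (by positivity)
    rw [hMdef, Real.sq_sqrt (by linarith)]; ring
  have key := dpv_key p hp1 (fun u => f (R * u) / m) (by
      intro u hu
      have hmem : (R : ℂ) * u ∈ ball (0 : ℂ) 1 := by
        rw [mem_closedBall_zero_iff] at hu
        rw [mem_ball_zero_iff, hnR]
        nlinarith
      have h1 : AnalyticAt ℂ (fun u : ℂ => (R : ℂ) * u) u := analyticAt_const.mul analyticAt_id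
      have h2 : AnalyticAt ℂ (fun u : ℂ => f (R * u)) u :=
        AnalyticAt.fun_comp (f := fun u : ℂ => (R : ℂ) * u) (hf _ hmem) h1
      exact h2.div analyticAt_const hmc)
    (by
      intro c s hs
      classical
      have hinj : InjOn (fun u : ℂ => (R : ℂ) * u) s := by
        intro u _ v _ huv
        exact mul_left_cancel₀ hRc huv
      rw [← Finset.card_image_of_injOn hinj]
      apply hp (c * m)
      intro t ht
      obtain ⟨u, hu, rfl⟩ := Finset.mem_image.1 ht
      obtain ⟨h1, h2⟩ := hs u hu
      refine ⟨?_, (div_eq_iff hmc).1 h2⟩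
      rw [mem_ball_zero_iff] at h1
      rw [mem_ball_zero_iff, hnR]
      nlinarith [norm_nonneg u])
    (β / R) (by positivity) (by rw [div_lt_one hR0]; exact hβR)
    (by
      intro u hu
      rw [hnm, div_le_one hm]
      apply hfβ
      rw [hnR, hu]; field_simp)
    M (Real.sqrt_nonneg _)
    (by
      intro u hu
      rw [mem_closedBall_zero_iff] at hu
      have h1 := hS (R * u) (by rw [hnR]; nlinarith)
      rw [hnm]
      apply le_of_sq_le_sq _ (Real.sqrt_nonneg _)
      have h2 : Real.log (1 + (‖f (R * u)‖ / m) ^ 2) ≤ 2 * L := by linarith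
      rw [Real.log_le_iff_le_exp (by positivity), ← hM2] at h2
      linarith)
    (z / R) (by
      rw [norm_div, Complex.norm_real, Real.norm_of_nonneg hR0.le, div_lt_one hR0]
      linarith)
  have hzR : (R : ℂ) * (z / R) = z := by field_simp
  have hnz : ‖z / (R : ℂ)‖ = ‖z‖ / R := by
    rw [norm_div, Complex.norm_real, Real.norm_of_nonneg hR0.le]
  simp only [hzR, hnm, hnz, hM2, Real.log_exp] at key
  have hlog1 : Real.log (1 / (β / R)) ≤ Real.log (1 / β) := by
    apply Real.log_le_log (by positivity)
    rw [one_div_div]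
    gcongr
  have hsq : (R - r) ≤ 1 - (‖z‖ / R) ^ 2 := by
    have h1 : ‖z‖ / R ≤ r / R := by gcongr
    have h2 : r / R < 1 := by rw [div_lt_one hR0]; exact hrR
    have h0 : 0 ≤ ‖z‖ / R := by positivity
    have h3 : R - r ≤ 1 - r / R := by
      rw [le_sub_iff_add_le, ← sub_nonneg]
      have : 1 - (R - r + r / R) = (1 - R) * (R - r) / R := by field_simp; ring
      rw [this]
      exact div_nonneg (mul_nonneg (by linarith) (by linarith)) hR0.le
    nlinarith
  have hlog2 : Real.log (1 / (1 - (‖z‖ / R) ^ 2)) ≤ Real.log (1 / (R - r)) := by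
    have : 0 < R - r := by linarith
    apply Real.log_le_log (by have := this.trans_le hsq; positivity)
    gcongr
  have hpp : (0 : ℝ) ≤ p := by positivity
  have h7 := mul_le_mul_of_nonneg_left (add_le_add hlog1 (mul_le_mul_of_nonneg_left hlog2
    (zero_le_two (α := ℝ)))) (by positivity : (0 : ℝ) ≤ p / 2)
  linarith

lemma dpv_disc (p : ℕ) (hp1 : 1 ≤ p) (f : ℂ → ℂ) (hf : AnalyticOnNhd ℂ f (ball 0 1))
    (hp : ∀ c : ℂ, ∀ s : Finset ℂ, (∀ t ∈ s, t ∈ ball (0 : ℂ) 1 ∧ f t = c) → s.card ≤ p)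
    (α β m : ℝ) (hβ : 0 < β) (hβα : β < α) (hα : α < 1) (hm : 0 < m)
    (hfβ : ∀ z ∈ ball (0 : ℂ) β, ‖f z‖ ≤ m) (w : ℂ) (hw : ‖w‖ ≤ α) :
    ‖f w‖ ≤ 2 * (8 / (1 - α)) ^ (2 * p) / β ^ p * m := by
  have hsph : ∀ z, ‖z‖ = β → ‖f z‖ ≤ m := by
    intro z hz
    have hcb : closedBall (0 : ℂ) β ⊆ ball 0 1 := closedBall_subset_ball (by linarith)
    have h1 : closure (ball (0 : ℂ) β) = closedBall 0 β := closure_ball 0 hβ.ne'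
    have hc : ContinuousOn (fun z => ‖f z‖) (closure (ball (0 : ℂ) β)) := by
      rw [h1]
      exact (hf.continuousOn.mono hcb).norm
    exact le_on_closure (f := fun z => ‖f z‖) (g := fun _ => m) hfβ hc continuousOn_const
      (by rw [h1]; simpa using hz.le)
  set ρ := (1 + α) / 2 with hρ
  have hα0 : 0 < α := hβ.trans hβα
  have hαρ : α < ρ := by rw [hρ]; linarith
  have hρ1 : ρ < 1 := by rw [hρ]; linarith
  obtain ⟨N, hN⟩ : ∃ N, ∀ z ∈ closedBall (0 : ℂ) ρ, (1 / 2) * Real.log (1 + (‖f z‖ / m) ^ 2) ≤ N := by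
    have hc : ContinuousOn (fun z => (1 / 2) * Real.log (1 + (‖f z‖ / m) ^ 2))
        (closedBall (0 : ℂ) ρ) := by
      have h1 : ContinuousOn f (closedBall (0 : ℂ) ρ) :=
        hf.continuousOn.mono (closedBall_subset_ball hρ1)
      apply ContinuousOn.mul continuousOn_const
      apply ContinuousOn.log (continuousOn_const.add ((h1.norm.div_const m).pow 2))
      intro z _
      have : 0 < 1 + (‖f z‖ / m) ^ 2 := by positivity
      exact this.ne'
    obtain ⟨N, hN⟩ := (isCompact_closedBall (0 : ℂ) ρ).bddAbove_image hc
    exact ⟨N, fun z hz => hN ⟨z, hz, rfl⟩⟩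
  have hN0 : 0 ≤ N := by
    have h1 := hN 0 (by simp; linarith)
    have : 0 ≤ Real.log (1 + (‖f 0‖ / m) ^ 2) := Real.log_nonneg (by
      have : 0 ≤ (‖f 0‖ / m) ^ 2 := by positivity
      linarith)
    linarith
  have hlogβ : 0 ≤ Real.log (1 / β) := Real.log_nonneg (by
    rw [le_div_iff₀ hβ]; linarith)
  have hlog2 : 0 < Real.log 2 := Real.log_pos (by norm_num)
  have hpp : (0 : ℝ) ≤ p := by positivity
  have hind : ∀ k : ℕ, ∀ r : ℝ, β < r → r < ρ → ∀ z, ‖z‖ ≤ r →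
      (1 / 2) * Real.log (1 + (‖f z‖ / m) ^ 2) ≤
      (Real.log 2 + p * Real.log (1 / β) + 2 * p * Real.log (4 / (ρ - r))) + (1 / 2) ^ k * N := by
    intro k
    induction k with
    | zero =>
      intro r hr hrρ z hz
      have h1 := hN z (by simp; linarith)
      have h2 : 0 ≤ Real.log (4 / (ρ - r)) := Real.log_nonneg (by
        rw [le_div_iff₀ (by linarith)]; linarith)
      have h3 : 0 ≤ p * Real.log (1 / β) := by positivity
      have h4 : 0 ≤ 2 * p * Real.log (4 / (ρ - r)) := by positivity
      simp only [pow_zero, one_mul]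
      linarith
    | succ k ih =>
      intro r hr hrρ z hz
      have hd : 0 < ρ - r := by linarith
      have h0 : 0 ≤ Real.log (4 / (ρ - (r + ρ) / 2)) := Real.log_nonneg (by
        rw [le_div_iff₀ (by linarith)]; linarith)
      have hs := dpv_step p hp1 f hf hp β m hβ hm hsph r ((r + ρ) / 2) (by linarith) (by linarith)
        (by linarith) (by linarith) _ (by positivity)
        (ih ((r + ρ) / 2) (by linarith) (by linarith)) z hz
      refine hs.trans (le_of_eq ?_)
      have e1 : Real.log (4 / (ρ - (r + ρ) / 2)) = Real.log (4 / (ρ - r)) + Real.log 2 := by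
        rw [← Real.log_mul (by positivity) (by norm_num)]
        congr 1
        have : ρ - (r + ρ) / 2 = (ρ - r) / 2 := by ring
        rw [this]; field_simp
      have e2 : Real.log (1 / ((r + ρ) / 2 - r)) = Real.log (4 / (ρ - r)) - Real.log 2 := by
        rw [← Real.log_div (by positivity) (by norm_num)]
        congr 1
        have : (r + ρ) / 2 - r = (ρ - r) / 2 := by ring
        rw [this]; field_simp; norm_num
      rw [e1, e2, pow_succ]
      ring
  have hfin : (1 / 2) * Real.log (1 + (‖f w‖ / m) ^ 2) ≤
      Real.log 2 + p * Real.log (1 / β) + 2 * p * Real.log (4 / (ρ - α)) := by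
    have ht : Filter.Tendsto (fun k : ℕ => (Real.log 2 + p * Real.log (1 / β) +
        2 * p * Real.log (4 / (ρ - α))) + (1 / 2 : ℝ) ^ k * N) Filter.atTop
        (nhds ((Real.log 2 + p * Real.log (1 / β) + 2 * p * Real.log (4 / (ρ - α))) + 0 * N)) :=
      ((tendsto_pow_atTop_nhds_zero_of_lt_one (by norm_num) (by norm_num)).mul_const N).const_add _
    have := ge_of_tendsto' ht (fun k => hind k α hβα hαρ w hw)
    linarith
  have hρα : 4 / (ρ - α) = 8 / (1 - α) := by
    have : ρ - α = (1 - α) / 2 := by rw [hρ]; ring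
    have h1 : (1 - α) ≠ 0 := by linarith
    rw [this]; field_simp; norm_num
  have h1α : 0 < 1 - α := by linarith
  rw [hρα] at hfin
  have hE : Real.log 2 + p * Real.log (1 / β) + 2 * p * Real.log (8 / (1 - α)) =
      Real.log (2 * (8 / (1 - α)) ^ (2 * p) / β ^ p) := by
    rw [one_div, Real.log_inv, Real.log_div (x := 2 * (8 / (1 - α)) ^ (2 * p)) (by positivity)
      (by positivity), Real.log_mul (by norm_num) (by positivity), Real.log_pow, Real.log_pow]
    push_cast
    ring
  rw [hE] at hfin
  set C := 2 * (8 / (1 - α)) ^ (2 * p) / β ^ p with hC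
  have hC0 : 0 < C := by positivity
  rw [← div_le_iff₀ hm]
  apply le_of_sq_le_sq _ hC0.le
  have h8 : Real.log (1 + (‖f w‖ / m) ^ 2) ≤ Real.log (C ^ 2) := by
    rw [Real.log_pow]; push_cast; linarith
  rw [Real.log_le_log_iff (by positivity) (by positivity)] at h8
  linarith

/-- Doubling inequality for sectionally `p`-valent functions on concentric balls in `ℂⁿ`:
there is `A'_p > 0` such that for `0 < β < α < 1` and `f` analytic and sectionally `p`-valent
in a ball `B`, `sup_{αB} |f| ≤ c_p(α,β) · sup_{βB} |f|` with
`c_p(α,β) = ((p+1)α^p + A'_p/(1-α)^{2p+1})/β^p`. -/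
theorem doubling_pvalent_concentric_balls (p : ℕ) (hp : 1 ≤ p) :
    ∃ A : ℝ, 0 < A ∧
      ∀ (n : ℕ) (α β : ℝ), 0 < β → β < α → α < 1 →
      ∀ (z₀ : EuclideanSpace ℂ (Fin n)) (R : ℝ), 0 < R →
      ∀ f : EuclideanSpace ℂ (Fin n) → ℂ,
        AnalyticOnNhd ℂ f (ball z₀ R) → SectionallyPValentOn f (ball z₀ R) p →
        ∀ z ∈ ball z₀ (α * R),
          ‖f z‖ ≤ (((p : ℝ) + 1) * α ^ p + A / (1 - α) ^ (2 * p + 1)) / β ^ p *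
            sSup ((fun w => ‖f w‖) '' ball z₀ (β * R)) := by
  refine ⟨2 * 8 ^ (2 * p), by positivity, ?_⟩
  intro n α β hβ hβα hα z₀ R hR f hf hv z hz
  have hα0 : 0 < α := hβ.trans hβα
  have h1α : 0 < 1 - α := by linarith
  set S := sSup ((fun w => ‖f w‖) '' ball z₀ (β * R)) with hS
  have hbdd : BddAbove ((fun w => ‖f w‖) '' ball z₀ (β * R)) := by
    have hc : ContinuousOn (fun w => ‖f w‖) (closedBall z₀ (β * R)) :=
      (hf.continuousOn.mono (closedBall_subset_ball (by nlinarith))).norm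
    exact ((isCompact_closedBall z₀ (β * R)).bddAbove_image hc).mono
      (image_mono ball_subset_closedBall)
  have hle : ∀ w ∈ ball z₀ (β * R), ‖f w‖ ≤ S := fun w hw => le_csSup hbdd ⟨w, hw, rfl⟩
  have hS0 : 0 ≤ S := (norm_nonneg _).trans (hle z₀ (mem_ball_self (by positivity)))
  have hcoef : 2 * (8 / (1 - α)) ^ (2 * p) / β ^ p ≤
      (((p : ℝ) + 1) * α ^ p + 2 * 8 ^ (2 * p) / (1 - α) ^ (2 * p + 1)) / β ^ p := by
    apply div_le_div_of_nonneg_right _ (by positivity)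
    have h1 : 2 * (8 / (1 - α)) ^ (2 * p) ≤ 2 * 8 ^ (2 * p) / (1 - α) ^ (2 * p + 1) := by
      rw [div_pow, ← mul_div_assoc]
      apply div_le_div_of_nonneg_left (by positivity) (by positivity)
      exact pow_le_pow_of_le_one h1α.le (by linarith) (by omega)
    have h2 : 0 ≤ ((p : ℝ) + 1) * α ^ p := by positivity
    linarith
  refine le_trans ?_ (mul_le_mul_of_nonneg_right hcoef hS0)
  set C := 2 * (8 / (1 - α)) ^ (2 * p) / β ^ p with hC
  by_cases hzz : z = z₀
  · have h1 := hle z (by rw [hzz]; exact mem_ball_self (by positivity))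
    have h2 : 1 ≤ C := by
      rw [hC, le_div_iff₀ (by positivity)]
      have h3 : β ^ p ≤ 1 := pow_le_one₀ hβ.le (by linarith)
      have h4 : 1 ≤ (8 / (1 - α)) ^ (2 * p) := one_le_pow₀ (by
        rw [le_div_iff₀ h1α]; linarith)
      linarith
    nlinarith
  have hd : 0 < ‖z - z₀‖ := norm_pos_iff.2 (sub_ne_zero.2 hzz)
  set b : EuclideanSpace ℂ (Fin n) := ((R / ‖z - z₀‖ : ℝ) : ℂ) • (z - z₀) with hb
  have hnb : ‖b‖ = R := by
    rw [hb, norm_smul, Complex.norm_real, Real.norm_of_nonneg (by positivity)]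
    field_simp
  have hb0 : b ≠ 0 := by
    rw [← norm_pos_iff, hnb]; exact hR
  have hmem : ∀ (t : ℂ) (s : ℝ), z₀ + t • b ∈ ball z₀ (s * R) ↔ ‖t‖ < s := by
    intro t s
    rw [mem_ball_iff_norm, add_sub_cancel_left, norm_smul, hnb]
    exact mul_lt_mul_iff_left₀ hR
  have hmem1 : ∀ t : ℂ, z₀ + t • b ∈ ball z₀ R ↔ ‖t‖ < 1 := by
    intro t
    have := hmem t 1
    rwa [one_mul] at this
  have hzt : z = z₀ + ((‖z - z₀‖ / R : ℝ) : ℂ) • b := by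
    rw [hb, smul_smul, ← Complex.ofReal_mul]
    have : ‖z - z₀‖ / R * (R / ‖z - z₀‖) = 1 := by field_simp
    rw [this]; simp
  have ht : ‖((‖z - z₀‖ / R : ℝ) : ℂ)‖ < α := by
    rw [← hmem, ← hzt]; exact hz
  have main : ∀ m : ℝ, S < m → ‖f z‖ ≤ C * m := by
    intro m hm
    have h1 := dpv_disc p hp (fun t => f (z₀ + t • b)) (by
        intro t ht
        rw [mem_ball_zero_iff] at ht
        have h1 : AnalyticAt ℂ (fun t : ℂ => z₀ + t • b) t :=
          analyticAt_const.add (analyticAt_id.smul analyticAt_const)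
        exact AnalyticAt.fun_comp (f := fun t : ℂ => z₀ + t • b) (hf _ ((hmem1 t).2 ht)) h1)
      (by
        intro c s hs
        apply hv z₀ b hb0 c s
        intro t ht
        obtain ⟨h1, h2⟩ := hs t ht
        rw [mem_ball_zero_iff] at h1
        exact ⟨(hmem1 t).2 h1, h2⟩)
      α β m hβ hβα hα (hS0.trans_lt hm)
      (by
        intro t ht
        rw [mem_ball_zero_iff] at ht
        exact (hle _ ((hmem t β).2 ht)).trans hm.le)
      _ ht.le
    rw [← hzt] at h1
    exact h1
  have hC0 : 0 < C := by positivity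
  have : ‖f z‖ / C ≤ S := by
    apply le_of_forall_gt_imp_ge_of_dense
    intro m hm
    rw [div_le_iff₀ hC0, mul_comm]
    exact main m hm
  rw [div_le_iff₀ hC0] at this
  linarith
end
end
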